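/- arXiv:0911.0233 — 4 statements merged into one kernel-verified Lean document; each statement's English description precedes it below -/
import Mathlib

section
/- There exist a constant ε_0 > 0 and N_0 ∈ ℕ such that for every integer N ≥ N_0, setting K := N^{ε_0}, the Lebesgue measure of the set E := { t ∈ [0,1] : the Lebesgue measure of { s ∈ ℝ : max_{0 ≤ n ≤ N} f_{n,t}(s) ≥ K } is at most K^{-3} } is less than N^{-ε_0}. -/
open MeasureTheory

/-- The weight `w(0)=0, w(1)=t, w(2)=1`. -/
noncomputable def wgt (t : ℝ) : Fin 3 → ℝ := ![0, t, 1]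

open scoped Classical in
/-- The projection multiplicity function `f_{n,t}(s)`: the number of digit strings
`a ∈ {0,1,2}^n` with `|s - ∑_{k=1}^n w(a_k) 3^{-k}| ≤ 3^{-n}`. -/
noncomputable def multFn (t : ℝ) (n : ℕ) (s : ℝ) : ℕ :=
  (Finset.univ.filter (fun a : Fin n → Fin 3 =>
    |s - ∑ k : Fin n, wgt t (a k) * (3 : ℝ) ^ (-(k.1 + 1 : ℤ))| ≤ (3 : ℝ) ^ (-(n : ℤ)))).card

/-- `max_{0 ≤ n ≤ N} f_{n,t}(s)`. -/
noncomputable def multFnStar (t : ℝ) (N : ℕ) (s : ℝ) : ℕ :=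
  (Finset.range (N + 1)).sup fun n => multFn t n s

/-!
Suppose `{f_N^* ≥ K}` has measure at most `K⁻³`. Charging every point that is near too many digit
sums to the first level at which this happens, self-similarity gives `∫ f_n² = O(K)` for all
`n ≤ N`. A Fejér-kernel form of Plancherel's theorem turns this into
`∫_0^{3^n} |P_n|² = O(K)`, where `P_n(ξ) = ∏_{k ≤ n} φ_t(ξ / 3^k)` and
`φ_t(y) = (1 + e^{ity} + e^{iy}) / 3`.

Fix `m` with `K² ≤ 3^m` and `3^{20m} ≤ N`. If `φ_t(y)` is small, then `e^{iy}` and `e^{ity}` are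
close to the two primitive cube roots of unity, so `φ_t(3^{i+1}y)` is close to `1` for many `i`.
Hence if `|φ_t| ≥ 81^{-m}` on `[0, 3^m]`, a product of `m` factors along a triadic orbit is at
least `81^{-2m} / 2`. Every block of frequencies `[3^l, 3^{l+m}]` then contributes at least
`81^{-4m} / 16` to `∫_0^{3^N} |P_N|²`, and `3^{19m}` such blocks contradict the upper bound.

So `|φ_t(y)| < 81^{-m}` for some `y ∈ [0, 3^m]`, and `t` lies within `9 · 81^{-m}` of a rational
with denominator at most `3^m`. Such `t` form a set of measure `O(9^{-m})`, which is less than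
`K⁻¹`.
-/

namespace GasketProjection

open scoped ENNReal

/-! ### Triadic cells -/

/-- The index `i` of the triadic cell `[i / 3 ^ k, (i + 1) / 3 ^ k)` of level `k` containing `s`. -/
noncomputable def cellIndex (k : ℕ) (s : ℝ) : ℤ := ⌊(3 : ℝ) ^ k * s⌋

/-- The σ-algebra of unions of triadic cells of level `k`. -/
noncomputable abbrev cellAlgebra (k : ℕ) : MeasurableSpace ℝ :=
  MeasurableSpace.comap (cellIndex k) ⊤

/-- The union of the cells of level `k` that meet `S` or are adjacent to a cell that meets `S`. -/
def cellNhd (k : ℕ) (S : Set ℝ) : Set ℝ :=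
  {s | ∃ s' ∈ S, |cellIndex k s' - cellIndex k s| ≤ 1}

lemma cellIndex_eq_div {j k : ℕ} (hjk : j ≤ k) (s : ℝ) :
    cellIndex j s = cellIndex k s / 3 ^ (k - j) := by
  have hpow : (3 : ℝ) ^ k * s = 3 ^ j * s * ((3 ^ (k - j) : ℤ) : ℝ) := by
    rw [← Nat.sub_add_cancel hjk, pow_add, Nat.add_sub_cancel]
    push_cast
    ring
  rw [cellIndex, cellIndex, hpow, Int.mul_cast_floor_div_cancel_of_pos (by positivity)]

lemma cellIndex_add_div (k : ℕ) (s : ℝ) (d : ℤ) :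
    cellIndex k (s + d / 3 ^ k) = cellIndex k s + d := by
  rw [cellIndex, cellIndex, ← Int.floor_add_intCast, mul_add, mul_div_cancel₀ _ (by positivity)]

lemma abs_floor_sub_floor_le_one {x y : ℝ} (h : |x - y| ≤ 1) : |⌊x⌋ - ⌊y⌋| ≤ 1 := by
  obtain ⟨hxy, hyx⟩ := abs_le.1 h
  have hx : ⌊x⌋ ≤ ⌊y⌋ + 1 := Int.floor_add_one y ▸ Int.floor_mono (by linarith)
  have hy : ⌊y⌋ ≤ ⌊x⌋ + 1 := Int.floor_add_one x ▸ Int.floor_mono (by linarith)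
  exact abs_le.2 ⟨by linarith, by linarith⟩

lemma measurable_cellIndex (k : ℕ) : Measurable (cellIndex k) :=
  Int.measurable_floor.comp (measurable_const_mul _)

lemma cellAlgebra_mono : Monotone cellAlgebra := by
  intro j k hjk
  have hfactor : cellIndex j = (· / 3 ^ (k - j)) ∘ cellIndex k :=
    funext fun s => cellIndex_eq_div hjk s
  rw [cellAlgebra, hfactor, ← MeasurableSpace.comap_comp]
  exact MeasurableSpace.comap_mono le_top

lemma measurableSet_of_cellAlgebra {k : ℕ} {S : Set ℝ} (hS : MeasurableSet[cellAlgebra k] S) :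
    MeasurableSet S :=
  (measurable_cellIndex k).comap_le S hS

lemma mem_iff_of_cellIndex_eq {k : ℕ} {S : Set ℝ} (hS : MeasurableSet[cellAlgebra k] S) {s s' : ℝ}
    (h : cellIndex k s = cellIndex k s') : s ∈ S ↔ s' ∈ S := by
  obtain ⟨I, -, rfl⟩ := hS
  simp only [Set.mem_preimage, h]

lemma measurableSet_disjointed_cellAlgebra {S : ℕ → Set ℝ}
    (hS : ∀ k, MeasurableSet[cellAlgebra k] (S k)) (k : ℕ) :
    MeasurableSet[cellAlgebra k] (disjointed S k) := by
  rw [disjointed_eq_inter_compl]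
  exact (hS k).inter <| MeasurableSet.iInter fun j => MeasurableSet.iInter fun hj =>
    (cellAlgebra_mono hj.le _ (hS j)).compl

lemma volume_cell (k : ℕ) (i : ℤ) :
    volume (cellIndex k ⁻¹' {i}) = ENNReal.ofReal (1 / 3 ^ k) := by
  have hcell : cellIndex k ⁻¹' {i} = Set.Ico ((i : ℝ) / 3 ^ k) ((i + 1) / 3 ^ k) := by
    ext s
    rw [Set.mem_preimage, Set.mem_singleton_iff, cellIndex, Int.floor_eq_iff, Set.mem_Ico,
      div_le_iff₀' (by positivity), lt_div_iff₀' (by positivity)]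
  rw [hcell, Real.volume_Ico, ← sub_div, add_sub_cancel_left]

lemma setLIntegral_le_of_forall_cell {k : ℕ} {S : Set ℝ} (hS : MeasurableSet[cellAlgebra k] S)
    {f : ℝ → ℝ≥0∞} {c : ℝ≥0∞}
    (hf : ∀ s ∈ S, ∫⁻ u in cellIndex k ⁻¹' {cellIndex k s}, f u ≤
      c * volume (cellIndex k ⁻¹' {cellIndex k s})) :
    ∫⁻ u in S, f u ≤ c * volume S := by
  have hcells : S = ⋃ i ∈ cellIndex k '' S, cellIndex k ⁻¹' {i} := by
    ext s
    simp only [Set.mem_iUnion, Set.mem_preimage, Set.mem_singleton_iff, exists_prop,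
      exists_eq_right', Set.mem_image]
    exact ⟨fun hs => ⟨s, hs, rfl⟩, fun ⟨s', hs', h⟩ => (mem_iff_of_cellIndex_eq hS h).1 hs'⟩
  have hdisj : (cellIndex k '' S).PairwiseDisjoint fun i => cellIndex k ⁻¹' {i} :=
    fun i _ j _ hij => Disjoint.preimage _ (Set.disjoint_singleton.2 hij)
  have hmeas : ∀ i ∈ cellIndex k '' S, MeasurableSet (cellIndex k ⁻¹' {i}) :=
    fun i _ => measurable_cellIndex k (measurableSet_singleton i)
  conv_lhs => rw [hcells, lintegral_biUnion (Set.to_countable _) hmeas hdisj]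
  conv_rhs => rw [hcells, measure_biUnion (Set.to_countable _) hdisj hmeas, ← ENNReal.tsum_mul_left]
  exact ENNReal.tsum_le_tsum fun ⟨_, s, hs, hi⟩ => hi ▸ hf s hs

lemma cellNhd_subset_of_le {j k : ℕ} (hjk : j ≤ k) (S : Set ℝ) : cellNhd k S ⊆ cellNhd j S := by
  rintro s ⟨s', hs', h⟩
  refine ⟨s', hs', ?_⟩
  rw [cellIndex_eq_div hjk, cellIndex_eq_div hjk s]
  have hpos : (0 : ℤ) < 3 ^ (k - j) := by positivity
  have hdiv : ∀ a b : ℤ, a ≤ b + 1 → a / 3 ^ (k - j) ≤ b / 3 ^ (k - j) + 1 := fun a b hab =>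
    calc a / 3 ^ (k - j) ≤ (b + 1 * 3 ^ (k - j)) / 3 ^ (k - j) :=
          Int.ediv_le_ediv hpos (by linarith)
      _ = b / 3 ^ (k - j) + 1 := Int.add_mul_ediv_right _ _ hpos.ne'
  obtain ⟨h₁, h₂⟩ := abs_le.1 h
  exact abs_le.2 ⟨by linarith [hdiv _ _ (show cellIndex k s ≤ cellIndex k s' + 1 by linarith)],
    by linarith [hdiv _ _ (show cellIndex k s' ≤ cellIndex k s + 1 by linarith)]⟩

lemma volume_cellNhd_le {k : ℕ} {S : Set ℝ} (hS : MeasurableSet[cellAlgebra k] S) :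
    volume (cellNhd k S) ≤ 3 * volume S := by
  have hsub : cellNhd k S ⊆
      ⋃ d ∈ Finset.Icc (-1 : ℤ) 1, (fun s : ℝ => s + d / 3 ^ k) ⁻¹' S := by
    rintro s ⟨s', hs', h⟩
    refine Set.mem_biUnion (x := cellIndex k s' - cellIndex k s)
      (Finset.mem_coe.2 (Finset.mem_Icc.2 (abs_le.1 h))) ?_
    refine (mem_iff_of_cellIndex_eq hS ?_).1 hs'
    rw [cellIndex_add_div, add_sub_cancel]
  calc volume (cellNhd k S)
      ≤ ∑ d ∈ Finset.Icc (-1 : ℤ) 1, volume ((fun s : ℝ => s + d / 3 ^ k) ⁻¹' S) :=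
        (measure_mono hsub).trans (measure_biUnion_finset_le _ _)
    _ = 3 * volume S := by
        simp only [measure_preimage_add_right, Finset.sum_const, Int.card_Icc, nsmul_eq_mul]
        rfl

-- A point near `S k` is, at the coarser level `j ≤ k` where the nearby point first enters `S`,
-- near the `j`-th disjointed piece, which is a union of cells of level `j`.
lemma volume_biUnion_cellNhd_le {S : ℕ → Set ℝ} (hS : ∀ k, MeasurableSet[cellAlgebra k] (S k))
    (n : ℕ) :
    volume (⋃ k ∈ Finset.range n, cellNhd k (S k)) ≤ 3 * volume (⋃ k ∈ Finset.range n, S k) := by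
  have hmeas := measurableSet_disjointed_cellAlgebra hS
  have hsub : ⋃ k ∈ Finset.range n, cellNhd k (S k) ⊆
      ⋃ j ∈ Finset.range n, cellNhd j (disjointed S j) := by
    refine Set.iUnion₂_subset fun k hk s ⟨s', hs', h⟩ => ?_
    have hs'_mem : s' ∈ ⋃ j ∈ Finset.Iic k, disjointed S j := by
      rw [biUnion_Iic_disjointed]
      exact le_partialSups S k hs'
    obtain ⟨j, hjk, hj⟩ := Set.mem_iUnion₂.1 hs'_mem
    rw [Finset.mem_Iic] at hjk
    exact Set.mem_biUnion (Finset.mem_range.2 (hjk.trans_lt (Finset.mem_range.1 hk)))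
      (cellNhd_subset_of_le hjk _ ⟨s', hj, h⟩)
  calc volume (⋃ k ∈ Finset.range n, cellNhd k (S k))
      ≤ ∑ j ∈ Finset.range n, volume (cellNhd j (disjointed S j)) :=
        (measure_mono hsub).trans (measure_biUnion_finset_le _ _)
    _ ≤ ∑ j ∈ Finset.range n, 3 * volume (disjointed S j) :=
        Finset.sum_le_sum fun j _ => volume_cellNhd_le (hmeas j)
    _ = 3 * volume (⋃ j ∈ Finset.range n, disjointed S j) := by
        rw [← Finset.mul_sum, measure_biUnion_finset ((disjoint_disjointed S).set_pairwise _)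
          fun j _ => measurableSet_of_cellAlgebra (hmeas j)]
    _ ≤ 3 * volume (⋃ j ∈ Finset.range n, S j) := by
        gcongr
        exact disjointed_subset _ _

/-! ### Overlap counts of finite families of intervals -/

section OverlapCount

variable {ι : Type*} [Fintype ι]

/-- The number of intervals `[x a - 1 / R, x a + 1 / R]` that contain `s`. The multiplicity
function `f_{n,t}` is the case `R = 3 ^ n`, `x = digitSum t`. -/
noncomputable def overlapCount (R : ℝ) (x : ι → ℝ) (s : ℝ) : ℕ :=
  Finset.card {a | |R * (s - x a)| ≤ 1}

lemma overlapCount_eq_sum_indicator {R : ℝ} (hR : 0 < R) (x : ι → ℝ) (s : ℝ) :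
    (overlapCount R x s : ℝ≥0∞) =
      ∑ a, (Metric.closedBall (x a) (1 / R)).indicator (1 : ℝ → ℝ≥0∞) s := by
  rw [overlapCount, Finset.card_filter, Nat.cast_sum]
  refine Finset.sum_congr rfl fun a _ => ?_
  have hmem : s ∈ Metric.closedBall (x a) (1 / R) ↔ |R * (s - x a)| ≤ 1 := by
    rw [Metric.mem_closedBall, Real.dist_eq, abs_mul, abs_of_pos hR, le_div_iff₀' hR]
  split_ifs with h
  · rw [Set.indicator_of_mem (hmem.2 h), Pi.one_apply, Nat.cast_one]
  · rw [Set.indicator_of_notMem (mt hmem.1 h), Nat.cast_zero]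

lemma measurable_overlapCount {R : ℝ} (hR : 0 < R) (x : ι → ℝ) :
    Measurable fun s => (overlapCount R x s : ℝ≥0∞) := by
  simp only [overlapCount_eq_sum_indicator hR]
  exact Finset.measurable_sum _ fun a _ =>
    measurable_one.indicator Metric.isClosed_closedBall.measurableSet

lemma lintegral_overlapCount {R : ℝ} (hR : 0 < R) (x : ι → ℝ) :
    ∫⁻ s, (overlapCount R x s : ℝ≥0∞) = Fintype.card ι * ENNReal.ofReal (2 / R) := by
  have hball : ∀ a, MeasurableSet (Metric.closedBall (x a) (1 / R)) :=
    fun a => Metric.isClosed_closedBall.measurableSet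
  simp only [overlapCount_eq_sum_indicator hR]
  rw [lintegral_finsetSum _ fun a _ => measurable_one.indicator (hball a)]
  simp only [lintegral_indicator_one (hball _), Real.volume_closedBall, Finset.sum_const,
    Finset.card_univ, nsmul_eq_mul, mul_one_div]

end OverlapCount

lemma lintegral_comp_mul_sub {g : ℝ → ℝ≥0∞} (hg : Measurable g) {R : ℝ} (hR : 0 < R) (c : ℝ) :
    ∫⁻ s, g (R * (s - c)) = ENNReal.ofReal (1 / R) * ∫⁻ s, g s := by
  rw [lintegral_sub_right_eq_self (fun s => g (R * s)) c,
    ← lintegral_map hg (measurable_const_mul R), Real.map_volume_mul_left hR.ne',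
    lintegral_smul_measure, abs_of_pos (inv_pos.2 hR), one_div, smul_eq_mul]

/-! ### Digit sums and self-similarity -/

section Multiplicity

variable {t : ℝ}

/-- The centre `∑ w(a_k) 3^{-k}` of the interval coded by the digit string `a`. -/
noncomputable def digitSum (t : ℝ) {n : ℕ} (a : Fin n → Fin 3) : ℝ :=
  ∑ k : Fin n, wgt t (a k) * (3 : ℝ) ^ (-(k.1 + 1 : ℤ))

lemma wgt_mem_Icc (ht : t ∈ Set.Icc (0 : ℝ) 1) (i : Fin 3) : wgt t i ∈ Set.Icc (0 : ℝ) 1 := by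
  fin_cases i <;> simp [wgt, ht.1, ht.2]

lemma digitSum_nonneg (ht : t ∈ Set.Icc (0 : ℝ) 1) {n : ℕ} (a : Fin n → Fin 3) :
    0 ≤ digitSum t a :=
  Finset.sum_nonneg fun k _ => mul_nonneg (wgt_mem_Icc ht (a k)).1 (by positivity)

lemma digitSum_le (ht : t ∈ Set.Icc (0 : ℝ) 1) {n : ℕ} (a : Fin n → Fin 3) :
    digitSum t a ≤ (1 - 1 / 3 ^ n) / 2 := by
  have hgeom : ∑ k : Fin n, (3 : ℝ) ^ (-(k.1 + 1 : ℤ)) = (1 - 1 / 3 ^ n) / 2 := by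
    rw [Fin.sum_univ_eq_sum_range (fun k => (3 : ℝ) ^ (-(k + 1 : ℤ))) n]
    clear a
    induction n with
    | zero => simp
    | succ n ih =>
      rw [Finset.sum_range_succ, ih, zpow_neg, ← Nat.cast_succ, zpow_natCast, pow_succ]
      field_simp
      ring
  rw [← hgeom]
  exact Finset.sum_le_sum fun k _ =>
    mul_le_of_le_one_left (by positivity) (wgt_mem_Icc ht (a k)).2

lemma digitSum_append (t : ℝ) {k l : ℕ} (b : Fin k → Fin 3) (a : Fin l → Fin 3) :
    digitSum t (Fin.append b a) = digitSum t b + digitSum t a / 3 ^ k := by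
  simp only [digitSum, Fin.sum_univ_add, Fin.append_left, Fin.append_right, Fin.val_castAdd,
    Fin.val_natAdd, Finset.sum_div, mul_div_assoc]
  congr! 3 with i
  rw [← zpow_natCast, ← zpow_sub₀ (by norm_num)]
  congr 1
  push_cast
  ring

lemma multFn_eq_overlapCount (t : ℝ) (n : ℕ) (s : ℝ) :
    multFn t n s = overlapCount (3 ^ n) (digitSum t (n := n)) s := by
  rw [multFn, overlapCount]
  congr! 2 with a
  rw [abs_mul, abs_of_pos (by positivity : (0 : ℝ) < 3 ^ n), zpow_neg, zpow_natCast, ← one_div,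
    le_div_iff₀' (by positivity), digitSum]

lemma measurable_multFn (t : ℝ) (n : ℕ) : Measurable fun s => (multFn t n s : ℝ≥0∞) := by
  simpa only [multFn_eq_overlapCount] using measurable_overlapCount (by positivity) _

lemma lintegral_multFn (t : ℝ) (n : ℕ) : ∫⁻ s, (multFn t n s : ℝ≥0∞) = 2 := by
  simp only [multFn_eq_overlapCount]
  rw [lintegral_overlapCount (by positivity), Fintype.card_fun, Fintype.card_fin, Fintype.card_fin,
    ← ENNReal.ofReal_natCast, ← ENNReal.ofReal_mul (by positivity), Nat.cast_pow, Nat.cast_ofNat,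
    mul_div_cancel₀ _ (by positivity), ENNReal.ofReal_ofNat]

lemma sum_append {M : Type*} [AddCommMonoid M] {k l : ℕ} (g : (Fin (k + l) → Fin 3) → M) :
    ∑ a, g a = ∑ b : Fin k → Fin 3, ∑ a : Fin l → Fin 3, g (Fin.append b a) := by
  rw [← Fintype.sum_prod_type', ← (Fin.appendEquiv k l).sum_comp]
  rfl

lemma multFn_add (t : ℝ) (k l : ℕ) (s : ℝ) :
    multFn t (k + l) s = ∑ b : Fin k → Fin 3, multFn t l (3 ^ k * (s - digitSum t b)) := by
  simp only [multFn_eq_overlapCount, overlapCount, Finset.card_filter, sum_append, digitSum_append]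
  congr! 5 with b _ a
  field_simp
  ring

lemma abs_le_one_of_multFn_ne_zero (ht : t ∈ Set.Icc (0 : ℝ) 1) {n : ℕ} {s : ℝ}
    (h : multFn t n s ≠ 0) : |s| ≤ 1 := by
  rw [multFn_eq_overlapCount, overlapCount, Finset.card_ne_zero] at h
  obtain ⟨a, ha⟩ := h
  have hsa := (Finset.mem_filter.1 ha).2
  rw [abs_mul, abs_of_pos (by positivity), ← le_div_iff₀' (by positivity)] at hsa
  have hn : (1 : ℝ) / 3 ^ n ≤ 1 := div_le_one_of_le₀ (one_le_pow₀ (by norm_num)) (by positivity)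
  obtain ⟨h₁, h₂⟩ := abs_le.1 hsa
  exact abs_le.2 ⟨by linarith [digitSum_nonneg ht a], by linarith [digitSum_le ht a]⟩

/-! ### Counting digit sums in and near a cell -/

/-- The number of digit sums of level `k` in the cell of level `k` containing `s`. -/
noncomputable def cellCount (t : ℝ) (k : ℕ) (s : ℝ) : ℕ :=
  Finset.card {a : Fin k → Fin 3 | cellIndex k (digitSum t a) = cellIndex k s}

/-- The number of digit sums of level `k` in the cell of level `k` containing `s` or in one of its
two neighbours. -/
noncomputable def nearCount (t : ℝ) (k : ℕ) (s : ℝ) : ℕ :=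
  Finset.card {a : Fin k → Fin 3 | |cellIndex k (digitSum t a) - cellIndex k s| ≤ 1}

/-- The set of points near more than `M` digit sums of level `k`. -/
def crowdedSet (t : ℝ) (M k : ℕ) : Set ℝ := {s | M < nearCount t k s}

lemma measurableSet_cellCount_gt (t : ℝ) (κ k : ℕ) :
    MeasurableSet[cellAlgebra k] {s | κ < cellCount t k s} :=
  ⟨{i | κ < Finset.card {a : Fin k → Fin 3 | cellIndex k (digitSum t a) = i}}, trivial, rfl⟩

lemma measurableSet_crowdedSet (t : ℝ) (M k : ℕ) :
    MeasurableSet[cellAlgebra k] (crowdedSet t M k) :=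
  ⟨{i | M < Finset.card {a : Fin k → Fin 3 | |cellIndex k (digitSum t a) - i| ≤ 1}}, trivial, rfl⟩

lemma abs_cellIndex_sub_le_one {k : ℕ} {s c : ℝ} (h : |3 ^ k * (s - c)| ≤ 1) :
    |cellIndex k c - cellIndex k s| ≤ 1 :=
  abs_floor_sub_floor_le_one (by rwa [← mul_sub, abs_mul, abs_sub_comm, ← abs_mul])

lemma multFn_le_nearCount (t : ℝ) (k : ℕ) (s : ℝ) : multFn t k s ≤ nearCount t k s := by
  rw [multFn_eq_overlapCount]
  exact Finset.card_le_card <| Finset.monotone_filter_right _ fun _ _ => abs_cellIndex_sub_le_one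

lemma cellCount_le_multFn (t : ℝ) (k : ℕ) (s : ℝ) : cellCount t k s ≤ multFn t k s := by
  rw [multFn_eq_overlapCount]
  refine Finset.card_le_card <| Finset.monotone_filter_right _ fun a _ h => ?_
  have hlt := Int.abs_sub_lt_one_of_floor_eq_floor h.symm
  rw [← mul_sub] at hlt
  exact hlt.le

lemma crowdedSet_subset_cellNhd (t : ℝ) (κ k : ℕ) :
    crowdedSet t (3 * κ) k ⊆ cellNhd k {s | κ < cellCount t k s} := by
  intro s hs
  by_contra hfar
  refine (show 3 * κ < nearCount t k s from hs).not_ge ?_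
  rw [mul_comm]
  refine Finset.card_le_mul_card_image_of_maps_to
    (f := fun a => cellIndex k (digitSum t a) - cellIndex k s) (t := Finset.Icc (-1) 1)
    (fun a ha => Finset.mem_Icc.2 (abs_le.1 (Finset.mem_filter.1 ha).2)) κ fun d hd => ?_
  by_contra! hcard
  refine hfar ⟨s + d / 3 ^ k, hcard.trans_le ?_, ?_⟩
  · refine Finset.card_le_card fun a ha => ?_
    simp only [Finset.mem_filter, Finset.mem_univ, true_and, cellIndex_add_div] at ha ⊢
    linarith [ha.2]
  · rw [cellIndex_add_div, add_sub_cancel_left]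
    exact abs_le.2 (Finset.mem_Icc.1 hd)

lemma abs_cellIndex_sub_le_one_of_append (ht : t ∈ Set.Icc (0 : ℝ) 1) {k : ℕ} {s : ℝ}
    {b : Fin k → Fin 3} {a : Fin 1 → Fin 3}
    (h : |cellIndex (k + 1) (digitSum t (Fin.append b a)) - cellIndex (k + 1) s| ≤ 1) :
    |cellIndex k (digitSum t b) - cellIndex k s| ≤ 1 := by
  have ha : digitSum t a ≤ 1 / 3 := (digitSum_le ht a).trans_eq (by norm_num)
  have hb : (3 : ℝ) ^ (k + 1) * digitSum t (Fin.append b a) =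
      3 * (3 ^ k * digitSum t b) + 3 * digitSum t a := by
    rw [digitSum_append]
    field_simp
    ring
  have hs : (3 : ℝ) ^ (k + 1) * s = 3 * (3 ^ k * s) := by ring
  rw [cellIndex, cellIndex, hb, hs, ← Int.cast_le (R := ℝ), Int.cast_abs, Int.cast_sub,
    Int.cast_one, abs_le] at h
  obtain ⟨h₁, h₂⟩ := h
  refine abs_cellIndex_sub_le_one (abs_le.2 ⟨?_, ?_⟩)
  · linarith [Int.floor_le (3 * ((3 : ℝ) ^ k * s)), digitSum_nonneg ht a,
      Int.lt_floor_add_one (3 * (3 ^ k * digitSum t b) + 3 * digitSum t a)]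
  · linarith [Int.lt_floor_add_one (3 * ((3 : ℝ) ^ k * s)), digitSum_nonneg ht a,
      Int.floor_le (3 * (3 ^ k * digitSum t b) + 3 * digitSum t a)]

lemma nearCount_succ_le (ht : t ∈ Set.Icc (0 : ℝ) 1) (k : ℕ) (s : ℝ) :
    nearCount t (k + 1) s ≤ 3 * nearCount t k s := by
  simp only [nearCount, Finset.card_filter, sum_append, Finset.mul_sum]
  refine Finset.sum_le_sum fun b _ => ?_
  split_ifs with hb
  · rw [← Finset.card_filter]
    exact (Finset.card_filter_le _ _).trans (by simp)
  · exact (Finset.sum_eq_zero fun a _ =>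
      if_neg fun h => hb (abs_cellIndex_sub_le_one_of_append ht h)).le

lemma nearCount_zero_le_one (t s : ℝ) : nearCount t 0 s ≤ 1 :=
  (Finset.card_filter_le _ _).trans (by simp)

/-! ### The stopping-time bound -/

lemma crowdedSet_zero (t : ℝ) {M : ℕ} (hM : 1 ≤ M) : crowdedSet t M 0 = ∅ :=
  Set.eq_empty_of_forall_notMem fun s hs =>
    (((nearCount_zero_le_one t s).trans hM).trans_lt hs).false

lemma nearCount_le_of_mem_disjointed (ht : t ∈ Set.Icc (0 : ℝ) 1) {M k : ℕ} {s : ℝ}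
    (hs : s ∈ disjointed (crowdedSet t M) (k + 1)) : nearCount t (k + 1) s ≤ 3 * M := by
  have hprev : s ∉ crowdedSet t M k := by
    rw [disjointed_add_one] at hs
    exact fun h => hs.2 (le_partialSups (crowdedSet t M) k h)
  exact (nearCount_succ_le ht k s).trans (Nat.mul_le_mul_left 3 (not_lt.1 hprev))

lemma multFn_add_sq_le (ht : t ∈ Set.Icc (0 : ℝ) 1) (k l : ℕ) (u : ℝ) :
    multFn t (k + l) u ^ 2 ≤ nearCount t k u *
      ∑ b : Fin k → Fin 3 with |cellIndex k (digitSum t b) - cellIndex k u| ≤ 1,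
        multFn t l (3 ^ k * (u - digitSum t b)) ^ 2 := by
  have hnear : multFn t (k + l) u =
      ∑ b : Fin k → Fin 3 with |cellIndex k (digitSum t b) - cellIndex k u| ≤ 1,
        multFn t l (3 ^ k * (u - digitSum t b)) := by
    rw [multFn_add, Finset.sum_filter_of_ne]
    exact fun b _ hb => abs_cellIndex_sub_le_one (abs_le_one_of_multFn_ne_zero ht hb)
  rw [hnear]
  exact sq_sum_le_card_mul_sum_sq

lemma setLIntegral_cell_multFn_sq_le (ht : t ∈ Set.Icc (0 : ℝ) 1) (k l : ℕ) (s : ℝ) :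
    ∫⁻ u in cellIndex k ⁻¹' {cellIndex k s}, (multFn t (k + l) u : ℝ≥0∞) ^ 2 ≤
      (nearCount t k s : ℝ≥0∞) ^ 2 * (∫⁻ u, (multFn t l u : ℝ≥0∞) ^ 2) *
        volume (cellIndex k ⁻¹' {cellIndex k s}) := by
  set near : Finset (Fin k → Fin 3) := {b | |cellIndex k (digitSum t b) - cellIndex k s| ≤ 1}
    with hnear
  have hpoint : ∀ u ∈ cellIndex k ⁻¹' {cellIndex k s}, (multFn t (k + l) u : ℝ≥0∞) ^ 2 ≤
      nearCount t k s * ∑ b ∈ near, (multFn t l (3 ^ k * (u - digitSum t b)) : ℝ≥0∞) ^ 2 := by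
    intro u hu
    have hle := multFn_add_sq_le ht k l u
    simp only [nearCount, Set.mem_singleton_iff.1 (Set.mem_preimage.1 hu)] at hle
    rw [nearCount]
    exact_mod_cast hle
  have hmeas : ∀ b : Fin k → Fin 3,
      Measurable fun u => (multFn t l (3 ^ k * (u - digitSum t b)) : ℝ≥0∞) ^ 2 := fun b =>
    ((measurable_multFn t l).comp ((measurable_sub_const _).const_mul _)).pow_const 2
  calc ∫⁻ u in cellIndex k ⁻¹' {cellIndex k s}, (multFn t (k + l) u : ℝ≥0∞) ^ 2
      ≤ ∫⁻ u in cellIndex k ⁻¹' {cellIndex k s},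
          nearCount t k s * ∑ b ∈ near, (multFn t l (3 ^ k * (u - digitSum t b)) : ℝ≥0∞) ^ 2 :=
        setLIntegral_mono' (measurable_cellIndex k (measurableSet_singleton _)) hpoint
    _ ≤ ∫⁻ u,
          nearCount t k s * ∑ b ∈ near, (multFn t l (3 ^ k * (u - digitSum t b)) : ℝ≥0∞) ^ 2 :=
        setLIntegral_le_lintegral _ _
    _ = nearCount t k s * ∑ b ∈ near,
          ENNReal.ofReal (1 / 3 ^ k) * ∫⁻ u, (multFn t l u : ℝ≥0∞) ^ 2 := by
        rw [lintegral_const_mul _ (Finset.measurable_sum _ fun b _ => hmeas b),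
          lintegral_finsetSum _ fun b _ => hmeas b]
        simp only [lintegral_comp_mul_sub ((measurable_multFn t l).pow_const 2)
          (pow_pos (three_pos (α := ℝ)) k)]
    _ = _ := by
        rw [Finset.sum_const, nsmul_eq_mul, volume_cell, hnear, ← nearCount]
        ring

lemma setLIntegral_disjointed_crowdedSet_le (ht : t ∈ Set.Icc (0 : ℝ) 1) {M : ℕ} (hM : 1 ≤ M)
    {n : ℕ} {B : ℝ≥0∞} (hB : ∀ l < n, ∫⁻ s, (multFn t l s : ℝ≥0∞) ^ 2 ≤ B) {k : ℕ} (hk : k ≤ n) :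
    ∫⁻ s in disjointed (crowdedSet t M) k, (multFn t n s : ℝ≥0∞) ^ 2 ≤
      (9 * M ^ 2 * B) * volume (disjointed (crowdedSet t M) k) := by
  rcases k with _ | k
  · simp [crowdedSet_zero t hM]
  obtain ⟨l, rfl⟩ := Nat.exists_eq_add_of_le hk
  refine setLIntegral_le_of_forall_cell
    (measurableSet_disjointed_cellAlgebra (measurableSet_crowdedSet t M) _) fun s hs => ?_
  refine (setLIntegral_cell_multFn_sq_le ht (k + 1) l s).trans ?_
  have hnear : (nearCount t (k + 1) s : ℝ≥0∞) ^ 2 ≤ 9 * M ^ 2 := by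
    exact_mod_cast (Nat.pow_le_pow_left (nearCount_le_of_mem_disjointed ht hs) 2).trans_eq (by ring)
  gcongr
  exact hB l (by lia)

lemma setLIntegral_compl_crowdedSet_le (t : ℝ) (M n : ℕ) {S : Set ℝ} (hS : MeasurableSet S)
    (hsub : crowdedSet t M n ⊆ S) : ∫⁻ s in Sᶜ, (multFn t n s : ℝ≥0∞) ^ 2 ≤ 2 * M := by
  have hpoint : ∀ s ∈ Sᶜ, (multFn t n s : ℝ≥0∞) ^ 2 ≤ M * multFn t n s := by
    intro s hs
    have hM : multFn t n s ≤ M := (multFn_le_nearCount t n s).trans (not_lt.1 fun h => hs (hsub h))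
    rw [sq]
    gcongr
  calc ∫⁻ s in Sᶜ, (multFn t n s : ℝ≥0∞) ^ 2 ≤ ∫⁻ s in Sᶜ, M * (multFn t n s : ℝ≥0∞) :=
        setLIntegral_mono' hS.compl hpoint
    _ ≤ ∫⁻ s, M * (multFn t n s : ℝ≥0∞) := setLIntegral_le_lintegral _ _
    _ = 2 * M := by
        rw [lintegral_const_mul _ (measurable_multFn t n), lintegral_multFn, mul_comm]

-- Each point of the crowded region is charged to the first level at which it becomes crowded:
-- there it is near at most `3 M` digit sums, and self-similarity reduces to an earlier level.
lemma lintegral_multFn_sq_le_of_crowdedSet (ht : t ∈ Set.Icc (0 : ℝ) 1) {M : ℕ} (hM : 1 ≤ M)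
    {n : ℕ} (hsmall : 18 * (M : ℝ≥0∞) ^ 2 *
      volume (⋃ k ∈ Finset.range (n + 1), crowdedSet t M k) ≤ 1) :
    ∫⁻ s, (multFn t n s : ℝ≥0∞) ^ 2 ≤ 4 * M := by
  induction n using Nat.strong_induction_on with
  | _ n ih =>
  set S := ⋃ k ∈ Finset.range (n + 1), crowdedSet t M k with hS_def
  have hmeas := measurableSet_crowdedSet t M
  have hdmeas := fun k =>
    measurableSet_of_cellAlgebra (measurableSet_disjointed_cellAlgebra hmeas k)
  have hdisj := (disjoint_disjointed (crowdedSet t M)).set_pairwise (Finset.range (n + 1))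
  have hS : S = ⋃ k ∈ Finset.range (n + 1), disjointed (crowdedSet t M) k := by
    rw [hS_def, biUnion_range_succ_disjointed, partialSups_eq_biSup]
    simp only [Finset.mem_range_succ_iff, Set.iSup_eq_iUnion]
  have hSmeas : MeasurableSet S := Finset.measurableSet_biUnion _ fun k _ =>
    measurableSet_of_cellAlgebra (hmeas k)
  have hB : ∀ l < n, ∫⁻ s, (multFn t l s : ℝ≥0∞) ^ 2 ≤ 4 * M := fun l hl =>
    ih l hl <| hsmall.trans' <| by
      gcongr
      exact Set.biUnion_subset_biUnion_left fun k hk =>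
        Finset.mem_range.2 ((Finset.mem_range.1 hk).trans (Nat.succ_lt_succ hl))
  have hcrowded : ∫⁻ s in S, (multFn t n s : ℝ≥0∞) ^ 2 ≤ 2 * M :=
    calc ∫⁻ s in S, (multFn t n s : ℝ≥0∞) ^ 2
        = ∑ k ∈ Finset.range (n + 1),
            ∫⁻ s in disjointed (crowdedSet t M) k, (multFn t n s : ℝ≥0∞) ^ 2 := by
          rw [hS, lintegral_biUnion_finset hdisj fun k _ => hdmeas k]
      _ ≤ ∑ k ∈ Finset.range (n + 1),
            (9 * M ^ 2 * (4 * M)) * volume (disjointed (crowdedSet t M) k) :=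
          Finset.sum_le_sum fun k hk => setLIntegral_disjointed_crowdedSet_le ht hM hB
            (Finset.mem_range_succ_iff.1 hk)
      _ = (18 * M ^ 2 * volume S) * (2 * M) := by
          rw [← Finset.mul_sum, ← measure_biUnion_finset hdisj fun k _ => hdmeas k, ← hS]
          ring
      _ ≤ 2 * M := mul_le_of_le_one_left' hsmall
  calc ∫⁻ s, (multFn t n s : ℝ≥0∞) ^ 2
      = (∫⁻ s in S, (multFn t n s : ℝ≥0∞) ^ 2) + ∫⁻ s in Sᶜ, (multFn t n s : ℝ≥0∞) ^ 2 :=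
        (lintegral_add_compl _ hSmeas).symm
    _ ≤ 2 * M + 2 * M :=
        add_le_add hcrowded (setLIntegral_compl_crowdedSet_le t M n hSmeas
          (Set.subset_biUnion_of_mem (u := crowdedSet t M) (Finset.self_mem_range_succ n)))
    _ = 4 * M := by ring

lemma cellCount_le_multFnStar {N k : ℕ} (hk : k ≤ N) (t s : ℝ) :
    cellCount t k s ≤ multFnStar t N s :=
  (cellCount_le_multFn t k s).trans
    (Finset.le_sup (f := fun n => multFn t n s) (Finset.mem_range_succ_iff.2 hk))

theorem lintegral_multFn_sq_le (ht : t ∈ Set.Icc (0 : ℝ) 1) {κ N : ℕ} (hκ : 1 ≤ κ)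
    (hsmall : 486 * (κ : ℝ≥0∞) ^ 2 * volume {s | κ < multFnStar t N s} ≤ 1) {n : ℕ} (hn : n ≤ N) :
    ∫⁻ s, (multFn t n s : ℝ≥0∞) ^ 2 ≤ 12 * κ := by
  have hvol : volume (⋃ k ∈ Finset.range (n + 1), crowdedSet t (3 * κ) k) ≤
      3 * volume {s | κ < multFnStar t N s} :=
    calc volume (⋃ k ∈ Finset.range (n + 1), crowdedSet t (3 * κ) k)
        ≤ volume (⋃ k ∈ Finset.range (n + 1), cellNhd k {s | κ < cellCount t k s}) :=
          measure_mono (Set.iUnion₂_mono fun k _ => crowdedSet_subset_cellNhd t κ k)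
      _ ≤ 3 * volume (⋃ k ∈ Finset.range (n + 1), {s | κ < cellCount t k s}) :=
          volume_biUnion_cellNhd_le (measurableSet_cellCount_gt t κ) (n + 1)
      _ ≤ 3 * volume {s | κ < multFnStar t N s} := by
          gcongr
          exact Set.iUnion₂_subset fun k hk s hs => lt_of_lt_of_le hs
            (cellCount_le_multFnStar ((Finset.mem_range_succ_iff.1 hk).trans hn) t s)
  calc ∫⁻ s, (multFn t n s : ℝ≥0∞) ^ 2 ≤ 4 * (3 * κ : ℕ) := by
        refine lintegral_multFn_sq_le_of_crowdedSet ht (by lia) (hsmall.trans' ?_)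
        calc _ ≤ 18 * ((3 * κ : ℕ) : ℝ≥0∞) ^ 2 * (3 * volume {s | κ < multFnStar t N s}) := by
              gcongr
          _ = 486 * (κ : ℝ≥0∞) ^ 2 * volume {s | κ < multFnStar t N s} := by
              push_cast
              ring
    _ = 12 * κ := by
        push_cast
        ring

end Multiplicity

/-! ### Mean squares of exponential sums -/

section ExpSum

variable {ι : Type*} [Fintype ι]

/-- The exponential sum `∑ₐ e^{iξ xₐ}`, the Fourier transform of the point masses at `x`. -/
noncomputable def expSum (x : ι → ℝ) (ξ : ℝ) : ℂ :=
  ∑ a, Complex.exp ((ξ * x a : ℝ) * Complex.I)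

lemma continuous_expSum (x : ι → ℝ) : Continuous (expSum x) := by
  unfold expSum
  fun_prop

lemma norm_expSum_sq (x : ι → ℝ) (ξ : ℝ) :
    ‖expSum x ξ‖ ^ 2 = ∑ a, ∑ b, Real.cos (ξ * (x a - x b)) := by
  rw [Complex.sq_norm, Complex.normSq_apply]
  simp only [expSum, Complex.re_sum, Complex.im_sum, Complex.exp_ofReal_mul_I_re,
    Complex.exp_ofReal_mul_I_im, Finset.sum_mul_sum, ← Finset.sum_add_distrib, mul_sub,
    Real.cos_sub]

-- The Fejér kernel: the cosine transform of the triangle weight.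
lemma integral_triangle_mul_cos {R : ℝ} (hR : 0 < R) (d : ℝ) :
    ∫ ξ in (0 : ℝ)..(2 * R), (1 - ξ / (2 * R)) * Real.cos (ξ * d) = R * Real.sinc (R * d) ^ 2 := by
  rcases eq_or_ne d 0 with rfl | hd
  · simp only [mul_zero, Real.cos_zero, mul_one, Real.sinc_zero, one_pow]
    rw [intervalIntegral.integral_sub (by simp) (Continuous.intervalIntegrable (by fun_prop) _ _),
      intervalIntegral.integral_div, integral_id, intervalIntegral.integral_const, smul_eq_mul]
    field_simp
    ring
  have hderiv : ∀ ξ ∈ Set.uIcc 0 (2 * R), HasDerivAt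
      (fun ξ : ℝ => (1 - ξ / (2 * R)) * (Real.sin (ξ * d) / d) - Real.cos (ξ * d) / (2 * R * d ^ 2))
      ((1 - ξ / (2 * R)) * Real.cos (ξ * d)) ξ := by
    intro ξ _
    have hlin : HasDerivAt (fun ξ : ℝ => ξ * d) d ξ := by simpa using (hasDerivAt_id ξ).mul_const d
    have hweight : HasDerivAt (fun ξ : ℝ => 1 - ξ / (2 * R)) (-(1 / (2 * R))) ξ := by
      simpa using ((hasDerivAt_id ξ).div_const (2 * R)).const_sub 1
    refine ((hweight.mul (hlin.sin.div_const d)).sub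
      (hlin.cos.div_const (2 * R * d ^ 2))).congr_deriv ?_
    field_simp
    ring
  rw [intervalIntegral.integral_eq_sub_of_hasDerivAt hderiv
    (Continuous.intervalIntegrable (by fun_prop) _ _), Real.sinc_of_ne_zero (by positivity),
    show 2 * R * d = 2 * (R * d) by ring, Real.cos_two_mul, Real.cos_sq']
  simp only [zero_div, sub_zero, zero_mul, Real.sin_zero, mul_zero, Real.cos_zero, one_div,
    mul_inv_rev, zero_sub, sub_neg_eq_add]
  field_simp
  ring

lemma integral_triangle_mul_norm_expSum_sq {R : ℝ} (hR : 0 < R) (x : ι → ℝ) :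
    ∫ ξ in (0 : ℝ)..(2 * R), (1 - ξ / (2 * R)) * ‖expSum x ξ‖ ^ 2 =
      R * ∑ a, ∑ b, Real.sinc (R * (x a - x b)) ^ 2 := by
  simp only [norm_expSum_sq, Finset.mul_sum]
  rw [intervalIntegral.integral_finsetSum
    fun a _ => Continuous.intervalIntegrable (by fun_prop) _ _]
  refine Finset.sum_congr rfl fun a _ => ?_
  rw [intervalIntegral.integral_finsetSum
    fun b _ => Continuous.intervalIntegrable (by fun_prop) _ _]
  exact Finset.sum_congr rfl fun b _ => integral_triangle_mul_cos hR _

lemma card_mul_le_integral_norm_expSum_sq {R : ℝ} (hR : 0 < R) (x : ι → ℝ) :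
    Fintype.card ι * R ≤ ∫ ξ in (0 : ℝ)..(2 * R), ‖expSum x ξ‖ ^ 2 := by
  have hcont := continuous_expSum x
  calc Fintype.card ι * R = R * ∑ a, Real.sinc (R * (x a - x a)) ^ 2 := by
        simp [mul_comm]
    _ ≤ R * ∑ a, ∑ b, Real.sinc (R * (x a - x b)) ^ 2 := by
        gcongr with a
        exact Finset.single_le_sum (f := fun b => Real.sinc (R * (x a - x b)) ^ 2)
          (fun b _ => sq_nonneg _) (Finset.mem_univ a)
    _ = ∫ ξ in (0 : ℝ)..(2 * R), (1 - ξ / (2 * R)) * ‖expSum x ξ‖ ^ 2 :=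
        (integral_triangle_mul_norm_expSum_sq hR x).symm
    _ ≤ ∫ ξ in (0 : ℝ)..(2 * R), ‖expSum x ξ‖ ^ 2 := by
        refine intervalIntegral.integral_mono_on (by positivity)
          (Continuous.intervalIntegrable (by fun_prop) _ _)
          (Continuous.intervalIntegrable (by fun_prop) _ _) fun ξ hξ => ?_
        have hξ0 : 0 ≤ ξ / (2 * R) := div_nonneg hξ.1 (by positivity)
        exact mul_le_of_le_one_left (sq_nonneg _) (by linarith)

lemma integral_norm_expSum_sq_le_sinc {R : ℝ} (hR : 0 < R) (x : ι → ℝ) :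
    ∫ ξ in (0 : ℝ)..R, ‖expSum x ξ‖ ^ 2 ≤
      2 * (R * ∑ a, ∑ b, Real.sinc (R * (x a - x b)) ^ 2) := by
  have hcont := continuous_expSum x
  have hint : ∀ c d : ℝ, IntervalIntegrable
      (fun ξ => 2 * ((1 - ξ / (2 * R)) * ‖expSum x ξ‖ ^ 2)) volume c d :=
    fun c d => Continuous.intervalIntegrable (by fun_prop) _ _
  calc ∫ ξ in (0 : ℝ)..R, ‖expSum x ξ‖ ^ 2
      ≤ ∫ ξ in (0 : ℝ)..R, 2 * ((1 - ξ / (2 * R)) * ‖expSum x ξ‖ ^ 2) := by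
        refine intervalIntegral.integral_mono_on hR.le
          (Continuous.intervalIntegrable (by fun_prop) _ _) (hint 0 R) fun ξ hξ => ?_
        have hξR : ξ / (2 * R) ≤ 1 / 2 := by
          rw [div_le_div_iff₀ (by positivity) two_pos]
          linarith [hξ.2]
        rw [← mul_assoc]
        exact le_mul_of_one_le_left (sq_nonneg _) (by linarith)
    _ ≤ ∫ ξ in (0 : ℝ)..(2 * R), 2 * ((1 - ξ / (2 * R)) * ‖expSum x ξ‖ ^ 2) := by
        refine intervalIntegral.integral_mono_interval le_rfl hR.le (by linarith) ?_ (hint _ _)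
        filter_upwards [ae_restrict_mem measurableSet_Ioc] with ξ hξ
        have hξR : ξ / (2 * R) ≤ 1 := div_le_one_of_le₀ hξ.2 (by positivity)
        exact mul_nonneg zero_le_two (mul_nonneg (sub_nonneg.2 hξR) (sq_nonneg _))
    _ = 2 * (R * ∑ a, ∑ b, Real.sinc (R * (x a - x b)) ^ 2) := by
        rw [intervalIntegral.integral_const_mul, integral_triangle_mul_norm_expSum_sq hR]

lemma sinc_sq_le {u p : ℝ} (h : |p - u| ≤ 1) : Real.sinc u ^ 2 ≤ 5 * (1 / (1 + p ^ 2)) := by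
  have hp : |p| ≤ |u| + 1 := by linarith [abs_sub_abs_le_abs_sub p u]
  rw [mul_one_div, le_div_iff₀ (by positivity), ← sq_abs p]
  rcases le_total |u| 1 with hu | hu
  · have hsinc : Real.sinc u ^ 2 ≤ 1 := (sq_le_one_iff_abs_le_one _).2 (Real.abs_sinc_le_one u)
    nlinarith [abs_nonneg p, sq_nonneg (Real.sinc u)]
  · have hu0 : u ≠ 0 := abs_pos.1 (by linarith)
    have hp2 : 1 + |p| ^ 2 ≤ 5 * u ^ 2 := by
      rw [← sq_abs u]
      nlinarith [abs_nonneg p]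
    calc Real.sinc u ^ 2 * (1 + |p| ^ 2) ≤ Real.sinc u ^ 2 * (5 * u ^ 2) := by gcongr
      _ = 5 * Real.sin u ^ 2 := by
          rw [Real.sinc_of_ne_zero hu0]
          field_simp
      _ ≤ 5 := by linarith [Real.sin_sq_le_one u]

lemma summable_one_div_one_add_int_sq : Summable fun p : ℤ => 1 / (1 + (p : ℝ) ^ 2) := by
  refine (Real.summable_one_div_int_pow.2 one_lt_two).of_norm_bounded_eventually ?_
  filter_upwards [(Set.finite_singleton (0 : ℤ)).compl_mem_cofinite] with p hp
  have hp0 : (p : ℝ) ≠ 0 := Int.cast_ne_zero.2 hp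
  rw [Real.norm_of_nonneg (by positivity)]
  exact one_div_le_one_div_of_le (by positivity) (by linarith)

lemma tsum_one_div_one_add_int_sq_le : ∑' p : ℤ, 1 / (1 + (p : ℝ) ^ 2) ≤ 5 := by
  have hsum : Summable fun n : ℕ+ => 1 / ((n : ℕ) : ℝ) ^ 2 :=
    hasSum_zeta_two.summable.comp_injective PNat.coe_injective
  have hle : ∀ n : ℕ+, 1 / (1 + (((n : ℕ) : ℤ) : ℝ) ^ 2) ≤ 1 / ((n : ℕ) : ℝ) ^ 2 := fun n => by
    have hn : (0 : ℝ) < (n : ℕ) := Nat.cast_pos.2 n.pos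
    rw [Int.cast_natCast]
    exact one_div_le_one_div_of_le (pow_pos hn 2) (by linarith)
  have hpos : ∑' n : ℕ+, 1 / (1 + (((n : ℕ) : ℤ) : ℝ) ^ 2) ≤ Real.pi ^ 2 / 6 :=
    calc ∑' n : ℕ+, 1 / (1 + (((n : ℕ) : ℤ) : ℝ) ^ 2)
        ≤ ∑' n : ℕ+, 1 / ((n : ℕ) : ℝ) ^ 2 :=
          (hsum.of_nonneg_of_le (fun n => by positivity) hle).tsum_le_tsum hle hsum
      _ ≤ ∑' n : ℕ, 1 / (n : ℝ) ^ 2 :=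
          tsum_comp_le_tsum_of_inj hasSum_zeta_two.summable (fun n => by positivity)
            PNat.coe_injective
      _ = Real.pi ^ 2 / 6 := hasSum_zeta_two.tsum_eq
  have hpi : Real.pi ^ 2 ≤ 3.15 ^ 2 := by
    gcongr
    exact Real.pi_lt_d2.le
  rw [tsum_int_eq_zero_add_two_mul_tsum_pnat (fun p => by simp) summable_one_div_one_add_int_sq]
  norm_num at hpos hpi ⊢
  linarith

section Correlation

variable {G : Type*} [AddCommGroup G] [DecidableEq G]

-- By AM-GM, the autocorrelation of the fibre sizes of `f` is largest at `0`.
lemma card_pairs_sub_eq_le (f : ι → G) (g : G) :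
    Finset.card {p : ι × ι | f p.1 - f p.2 = g} ≤ Finset.card {p : ι × ι | f p.1 = f p.2} := by
  set c : G → ℕ := fun i => Finset.card {a | f a = i}
  set T := Finset.univ.image f
  have hcount : ∀ g, Finset.card {p : ι × ι | f p.1 - f p.2 = g} = ∑ i ∈ T, c i * c (g + i) := by
    intro g
    rw [Finset.card_filter, Fintype.sum_prod_type_right]
    simp only [sub_eq_iff_eq_add, ← Finset.card_filter]
    exact Finset.sum_comp (fun i => c (g + i)) f
  have hshift : ∑ i ∈ T, c (g + i) ^ 2 ≤ ∑ i ∈ T, c i ^ 2 := by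
    refine (Finset.sum_map T (addLeftEmbedding g) fun i => c i ^ 2).symm.trans_le
      (Finset.sum_le_sum_of_ne_zero fun i _ hi => ?_)
    obtain ⟨a, ha⟩ := Finset.card_ne_zero.1 (pow_ne_zero_iff two_ne_zero |>.1 hi)
    exact Finset.mem_image.2 ⟨a, Finset.mem_univ a, (Finset.mem_filter.1 ha).2⟩
  have hamgm : 2 * ∑ i ∈ T, c i * c (g + i) ≤ ∑ i ∈ T, c i ^ 2 + ∑ i ∈ T, c (g + i) ^ 2 := by
    rw [Finset.mul_sum, ← Finset.sum_add_distrib]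
    exact Finset.sum_le_sum fun i _ => by
      rw [← mul_assoc]
      exact two_mul_le_add_sq _ _
  have hzero : Finset.card {p : ι × ι | f p.1 = f p.2} = ∑ i ∈ T, c i ^ 2 := by
    simpa only [sub_eq_zero, zero_add, ← sq] using hcount 0
  rw [hcount, hzero]
  lia

lemma sum_sum_sub_le {w : G → ℝ} (hw : ∀ g, 0 ≤ w g) (hsum : Summable w) (f : ι → G) :
    ∑ a, ∑ b, w (f a - f b) ≤ (∑' g, w g) * Finset.card {p : ι × ι | f p.1 = f p.2} := by
  rw [← Fintype.sum_prod_type', Finset.sum_comp w fun p : ι × ι => f p.1 - f p.2]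
  calc ∑ g ∈ Finset.univ.image fun p : ι × ι => f p.1 - f p.2,
        Finset.card {p : ι × ι | f p.1 - f p.2 = g} • w g
      ≤ ∑ g ∈ Finset.univ.image fun p : ι × ι => f p.1 - f p.2,
        w g * Finset.card {p : ι × ι | f p.1 = f p.2} := by
        refine Finset.sum_le_sum fun g _ => ?_
        rw [nsmul_eq_mul, mul_comm]
        exact mul_le_mul_of_nonneg_left (Nat.cast_le.2 (card_pairs_sub_eq_le f g)) (hw g)
    _ ≤ (∑' g, w g) * Finset.card {p : ι × ι | f p.1 = f p.2} := by
        rw [← Finset.sum_mul]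
        gcongr
        exact hsum.sum_le_tsum _ fun g _ => hw g

end Correlation

lemma lintegral_overlapCount_sq {R : ℝ} (hR : 0 < R) (x : ι → ℝ) :
    ∫⁻ s, (overlapCount R x s : ℝ≥0∞) ^ 2 = ∑ p : ι × ι,
      volume (Metric.closedBall (x p.1) (1 / R) ∩ Metric.closedBall (x p.2) (1 / R)) := by
  have hball : ∀ a, MeasurableSet (Metric.closedBall (x a) (1 / R)) :=
    fun a => Metric.isClosed_closedBall.measurableSet
  simp only [overlapCount_eq_sum_indicator hR, sq, Finset.sum_mul_sum, ← Fintype.sum_prod_type',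
    ← Set.inter_indicator_mul, Pi.one_apply, mul_one]
  rw [lintegral_finsetSum _ fun p _ => measurable_const.indicator ((hball _).inter (hball _))]
  refine Finset.sum_congr rfl fun p _ => ?_
  rw [lintegral_indicator_const ((hball _).inter (hball _)), one_mul]

lemma card_pairs_floor_eq_le {R : ℝ} (hR : 0 < R) (x : ι → ℝ) :
    Finset.card {p : ι × ι | ⌊R * x p.1⌋ = ⌊R * x p.2⌋} * ENNReal.ofReal (1 / R) ≤
      ∫⁻ s, (overlapCount R x s : ℝ≥0∞) ^ 2 := by
  rw [lintegral_overlapCount_sq hR, ← nsmul_eq_mul]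
  refine (Finset.card_nsmul_le_sum _ _ _ fun p hp => ?_).trans
    (Finset.sum_le_sum_of_subset (Finset.filter_subset _ _))
  have hnear : |x p.1 - x p.2| ≤ 1 / R := by
    have hlt := Int.abs_sub_lt_one_of_floor_eq_floor (Finset.mem_filter.1 hp).2
    rw [← mul_sub, abs_mul, abs_of_pos hR] at hlt
    exact (le_div_iff₀' hR).2 hlt.le
  obtain ⟨h₁, h₂⟩ := abs_le.1 hnear
  have hmid : Metric.closedBall ((x p.1 + x p.2) / 2) (1 / R / 2) ⊆
      Metric.closedBall (x p.1) (1 / R) ∩ Metric.closedBall (x p.2) (1 / R) := by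
    refine Set.subset_inter (Metric.closedBall_subset_closedBall' ?_)
      (Metric.closedBall_subset_closedBall' ?_) <;>
    · rw [Real.dist_eq, ← le_sub_iff_add_le', abs_le]
      constructor <;> linarith
  calc ENNReal.ofReal (1 / R) = volume (Metric.closedBall ((x p.1 + x p.2) / 2) (1 / R / 2)) := by
        rw [Real.volume_closedBall]
        congr 1
        ring
    _ ≤ _ := measure_mono hmid

theorem integral_norm_expSum_sq_le {R : ℝ} (hR : 0 < R) (x : ι → ℝ) {B : ℝ} (hB0 : 0 ≤ B)
    (hB : ∫⁻ s, (overlapCount R x s : ℝ≥0∞) ^ 2 ≤ ENNReal.ofReal B) :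
    ∫ ξ in (0 : ℝ)..R, ‖expSum x ξ‖ ^ 2 ≤ 50 * R ^ 2 * B := by
  set E := Finset.card {p : ι × ι | ⌊R * x p.1⌋ = ⌊R * x p.2⌋} with hE
  have hEB : (E : ℝ) ≤ R * B := by
    have h := (card_pairs_floor_eq_le hR x).trans hB
    rw [← ENNReal.ofReal_natCast, ← ENNReal.ofReal_mul (by positivity),
      ENNReal.ofReal_le_ofReal_iff hB0, mul_one_div, div_le_iff₀' hR] at h
    exact h
  have hsinc : ∀ a b, Real.sinc (R * (x a - x b)) ^ 2 ≤
      5 * (1 / (1 + ((⌊R * x a⌋ - ⌊R * x b⌋ : ℤ) : ℝ) ^ 2)) := by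
    intro a b
    refine sinc_sq_le ?_
    push_cast
    rw [abs_le]
    constructor <;> linarith [Int.floor_le (R * x a), Int.floor_le (R * x b),
      Int.lt_floor_add_one (R * x a), Int.lt_floor_add_one (R * x b)]
  calc ∫ ξ in (0 : ℝ)..R, ‖expSum x ξ‖ ^ 2
      ≤ 2 * (R * ∑ a, ∑ b, Real.sinc (R * (x a - x b)) ^ 2) :=
        integral_norm_expSum_sq_le_sinc hR x
    _ ≤ 2 * (R * ∑ a, ∑ b, 5 * (1 / (1 + ((⌊R * x a⌋ - ⌊R * x b⌋ : ℤ) : ℝ) ^ 2))) := by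
        gcongr
        exact hsinc _ _
    _ = 10 * R * ∑ a, ∑ b, 1 / (1 + ((⌊R * x a⌋ - ⌊R * x b⌋ : ℤ) : ℝ) ^ 2) := by
        simp only [← Finset.mul_sum]
        ring
    _ ≤ 10 * R * ((∑' p : ℤ, 1 / (1 + (p : ℝ) ^ 2)) * E) := by
        gcongr
        exact sum_sum_sub_le (fun p => by positivity) summable_one_div_one_add_int_sq
          fun a => ⌊R * x a⌋
    _ ≤ 10 * R * (5 * (R * B)) := by
        gcongr
        exact tsum_one_div_one_add_int_sq_le
    _ = 50 * R ^ 2 * B := by ring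

end ExpSum

/-! ### The characteristic functions of the approximations -/

/-- The characteristic function `φ_t` of the uniform distribution on the weights `0, t, 1`. -/
noncomputable def digitCharFun (t y : ℝ) : ℂ := expSum (wgt t) y / 3

/-- The characteristic function `P_n` of the uniform distribution on the digit strings of
length `n`, in product form: the digits are independent. -/
noncomputable def approxCharFun (t : ℝ) (n : ℕ) (ξ : ℝ) : ℂ :=
  ∏ k ∈ Finset.range n, digitCharFun t (ξ / 3 ^ (k + 1))

lemma digitCharFun_eq (t y : ℝ) : digitCharFun t y =
    (1 + Complex.exp ((t * y : ℝ) * Complex.I) + Complex.exp (y * Complex.I)) / 3 := by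
  simp [digitCharFun, expSum, wgt, Fin.sum_univ_three, mul_comm]

lemma continuous_approxCharFun (t : ℝ) (n : ℕ) : Continuous (approxCharFun t n) :=
  continuous_finsetProd _ fun _ _ =>
    ((continuous_expSum _).comp (continuous_id.div_const _)).div_const _

lemma approxCharFun_eq_expSum (t : ℝ) (n : ℕ) (ξ : ℝ) :
    approxCharFun t n ξ = expSum (digitSum t (n := n)) ξ / 3 ^ n := by
  rw [approxCharFun, ← Fin.prod_univ_eq_prod_range fun k => digitCharFun t (ξ / 3 ^ (k + 1))]
  simp only [digitCharFun, expSum]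
  rw [Finset.prod_div_distrib, Finset.prod_univ_sum, Fintype.piFinset_univ, Finset.prod_const,
    Finset.card_univ, Fintype.card_fin]
  congr! 2 with a
  rw [← Complex.exp_sum, ← Finset.sum_mul, ← Complex.ofReal_sum, digitSum, Finset.mul_sum]
  congr! 4 with k
  rw [← Nat.cast_add_one, zpow_neg, zpow_natCast]
  ring

lemma norm_approxCharFun_sq (t : ℝ) (n : ℕ) (ξ : ℝ) :
    ‖approxCharFun t n ξ‖ ^ 2 = ‖expSum (digitSum t (n := n)) ξ‖ ^ 2 / (3 ^ n) ^ 2 := by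
  rw [approxCharFun_eq_expSum, norm_div, div_pow, norm_pow, RCLike.norm_ofNat]

lemma le_integral_norm_approxCharFun_sq (t : ℝ) (n : ℕ) {R : ℝ} (hR : 0 < R) :
    R / (2 * 3 ^ n) ≤ ∫ ξ in (0 : ℝ)..R, ‖approxCharFun t n ξ‖ ^ 2 := by
  have h := card_mul_le_integral_norm_expSum_sq (half_pos hR) (digitSum t (n := n))
  simp only [norm_approxCharFun_sq, intervalIntegral.integral_div]
  rw [mul_div_cancel₀ R two_ne_zero, Fintype.card_fun, Fintype.card_fin, Fintype.card_fin] at h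
  push_cast at h
  rw [le_div_iff₀ (by positivity)]
  refine le_trans (le_of_eq ?_) h
  field_simp

lemma integral_norm_approxCharFun_sq_le {t : ℝ} {n : ℕ} {B : ℝ} (hB0 : 0 ≤ B)
    (hB : ∫⁻ s, (multFn t n s : ℝ≥0∞) ^ 2 ≤ ENNReal.ofReal B) :
    ∫ ξ in (0 : ℝ)..3 ^ n, ‖approxCharFun t n ξ‖ ^ 2 ≤ 50 * B := by
  simp only [multFn_eq_overlapCount] at hB
  simp only [norm_approxCharFun_sq, intervalIntegral.integral_div]
  rw [div_le_iff₀ (by positivity)]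
  exact (integral_norm_expSum_sq_le (by positivity) _ hB0 hB).trans_eq (by ring)

lemma approxCharFun_add (t : ℝ) (n r : ℕ) (ξ : ℝ) :
    approxCharFun t (n + r) ξ = approxCharFun t n ξ * approxCharFun t r (ξ / 3 ^ n) := by
  simp only [approxCharFun, Finset.prod_range_add, div_div, ← pow_add, add_assoc]

lemma approxCharFun_eq_prod_pow_mul (t : ℝ) (m : ℕ) (ξ : ℝ) :
    approxCharFun t m ξ = ∏ j ∈ Finset.range m, digitCharFun t (3 ^ j * (ξ / 3 ^ m)) := by
  rw [approxCharFun, ← Finset.prod_range_reflect]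
  refine Finset.prod_congr rfl fun j hj => ?_
  obtain ⟨d, rfl⟩ := Nat.exists_eq_add_of_lt (Finset.mem_range.1 hj)
  rw [show j + d + 1 - 1 - j + 1 = d + 1 by lia, add_assoc, pow_add 3 j]
  field_simp

/-! ### Decay of `φ_t` along triadic orbits -/

lemma norm_pow_sub_one_le {A : Type*} [NormedRing A] [NormOneClass A] {z : A} (hz : ‖z‖ ≤ 1)
    (k : ℕ) : ‖z ^ k - 1‖ ≤ k * ‖z - 1‖ := by
  rw [← geom_sum_mul]
  refine (norm_mul_le _ _).trans (mul_le_mul_of_nonneg_right ?_ (norm_nonneg _))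
  calc ‖∑ i ∈ Finset.range k, z ^ i‖ ≤ ∑ i ∈ Finset.range k, ‖z ^ i‖ := norm_sum_le _ _
    _ ≤ ∑ _i ∈ Finset.range k, (1 : ℝ) := Finset.sum_le_sum fun i _ =>
        (norm_pow_le z i).trans (pow_le_one₀ (norm_nonneg z) hz)
    _ = k := by simp

-- Three unit vectors summing to zero are the vertices of an equilateral triangle; `u² + u + 1`
-- equals `u (‖1 + u‖² - 1)`, and `‖1 + u‖` is close to `‖-v‖ = 1`.
lemma norm_cube_sub_one_le {u v : ℂ} (hu : ‖u‖ = 1) (hv : ‖v‖ = 1) :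
    ‖u ^ 3 - 1‖ ≤ 6 * ‖1 + u + v‖ := by
  have hconj : u * (starRingEnd ℂ) u = 1 := by simp [Complex.mul_conj', hu]
  have hsq : (1 + u) * (1 + (starRingEnd ℂ) u) = (‖1 + u‖ : ℂ) ^ 2 := by
    simpa using Complex.mul_conj' (1 + u)
  have hfactor : u ^ 3 - 1 = (u - 1) * (u * ((‖1 + u‖ - 1) * (‖1 + u‖ + 1) : ℝ)) := by
    push_cast
    linear_combination (u - 1) * u * hsq - (u - 1) * (u + 1) * hconj
  have hadd : ‖1 + u‖ ≤ 2 := (norm_add_le _ _).trans (by norm_num [hu])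
  have hsub : ‖u - 1‖ ≤ 2 := (norm_sub_le _ _).trans (by norm_num [hu])
  have hclose : |‖1 + u‖ - 1| ≤ ‖1 + u + v‖ := by
    simpa [hv] using abs_norm_sub_norm_le (1 + u) (-v)
  calc ‖u ^ 3 - 1‖ = ‖u - 1‖ * (|‖1 + u‖ - 1| * (‖1 + u‖ + 1)) := by
        rw [hfactor, norm_mul, norm_mul, hu, one_mul, Complex.norm_real, Real.norm_eq_abs, abs_mul,
          abs_of_nonneg (add_nonneg (norm_nonneg _) zero_le_one)]
    _ ≤ 2 * (‖1 + u + v‖ * 3) := by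
        gcongr
        linarith
    _ = 6 * ‖1 + u + v‖ := by ring

lemma norm_one_add_exp_add_exp (t y : ℝ) :
    ‖1 + Complex.exp ((t * y : ℝ) * Complex.I) + Complex.exp (y * Complex.I)‖ =
      3 * ‖digitCharFun t y‖ := by
  rw [digitCharFun_eq, norm_div, RCLike.norm_ofNat]
  field_simp

lemma norm_exp_pow_sub_one_le {x δ : ℝ} (h : ‖Complex.exp (x * Complex.I) ^ 3 - 1‖ ≤ δ) (i : ℕ) :
    ‖Complex.exp ((3 ^ (i + 1) * x : ℝ) * Complex.I) - 1‖ ≤ 3 ^ i * δ := by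
  have hexp : Complex.exp ((3 ^ (i + 1) * x : ℝ) * Complex.I) =
      (Complex.exp (x * Complex.I) ^ 3) ^ 3 ^ i := by
    rw [← pow_mul, ← Complex.exp_nat_mul]
    congr 1
    push_cast
    ring
  have hunit : ‖Complex.exp (x * Complex.I) ^ 3‖ ≤ 1 := by
    rw [norm_pow, Complex.norm_exp_ofReal_mul_I, one_pow]
  rw [hexp]
  refine (norm_pow_sub_one_le hunit _).trans ?_
  push_cast
  gcongr

lemma norm_exp_cube_sub_one_le (t y : ℝ) :
    ‖Complex.exp ((t * y : ℝ) * Complex.I) ^ 3 - 1‖ ≤ 18 * ‖digitCharFun t y‖ ∧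
      ‖Complex.exp (y * Complex.I) ^ 3 - 1‖ ≤ 18 * ‖digitCharFun t y‖ := by
  have hsum := norm_one_add_exp_add_exp t y
  have hu := norm_cube_sub_one_le (Complex.norm_exp_ofReal_mul_I (t * y))
    (Complex.norm_exp_ofReal_mul_I y)
  have hv := norm_cube_sub_one_le (Complex.norm_exp_ofReal_mul_I y)
    (Complex.norm_exp_ofReal_mul_I (t * y))
  rw [add_right_comm] at hv
  constructor <;> linarith

lemma one_sub_le_norm_digitCharFun (t y : ℝ) (i : ℕ) :
    1 - 4 * 3 ^ (i + 1) * ‖digitCharFun t y‖ ≤ ‖digitCharFun t (3 ^ (i + 1) * y)‖ := by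
  obtain ⟨hu, hv⟩ := norm_exp_cube_sub_one_le t y
  have hone : 1 - digitCharFun t (3 ^ (i + 1) * y) =
      -((Complex.exp ((3 ^ (i + 1) * (t * y) : ℝ) * Complex.I) - 1) +
        (Complex.exp ((3 ^ (i + 1) * y : ℝ) * Complex.I) - 1)) / 3 := by
    rw [digitCharFun_eq, mul_left_comm t]
    ring
  have hnear : ‖1 - digitCharFun t (3 ^ (i + 1) * y)‖ ≤ 4 * 3 ^ (i + 1) * ‖digitCharFun t y‖ := by
    rw [hone, norm_div, norm_neg, RCLike.norm_ofNat, div_le_iff₀ three_pos]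
    refine (norm_add_le_of_le (norm_exp_pow_sub_one_le hu i)
      (norm_exp_pow_sub_one_le hv i)).trans_eq ?_
    ring
  have htri := norm_sub_norm_le 1 (digitCharFun t (3 ^ (i + 1) * y))
  rw [norm_one] at htri
  linarith

lemma one_sub_sum_le_prod_one_sub {x : ℕ → ℝ} {n : ℕ} (h0 : ∀ i < n, 0 ≤ x i)
    (h1 : ∀ i < n, x i ≤ 1) :
    1 - ∑ i ∈ Finset.range n, x i ≤ ∏ i ∈ Finset.range n, (1 - x i) := by
  induction n with
  | zero => simp
  | succ n ih =>
    have ih' := ih (fun i hi => h0 i (by lia)) fun i hi => h1 i (by lia)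
    have hsum : 0 ≤ ∑ i ∈ Finset.range n, x i :=
      Finset.sum_nonneg fun i hi => h0 i (Nat.lt_succ_of_lt (Finset.mem_range.1 hi))
    rw [Finset.sum_range_succ, Finset.prod_range_succ]
    nlinarith [h0 n n.lt_succ_self, h1 n n.lt_succ_self]

section Orbit

variable {a : ℕ → ℝ}

lemma half_le_prod (ha : ∀ i, 0 ≤ a i) (hjump : ∀ i, 1 - 4 * 3 ^ (i + 1) * a 0 ≤ a (i + 1))
    {r : ℕ} (hr : 12 * 3 ^ r * a 0 ≤ 1) : a 0 / 2 ≤ ∏ i ∈ Finset.range (r + 1), a i := by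
  have hgeom : ∀ r, ∑ i ∈ Finset.range r, 4 * 3 ^ (i + 1) * a 0 = (6 * 3 ^ r - 6) * a 0 := by
    intro r
    induction r with
    | zero => simp
    | succ r ih =>
      rw [Finset.sum_range_succ, ih]
      ring
  have hle : ∀ i < r, 4 * 3 ^ (i + 1) * a 0 ≤ 1 := fun i hi => by
    refine le_trans ?_ hr
    have hpow : (3 : ℝ) ^ (i + 1) ≤ 3 ^ r := pow_le_pow_right₀ (by norm_num) hi
    gcongr
    · exact ha 0
    · norm_num
  rw [Finset.prod_range_succ', mul_comm, div_eq_mul_one_div]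
  refine mul_le_mul_of_nonneg_left ?_ (ha 0)
  calc (1 : ℝ) / 2 ≤ 1 - ∑ i ∈ Finset.range r, 4 * 3 ^ (i + 1) * a 0 := by
        rw [hgeom]
        linarith [ha 0]
    _ ≤ ∏ i ∈ Finset.range r, (1 - 4 * 3 ^ (i + 1) * a 0) :=
        one_sub_sum_le_prod_one_sub (fun i _ => mul_nonneg (by positivity) (ha 0)) hle
    _ ≤ ∏ i ∈ Finset.range r, a (i + 1) :=
        Finset.prod_le_prod (fun i hi => sub_nonneg.2 (hle i (Finset.mem_range.1 hi)))
          fun i _ => hjump i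

-- The block ends when `3 ^ r` reaches `1 / a 0`, so that a loss of `a 0` costs only a factor
-- `1 / 81` per step.
lemma exists_pow_le_prod (ha : ∀ i, 0 ≤ a i) (ha0 : 0 < a 0)
    (hjump : ∀ i, 1 - 4 * 3 ^ (i + 1) * a 0 ≤ a (i + 1)) :
    ∃ r, (1 / 81 : ℝ) ^ (r + 1) ≤ ∏ i ∈ Finset.range (r + 1), a i ∧
      ∀ d ≤ r, a 0 / 2 ≤ ∏ i ∈ Finset.range (d + 1), a i := by
  rcases lt_or_ge 1 (12 * a 0) with hbig | hsmall
  · refine ⟨0, by norm_num; linarith, fun d hd => ?_⟩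
    obtain rfl := Nat.le_zero.1 hd
    norm_num
    linarith
  obtain ⟨r, hr, hr'⟩ := exists_nat_pow_near (x := 1 / (12 * a 0)) (y := (3 : ℝ))
    (by rwa [one_le_div (by positivity)]) (by norm_num)
  rw [le_div_iff₀ (by positivity)] at hr
  rw [div_lt_iff₀ (by positivity)] at hr'
  have hhalf : ∀ d ≤ r, a 0 / 2 ≤ ∏ i ∈ Finset.range (d + 1), a i := fun d hd => by
    have hpow : (3 : ℝ) ^ d ≤ 3 ^ r := pow_le_pow_right₀ (by norm_num) hd
    refine half_le_prod ha hjump (le_trans ?_ hr)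
    nlinarith
  refine ⟨r, le_trans ?_ (hhalf r le_rfl), hhalf⟩
  have h27 : (27 : ℝ) ≤ 27 ^ (r + 1) := le_self_pow₀ (by norm_num) r.succ_ne_zero
  rw [one_div, inv_pow, inv_le_iff_one_le_mul₀ (by positivity)]
  calc (1 : ℝ) ≤ a 0 / 2 * (27 * 3 ^ (r + 1)) := by linarith
    _ ≤ a 0 / 2 * (27 ^ (r + 1) * 3 ^ (r + 1)) := by gcongr
    _ = a 0 / 2 * 81 ^ (r + 1) := by
        rw [← mul_pow]
        norm_num

lemma half_mul_pow_le_prod (ha : ∀ i, 0 ≤ a i)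
    (hjump : ∀ j i, 1 - 4 * 3 ^ (i + 1) * a j ≤ a (j + (i + 1))) {δ : ℝ} (hδ : 0 < δ)
    (hδ1 : δ ≤ 1) {m : ℕ} (hm : ∀ j < m, δ ≤ a j) :
    δ / 2 * (1 / 81) ^ m ≤ ∏ j ∈ Finset.range m, a j := by
  induction m using Nat.strong_induction_on generalizing a with
  | _ m ih =>
  rcases Nat.eq_zero_or_pos m with rfl | hpos
  · norm_num
    linarith
  obtain ⟨r, hblock, hhalf⟩ := exists_pow_le_prod ha (hδ.trans_le (hm 0 hpos)) fun i => by
    simpa only [zero_add] using hjump 0 i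
  rcases le_or_gt (r + 1) m with hrm | hrm
  · obtain ⟨d, rfl⟩ := Nat.exists_eq_add_of_le hrm
    have hrest : δ / 2 * (1 / 81) ^ d ≤ ∏ j ∈ Finset.range d, a (r + 1 + j) :=
      ih d (by lia) (fun i => ha _) (fun j i => by simpa only [add_assoc] using hjump (r + 1 + j) i)
        fun j hj => hm _ (by lia)
    rw [Finset.prod_range_add, pow_add, mul_left_comm]
    gcongr
    exact Finset.prod_nonneg fun i _ => ha i
  · obtain ⟨d, rfl⟩ := Nat.exists_eq_succ_of_ne_zero hpos.ne'
    calc δ / 2 * (1 / 81) ^ (d + 1) ≤ δ / 2 * 1 := by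
          gcongr
          exact pow_le_one₀ (by norm_num) (by norm_num)
      _ ≤ a 0 / 2 := by linarith [hm 0 hpos]
      _ ≤ ∏ j ∈ Finset.range (d + 1), a j := hhalf d (by lia)

end Orbit

section Direction

variable {t : ℝ}

lemma one_sub_sq_div_three_le_norm_digitCharFun (ht : t ∈ Set.Icc (0 : ℝ) 1) (y : ℝ) :
    1 - y ^ 2 / 3 ≤ ‖digitCharFun t y‖ := by
  have hre : (digitCharFun t y).re = (1 + Real.cos (t * y) + Real.cos y) / 3 := by
    rw [digitCharFun_eq, Complex.div_ofNat_re, Complex.add_re, Complex.add_re,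
      Complex.exp_ofReal_mul_I_re, Complex.exp_ofReal_mul_I_re, Complex.one_re]
  have hty : (t * y) ^ 2 ≤ y ^ 2 := by
    rw [mul_pow]
    exact mul_le_of_le_one_left (sq_nonneg y) (pow_le_one₀ ht.1 ht.2)
  linarith [Complex.re_le_norm (digitCharFun t y), Real.one_sub_sq_div_two_le_cos (x := y),
    Real.one_sub_sq_div_two_le_cos (x := t * y)]

lemma half_le_norm_approxCharFun (ht : t ∈ Set.Icc (0 : ℝ) 1) (r : ℕ) {y : ℝ} (hy : |y| ≤ 1) :
    1 / 2 ≤ ‖approxCharFun t r y‖ := by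
  have hfactor : ∀ k : ℕ, 1 - 1 / 3 ^ (k + 1) / 3 ≤ ‖digitCharFun t (y / 3 ^ (k + 1))‖ := by
    intro k
    have hpow : (1 : ℝ) ≤ 3 ^ (k + 1) := one_le_pow₀ (by norm_num)
    refine le_trans ?_ (one_sub_sq_div_three_le_norm_digitCharFun ht _)
    rw [div_pow]
    gcongr 1 - ?_ / 3
    exact div_le_div₀ zero_le_one ((sq_le_one_iff_abs_le_one y).2 hy) (by positivity)
      (le_self_pow₀ hpow two_ne_zero)
  have hgeom : ∀ r : ℕ, ∑ k ∈ Finset.range r, (1 : ℝ) / 3 ^ (k + 1) / 3 = (1 - 1 / 3 ^ r) / 6 := by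
    intro r
    induction r with
    | zero => simp
    | succ r ih =>
      rw [Finset.sum_range_succ, ih]
      field_simp
      ring
  have hle : ∀ k : ℕ, (1 : ℝ) / 3 ^ (k + 1) / 3 ≤ 1 := fun k => by
    rw [div_div]
    exact div_le_one_of_le₀ (by nlinarith [one_le_pow₀ (n := k + 1) (by norm_num : (1 : ℝ) ≤ 3)])
      (by positivity)
  have hpos : (0 : ℝ) < 1 / 3 ^ r := by positivity
  calc (1 : ℝ) / 2 ≤ 1 - ∑ k ∈ Finset.range r, (1 : ℝ) / 3 ^ (k + 1) / 3 := by
        rw [hgeom]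
        linarith
    _ ≤ ∏ k ∈ Finset.range r, (1 - (1 : ℝ) / 3 ^ (k + 1) / 3) :=
        one_sub_sum_le_prod_one_sub (fun k _ => by positivity) fun k _ => hle k
    _ ≤ ∏ k ∈ Finset.range r, ‖digitCharFun t (y / 3 ^ (k + 1))‖ :=
        Finset.prod_le_prod (fun k _ => sub_nonneg.2 (hle k)) fun k _ => hfactor k
    _ = ‖approxCharFun t r y‖ := (norm_prod _ _).symm

/-- Directions for which `φ_t` is not extremely small on `[0, 3 ^ m]`. -/
def IsGoodDirection (t : ℝ) (m : ℕ) : Prop :=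
  ∀ y : ℝ, 0 ≤ y → y ≤ 3 ^ m → (1 / 81) ^ m ≤ ‖digitCharFun t y‖

lemma IsGoodDirection.le_norm_approxCharFun {m : ℕ} (hgood : IsGoodDirection t m) {y : ℝ}
    (hy0 : 0 ≤ y) (hy : y ≤ 3 ^ m) : (1 / 81) ^ (2 * m) / 2 ≤ ‖approxCharFun t m y‖ := by
  set x := y / 3 ^ m
  have hx0 : 0 ≤ x := by positivity
  have hx1 : x ≤ 1 := div_le_one_of_le₀ hy (by positivity)
  rw [approxCharFun_eq_prod_pow_mul, norm_prod]
  refine le_of_eq_of_le ?_ (half_mul_pow_le_prod (δ := (1 / 81) ^ m) (fun j => norm_nonneg _)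
    (fun j i => ?_) (by positivity) (pow_le_one₀ (by norm_num) (by norm_num)) fun j hj => ?_)
  · ring
  · rw [add_comm j, pow_add 3 (i + 1), mul_assoc (3 ^ (i + 1) : ℝ)]
    exact one_sub_le_norm_digitCharFun t (3 ^ j * x) i
  · refine hgood _ (mul_nonneg (by positivity) hx0) ?_
    calc 3 ^ j * x ≤ 3 ^ m * 1 := by
          gcongr
          norm_num
      _ = 3 ^ m := mul_one _

lemma IsGoodDirection.norm_approxCharFun_mul_le (ht : t ∈ Set.Icc (0 : ℝ) 1) {m : ℕ}
    (hgood : IsGoodDirection t m) {l N : ℕ} (hN : l + m ≤ N) {ξ : ℝ} (hξ0 : 0 ≤ ξ)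
    (hξ : ξ ≤ 3 ^ (l + m)) :
    ‖approxCharFun t l ξ‖ * ((1 / 81) ^ (2 * m) / 4) ≤ ‖approxCharFun t N ξ‖ := by
  obtain ⟨r, rfl⟩ := Nat.exists_eq_add_of_le hN
  have hmid : (1 / 81) ^ (2 * m) / 2 ≤ ‖approxCharFun t m (ξ / 3 ^ l)‖ := by
    refine hgood.le_norm_approxCharFun (by positivity) ?_
    rwa [div_le_iff₀' (by positivity), ← pow_add]
  have htail : 1 / 2 ≤ ‖approxCharFun t r (ξ / 3 ^ (l + m))‖ := by
    refine half_le_norm_approxCharFun ht r ?_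
    rw [abs_of_nonneg (by positivity)]
    exact div_le_one_of_le₀ hξ (by positivity)
  rw [approxCharFun_add, approxCharFun_add, norm_mul, norm_mul]
  calc ‖approxCharFun t l ξ‖ * ((1 / 81) ^ (2 * m) / 4)
      = ‖approxCharFun t l ξ‖ * ((1 / 81) ^ (2 * m) / 2) * (1 / 2) := by ring
    _ ≤ _ := by gcongr

lemma IsGoodDirection.le_integral_block (ht : t ∈ Set.Icc (0 : ℝ) 1) {m : ℕ}
    (hgood : IsGoodDirection t m) {l N : ℕ} (hN : l + m ≤ N) {D : ℝ}
    (hD : ∫ ξ in (0 : ℝ)..3 ^ l, ‖approxCharFun t l ξ‖ ^ 2 ≤ D) (hm : 2 * D + 2 ≤ 3 ^ m) :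
    (1 / 81) ^ (4 * m) / 16 ≤
      ∫ ξ in (3 ^ l : ℝ)..3 ^ (l + m), ‖approxCharFun t N ξ‖ ^ 2 := by
  have hint : ∀ (n : ℕ) (b c : ℝ), IntervalIntegrable (fun ξ => ‖approxCharFun t n ξ‖ ^ 2)
      volume b c := fun n b c => ((continuous_approxCharFun t n).norm.pow 2).intervalIntegrable b c
  have hmass : 1 ≤ ∫ ξ in (3 ^ l : ℝ)..3 ^ (l + m), ‖approxCharFun t l ξ‖ ^ 2 := by
    have hsplit := intervalIntegral.integral_add_adjacent_intervals
      (hint l 0 (3 ^ l)) (hint l (3 ^ l) (3 ^ (l + m)))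
    have htotal := le_integral_norm_approxCharFun_sq t l (R := 3 ^ (l + m)) (by positivity)
    have hratio : (3 : ℝ) ^ (l + m) / (2 * 3 ^ l) = 3 ^ m / 2 := by
      rw [pow_add]
      field_simp
    linarith
  calc (1 / 81 : ℝ) ^ (4 * m) / 16
      ≤ (1 / 81) ^ (4 * m) / 16 * ∫ ξ in (3 ^ l : ℝ)..3 ^ (l + m), ‖approxCharFun t l ξ‖ ^ 2 :=
        le_mul_of_one_le_right (by positivity) hmass
    _ = ∫ ξ in (3 ^ l : ℝ)..3 ^ (l + m), (1 / 81) ^ (4 * m) / 16 * ‖approxCharFun t l ξ‖ ^ 2 :=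
        (intervalIntegral.integral_const_mul _ _).symm
    _ ≤ ∫ ξ in (3 ^ l : ℝ)..3 ^ (l + m), ‖approxCharFun t N ξ‖ ^ 2 := by
        refine intervalIntegral.integral_mono_on (pow_le_pow_right₀ (by norm_num) (by lia))
          ((hint l _ _).const_mul _) (hint N _ _) fun ξ hξ => ?_
        have hle := hgood.norm_approxCharFun_mul_le ht hN (le_trans (by positivity) hξ.1) hξ.2
        refine le_of_eq_of_le ?_ (pow_le_pow_left₀ (by positivity) hle 2)
        ring

theorem IsGoodDirection.mul_pow_le_of_integral_le (ht : t ∈ Set.Icc (0 : ℝ) 1) {m : ℕ}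
    (hgood : IsGoodDirection t m) {N M : ℕ} (hMN : M * m ≤ N) {D : ℝ}
    (hD : ∀ n ≤ N, ∫ ξ in (0 : ℝ)..3 ^ n, ‖approxCharFun t n ξ‖ ^ 2 ≤ D)
    (hm : 2 * D + 2 ≤ 3 ^ m) : M * ((1 / 81) ^ (4 * m) / 16) ≤ D := by
  have hint : ∀ b c : ℝ, IntervalIntegrable (fun ξ => ‖approxCharFun t N ξ‖ ^ 2) volume b c :=
    fun b c => ((continuous_approxCharFun t N).norm.pow 2).intervalIntegrable b c
  have hblock : ∀ i ∈ Finset.range M, (1 / 81) ^ (4 * m) / 16 ≤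
      ∫ ξ in (3 ^ (i * m) : ℝ)..3 ^ ((i + 1) * m), ‖approxCharFun t N ξ‖ ^ 2 := by
    intro i hi
    have hiN : (i + 1) * m ≤ N := (Nat.mul_le_mul_right m (Finset.mem_range.1 hi)).trans hMN
    rw [Nat.succ_mul i] at hiN ⊢
    exact hgood.le_integral_block ht hiN (hD _ (by lia)) hm
  calc M * ((1 / 81 : ℝ) ^ (4 * m) / 16)
      = ∑ _i ∈ Finset.range M, (1 / 81 : ℝ) ^ (4 * m) / 16 := by simp
    _ ≤ ∑ i ∈ Finset.range M,
          ∫ ξ in (3 ^ (i * m) : ℝ)..3 ^ ((i + 1) * m), ‖approxCharFun t N ξ‖ ^ 2 :=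
        Finset.sum_le_sum hblock
    _ = ∫ ξ in (3 ^ (0 * m) : ℝ)..3 ^ (M * m), ‖approxCharFun t N ξ‖ ^ 2 :=
        intervalIntegral.sum_integral_adjacent_intervals (a := fun i => (3 ^ (i * m) : ℝ))
          fun _ _ => hint _ _
    _ ≤ ∫ ξ in (0 : ℝ)..3 ^ N, ‖approxCharFun t N ξ‖ ^ 2 :=
        intervalIntegral.integral_mono_interval (by positivity)
          (pow_le_pow_right₀ (by norm_num) (by lia)) (pow_le_pow_right₀ (by norm_num) hMN)
          (Filter.Eventually.of_forall fun ξ => by positivity) (hint _ _)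
    _ ≤ D := hD N le_rfl

/-! ### The measure of the bad directions -/

lemma exists_int_abs_sub_two_pi_mul_le (θ : ℝ) : ∃ p : ℤ,
    |θ - 2 * Real.pi * p| ≤ Real.pi / 2 * ‖Complex.exp (θ * Complex.I) - 1‖ := by
  have hpi := Real.pi_pos
  set p := round (θ / (2 * Real.pi))
  set x := θ - 2 * Real.pi * p with hx
  have hx_le : |x / 2| ≤ Real.pi / 2 := by
    have hround := abs_sub_round (θ / (2 * Real.pi))
    calc |x / 2| = Real.pi * |θ / (2 * Real.pi) - p| := by
          rw [← abs_of_pos hpi, ← abs_mul, abs_of_pos hpi, hx]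
          congr 1
          field_simp
      _ ≤ Real.pi * (1 / 2) := by gcongr
      _ = Real.pi / 2 := by ring
  have hexp : Complex.exp (θ * Complex.I) = Complex.exp (Complex.I * x) := by
    rw [← mul_one (Complex.exp (Complex.I * x)), ← Complex.exp_int_mul_two_pi_mul_I p,
      ← Complex.exp_add, hx]
    congr 1
    push_cast
    ring
  have hsin := Real.mul_abs_le_abs_sin hx_le
  refine ⟨p, ?_⟩
  rw [hexp, Complex.norm_exp_I_mul_ofReal_sub_one, Real.norm_eq_abs, abs_mul, abs_two]
  calc |x| = Real.pi * (2 / Real.pi * |x / 2|) := by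
        rw [abs_div, abs_two]
        field_simp
    _ ≤ Real.pi * |Real.sin (x / 2)| := by gcongr
    _ = Real.pi / 2 * (2 * |Real.sin (x / 2)|) := by ring

lemma exists_int_approx (ht : t ∈ Set.Icc (0 : ℝ) 1) (y : ℝ) : ∃ p q : ℤ,
    |3 * y - 2 * Real.pi * p| ≤ 9 * Real.pi * ‖digitCharFun t y‖ ∧
      |t * p - q| ≤ 9 * ‖digitCharFun t y‖ := by
  have hpi := Real.pi_pos
  obtain ⟨hu, hv⟩ := norm_exp_cube_sub_one_le t y
  have hcube : ∀ x : ℝ, Complex.exp (x * Complex.I) ^ 3 =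
      Complex.exp ((3 * x : ℝ) * Complex.I) := fun x => by
    rw [← Complex.exp_nat_mul]
    congr 1
    push_cast
    ring
  rw [hcube] at hu hv
  obtain ⟨q, hq⟩ := exists_int_abs_sub_two_pi_mul_le (3 * (t * y))
  obtain ⟨p, hp⟩ := exists_int_abs_sub_two_pi_mul_le (3 * y)
  have hp' : |3 * y - 2 * Real.pi * p| ≤ 9 * Real.pi * ‖digitCharFun t y‖ := by nlinarith
  have hq' : |3 * (t * y) - 2 * Real.pi * q| ≤ 9 * Real.pi * ‖digitCharFun t y‖ := by nlinarith
  refine ⟨p, q, hp', ?_⟩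
  refine le_of_mul_le_mul_left ?_ (mul_pos two_pos hpi)
  calc 2 * Real.pi * |t * p - q|
      = |(3 * (t * y) - 2 * Real.pi * q) - t * (3 * y - 2 * Real.pi * p)| := by
        rw [← abs_of_pos (mul_pos two_pos hpi), ← abs_mul, abs_of_pos (mul_pos two_pos hpi)]
        congr 1
        ring
    _ ≤ |3 * (t * y) - 2 * Real.pi * q| + t * |3 * y - 2 * Real.pi * p| := by
        rw [← abs_of_nonneg ht.1, ← abs_mul, abs_of_nonneg ht.1]
        exact abs_sub _ _
    _ ≤ 9 * Real.pi * ‖digitCharFun t y‖ + 1 * (9 * Real.pi * ‖digitCharFun t y‖) := by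
        gcongr
        exact ht.2
    _ = 2 * Real.pi * (9 * ‖digitCharFun t y‖) := by ring

lemma exists_rational_near_of_norm_digitCharFun_lt (ht : t ∈ Set.Icc (0 : ℝ) 1) {y L ε : ℝ}
    (hy0 : 0 ≤ y) (hL : 1 ≤ L) (hy : y ≤ L) (hε : ε ≤ 1 / 81) (hsmall : ‖digitCharFun t y‖ < ε) :
    ∃ p q : ℕ, 1 ≤ p ∧ (p : ℝ) ≤ L ∧ q ≤ p ∧ t ∈ Metric.closedBall (q / p : ℝ) (9 * ε) := by
  obtain ⟨p, q, hp, hq⟩ := exists_int_approx ht y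
  have hpi := Real.pi_gt_three
  have hp_near : |3 * y - 2 * Real.pi * p| ≤ Real.pi / 9 := hp.trans (by nlinarith)
  have hy1 : 1 ≤ y := by
    by_contra! hlt
    nlinarith [one_sub_sq_div_three_le_norm_digitCharFun ht y]
  rw [abs_le] at hp_near
  have hp1 : 1 ≤ p := by
    have hpos : (0 : ℝ) < p := by nlinarith [Real.pi_lt_four]
    exact Int.cast_pos.1 hpos
  have hpL : (p : ℝ) ≤ L := by nlinarith
  lift p to ℕ using by lia
  rw [Int.cast_natCast] at hq hpL
  have hp1' : (1 : ℝ) ≤ p := by exact_mod_cast hp1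
  have hq_near := abs_le.1 (hq.trans (show 9 * ‖digitCharFun t y‖ ≤ 1 / 9 by linarith))
  have hq0 : 0 ≤ q := by
    have hgt : ((-1 : ℤ) : ℝ) < q := by
      push_cast
      nlinarith [ht.1]
    have := Int.cast_lt.1 hgt
    lia
  have hqp : q ≤ p := by
    have hlt : (q : ℝ) < ((p + 1 : ℤ) : ℝ) := by
      push_cast
      nlinarith [ht.2]
    exact Int.lt_add_one_iff.1 (Int.cast_lt.1 hlt)
  lift q to ℕ using hq0
  rw [Int.cast_natCast] at hq
  refine ⟨p, q, by lia, hpL, by lia, ?_⟩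
  rw [Metric.mem_closedBall, Real.dist_eq, show t - q / p = (t * p - q) / p by field_simp,
    abs_div, Nat.abs_cast]
  exact (div_le_self (abs_nonneg _) hp1').trans (by linarith)

lemma exists_rational_near_of_not_isGoodDirection (ht : t ∈ Set.Icc (0 : ℝ) 1) {m : ℕ}
    (hm : 1 ≤ m) (hbad : ¬ IsGoodDirection t m) :
    ∃ p ∈ Finset.Icc (1 : ℕ) (3 ^ m), ∃ q ∈ Finset.range (3 ^ m + 1),
      t ∈ Metric.closedBall (q / p : ℝ) (9 * (1 / 81) ^ m) := by
  unfold IsGoodDirection at hbad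
  push Not at hbad
  obtain ⟨y, hy0, hy, hsmall⟩ := hbad
  have hε : (1 / 81 : ℝ) ^ m ≤ 1 / 81 :=
    pow_le_of_le_one (by norm_num) (by norm_num) (by lia)
  obtain ⟨p, q, hp1, hpL, hqp, hmem⟩ := exists_rational_near_of_norm_digitCharFun_lt ht hy0
    (one_le_pow₀ (by norm_num)) hy hε hsmall
  have hp : p ≤ 3 ^ m := by exact_mod_cast hpL
  exact ⟨p, Finset.mem_Icc.2 ⟨hp1, hp⟩, q, Finset.mem_range.2 (by lia), hmem⟩

theorem volume_not_isGoodDirection_le {m : ℕ} (hm : 1 ≤ m) :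
    volume {t ∈ Set.Icc (0 : ℝ) 1 | ¬ IsGoodDirection t m} ≤ ENNReal.ofReal (36 / 9 ^ m) := by
  calc volume {t ∈ Set.Icc (0 : ℝ) 1 | ¬ IsGoodDirection t m}
      ≤ volume (⋃ p ∈ Finset.Icc (1 : ℕ) (3 ^ m), ⋃ q ∈ Finset.range (3 ^ m + 1),
          Metric.closedBall (q / p : ℝ) (9 * (1 / 81) ^ m)) := by
        refine measure_mono fun t ⟨ht, hbad⟩ => ?_
        simpa only [Set.mem_iUnion, exists_prop] using
          exists_rational_near_of_not_isGoodDirection ht hm hbad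
    _ ≤ ∑ p ∈ Finset.Icc (1 : ℕ) (3 ^ m), ∑ q ∈ Finset.range (3 ^ m + 1),
          volume (Metric.closedBall (q / p : ℝ) (9 * (1 / 81) ^ m)) :=
        (measure_biUnion_finset_le _ _).trans
          (Finset.sum_le_sum fun _ _ => measure_biUnion_finset_le _ _)
    _ = ENNReal.ofReal ((3 ^ m : ℕ) * ((3 ^ m + 1 : ℕ) * (2 * (9 * (1 / 81) ^ m)))) := by
        simp only [Real.volume_closedBall, Finset.sum_const, Nat.card_Icc, Finset.card_range,
          nsmul_eq_mul, Nat.add_sub_cancel]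
        rw [ENNReal.ofReal_mul (Nat.cast_nonneg _), ENNReal.ofReal_mul (Nat.cast_nonneg _),
          ENNReal.ofReal_natCast, ENNReal.ofReal_natCast]
    _ ≤ ENNReal.ofReal (36 / 9 ^ m) := by
        refine ENNReal.ofReal_le_ofReal ?_
        have h3 : (1 : ℝ) ≤ 3 ^ m := one_le_pow₀ (by norm_num)
        have h9 : (9 : ℝ) ^ m = 3 ^ m * 3 ^ m := by rw [← mul_pow]; norm_num
        have h81 : (81 : ℝ) ^ m = 9 ^ m * 9 ^ m := by rw [← mul_pow]; norm_num
        push_cast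
        calc (3 : ℝ) ^ m * ((3 ^ m + 1) * (2 * (9 * (1 / 81) ^ m)))
            ≤ 3 ^ m * ((3 ^ m + 3 ^ m) * (2 * (9 * (1 / 81) ^ m))) := by gcongr
          _ = 36 * 9 ^ m / 81 ^ m := by
              rw [h9, div_pow, one_pow]
              ring
          _ = 36 / 9 ^ m := by
              rw [h81]
              field_simp

lemma integral_norm_approxCharFun_sq_le_of_volume_le (ht : t ∈ Set.Icc (0 : ℝ) 1) {N : ℕ} {K : ℝ}
    (hK : 486 ≤ K)
    (hvol : volume {s : ℝ | K ≤ multFnStar t N s} ≤ ENNReal.ofReal ((K ^ 3)⁻¹)) {n : ℕ}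
    (hn : n ≤ N) : ∫ ξ in (0 : ℝ)..3 ^ n, ‖approxCharFun t n ξ‖ ^ 2 ≤ 600 * K := by
  have hκ : 1 ≤ ⌊K⌋₊ := Nat.le_floor (by norm_num; linarith)
  have hκK : (⌊K⌋₊ : ℝ) ≤ K := Nat.floor_le (by linarith)
  have hsmall : 486 * (⌊K⌋₊ : ℝ≥0∞) ^ 2 * volume {s | ⌊K⌋₊ < multFnStar t N s} ≤ 1 := by
    calc 486 * (⌊K⌋₊ : ℝ≥0∞) ^ 2 * volume {s | ⌊K⌋₊ < multFnStar t N s}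
        ≤ 486 * ENNReal.ofReal K ^ 2 * ENNReal.ofReal ((K ^ 3)⁻¹) := by
          rw [← ENNReal.ofReal_natCast]
          gcongr
          exact (measure_mono fun s hs => (Nat.lt_of_floor_lt hs).le).trans hvol
      _ = ENNReal.ofReal (486 * K ^ 2 * (K ^ 3)⁻¹) := by
          rw [ENNReal.ofReal_mul (by positivity), ENNReal.ofReal_mul (by positivity),
            ENNReal.ofReal_pow (by positivity), ENNReal.ofReal_ofNat]
      _ ≤ 1 := by
          rw [ENNReal.ofReal_le_one, ← div_eq_mul_inv, div_le_one (by positivity)]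
          nlinarith [sq_nonneg K]
  have hB : ∫⁻ s, (multFn t n s : ℝ≥0∞) ^ 2 ≤ ENNReal.ofReal (12 * K) := by
    refine (lintegral_multFn_sq_le ht hκ hsmall hn).trans ?_
    rw [ENNReal.ofReal_mul (by positivity), ENNReal.ofReal_ofNat, ← ENNReal.ofReal_natCast]
    gcongr
  exact (integral_norm_approxCharFun_sq_le (by positivity) hB).trans_eq (by ring)

theorem not_isGoodDirection_of_volume_le (ht : t ∈ Set.Icc (0 : ℝ) 1) {N m : ℕ} {K : ℝ}
    (hK : 2000 ≤ K) (hKm : K ^ 2 ≤ 3 ^ m) (hN : 3 ^ (20 * m) ≤ N)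
    (hvol : volume {s : ℝ | K ≤ multFnStar t N s} ≤ ENNReal.ofReal ((K ^ 3)⁻¹)) :
    ¬ IsGoodDirection t m := by
  intro hgood
  have hMN : 3 ^ (19 * m) * m ≤ N := by
    calc 3 ^ (19 * m) * m ≤ 3 ^ (19 * m) * 3 ^ m := by
          gcongr
          exact (Nat.lt_pow_self (by norm_num)).le
      _ = 3 ^ (20 * m) := by ring
      _ ≤ N := hN
  have hlarge := hgood.mul_pow_le_of_integral_le ht hMN (fun n hn =>
    integral_norm_approxCharFun_sq_le_of_volume_le ht (by linarith) hvol hn) (by nlinarith)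
  have h81 : (81 : ℝ) ^ (4 * m) = (3 ^ m) ^ 16 := by
    rw [show (81 : ℝ) = 3 ^ 4 by norm_num, ← pow_mul, ← pow_mul]
    congr 1
    ring
  have hcube : ((3 ^ (19 * m) : ℕ) : ℝ) * ((1 / 81) ^ (4 * m) / 16) = (3 ^ m) ^ 3 / 16 := by
    rw [one_div, inv_pow, h81, mul_comm 19 m, Nat.cast_pow, pow_mul, Nat.cast_ofNat]
    field_simp
  rw [hcube] at hlarge
  have hZ : (2000 * 2000 : ℝ) ≤ 3 ^ m := by nlinarith
  nlinarith [pow_le_pow_left₀ (by norm_num) hZ 2]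

lemma exists_sq_le_three_pow_and_le {K : ℝ} (hK : 3 ≤ K) {N : ℕ} (hKN : K ^ 60 = N) :
    ∃ m, 1 ≤ m ∧ 3 ^ (20 * m) ≤ N ∧ K ^ 2 ≤ 3 ^ m := by
  have hN : N ≠ 0 := by
    rintro rfl
    exact (pow_pos (three_pos.trans_le hK) 60).ne' (by simpa using hKN)
  set m := Nat.log 3 N / 20
  have hlow : 3 ^ (20 * m) ≤ N :=
    (Nat.pow_le_pow_right three_pos (Nat.mul_div_le _ _)).trans (Nat.pow_log_le_self 3 hN)
  have hup : N ≤ 3 ^ (20 * (m + 1)) :=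
    (Nat.lt_pow_succ_log_self (by norm_num) N).le.trans
      (Nat.pow_le_pow_right three_pos (by lia))
  have hcube : K ^ 3 ≤ 3 * 3 ^ m := by
    refine le_of_pow_le_pow_left₀ (n := 20) (by norm_num) (by positivity) ?_
    calc (K ^ 3) ^ 20 = N := by rw [← pow_mul, hKN]
      _ ≤ ((3 ^ (20 * (m + 1)) : ℕ) : ℝ) := Nat.cast_le.2 hup
      _ = (3 * 3 ^ m) ^ 20 := by
          rw [Nat.cast_pow, Nat.cast_ofNat, pow_mul', ← pow_succ']
  have hsq : K ^ 2 ≤ 3 ^ m := by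
    refine le_of_mul_le_mul_left ?_ (three_pos (α := ℝ))
    calc 3 * K ^ 2 ≤ K * K ^ 2 := by gcongr
      _ = K ^ 3 := by ring
      _ ≤ 3 * 3 ^ m := hcube
  refine ⟨m, Nat.one_le_iff_ne_zero.2 fun h0 => ?_, hlow, hsq⟩
  rw [h0, pow_zero] at hsq
  exact hsq.not_gt (one_lt_pow₀ (by linarith) two_ne_zero)

lemma div_nine_pow_lt_inv {K : ℝ} (hK : 36 ≤ K) {m : ℕ} (hKm : K ^ 2 ≤ 3 ^ m) :
    36 / 9 ^ m < K⁻¹ := by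
  have h9 : (9 : ℝ) ^ m = 3 ^ m * 3 ^ m := by rw [← mul_pow]; norm_num
  rw [← one_div, div_lt_div_iff₀ (by positivity) (by linarith), h9]
  have hKm' : 36 * K ≤ 3 ^ m := by nlinarith
  nlinarith

end Direction

end GasketProjection

/-- For `K = N^{ε₀}`, the set of parameters `t ∈ [0,1]` whose level set
`{f_N^* ≥ K}` has measure at most `K⁻³` has measure less than `N^{-ε₀}`. -/
theorem measure_of_bad_directions :
    ∃ ε₀ > (0:ℝ), ∃ N₀ : ℕ, ∀ N : ℕ, N₀ ≤ N →
      volume {t ∈ Set.Icc (0:ℝ) 1 |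
          volume {s : ℝ | ((N : ℝ) ^ ε₀) ≤ (multFnStar t N s : ℝ)}
            ≤ ENNReal.ofReal ((((N : ℝ) ^ ε₀) ^ 3)⁻¹)}
        < ENNReal.ofReal ((N : ℝ) ^ (-ε₀)) := by
  refine ⟨1 / 60, by norm_num, 2000 ^ 60, fun N hN => ?_⟩
  rw [Real.rpow_neg (Nat.cast_nonneg N)]
  set K : ℝ := (N : ℝ) ^ (1 / 60 : ℝ) with hKdef
  have hKN : K ^ 60 = N := by
    rw [hKdef, ← Real.rpow_natCast, ← Real.rpow_mul (Nat.cast_nonneg N)]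
    norm_num
  have hK : 2000 ≤ K := by
    refine le_of_pow_le_pow_left₀ (n := 60) (by norm_num) (by positivity) ?_
    rw [hKN]
    exact_mod_cast hN
  obtain ⟨m, hm, hmN, hKm⟩ := GasketProjection.exists_sq_le_three_pow_and_le (by linarith) hKN
  calc _ ≤ volume {t ∈ Set.Icc (0 : ℝ) 1 | ¬ GasketProjection.IsGoodDirection t m} :=
        measure_mono fun t ht =>
          ⟨ht.1, GasketProjection.not_isGoodDirection_of_volume_le ht.1 hK hKm hmN ht.2⟩
    _ ≤ ENNReal.ofReal (36 / 9 ^ m) := GasketProjection.volume_not_isGoodDirection_le hm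
    _ < ENNReal.ofReal K⁻¹ := (ENNReal.ofReal_lt_ofReal_iff (by positivity)).2
        (GasketProjection.div_nine_pow_lt_inv (by linarith) hKm)
end

section
/- There exist absolute constants M ∈ ℕ (M ≥ 1) and C > 0 such that for every t ∈ [0,1] and every x ∈ ℝ the following two statements hold: (i) every finite set of pairwise distinct zeros of φ̃_t contained in the open ball B(x,1) ⊆ ℂ has cardinality at most M; (ii) for every ε ∈ (0, 1/3) and every z ∈ B(x,1) with |φ̃_t(z)| ≤ ε, there exists λ ∈ ℂ with φ̃_t(λ) = 0 and |z − λ| ≤ C · ε^{1/M}. -/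
/-- `φ̃_t(z) = 1 + e^{-itz} + e^{-iz}`. -/
noncomputable def phiTilde (t : ℝ) (z : ℂ) : ℂ :=
  1 + Complex.exp (-Complex.I * (t : ℂ) * z) + Complex.exp (-Complex.I * z)

/-!
Translating `φ̃_t` by a real number turns it into `1 + a e^{-itw} + b e^{-iw}` with
`|a| = |b| = 1`, so everything happens in one family with compact parameter space.

Near a parameter whose function `f` has a zero and is not identically zero, choose a circle
avoiding the zeros of `f`. A factor `(z - w) / (2R)` per zero `w` inside the circle may be divided
out: this does not decrease the modulus on the circle `|z - c| = R`, and it halves the bound on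
`|z - c| = 5R`, so the process stops after a number of steps that is stable under perturbation.
The zero-free quotient is bounded below by the minimum modulus principle. Hence `|f z|` is at
least a constant times the product of the `|z - w| / (2R)`, which bounds both the number of zeros
and the distance to the nearest one.

A zero exists because a zero-free entire function of exponential type satisfies `f' = α f`, which
contradicts the linear independence of exponentials as soon as `f` has two distinct frequencies.
The parameters where frequencies merge and cancel (`t = 0`, `a = -1` and `t = 1`, `a + b = 0`)
give functions `b e^{-iw}` and `1`, which take no small values on the disc.
-/

open Complex Metric Set Filter Topology

theorem exists_eq_exp_of_forall_ne_zero {f : ℂ → ℂ} (hf : Differentiable ℂ f)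
    (hf₀ : ∀ z, f z ≠ 0) : ∃ g : ℂ → ℂ, Differentiable ℂ g ∧ ∀ z, f z = exp (g z) := by
  obtain ⟨g, hg₀, hg⟩ := (hf.deriv.div hf hf₀).isExactOn_univ.with_val_at 0 (log (f 0))
  replace hg z : HasDerivAt g (deriv f z / f z) z := hg z (mem_univ z)
  refine ⟨g, fun z ↦ (hg z).differentiableAt, fun z ↦ ?_⟩
  have hderiv w : HasDerivAt (fun w ↦ f w * exp (-g w)) 0 w := by
    refine ((hf w).hasDerivAt.mul (hg w).neg.cexp).congr_deriv ?_
    field_simp [hf₀ w]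
    ring
  have hconst : f z * exp (-g z) = f 0 * exp (-g 0) :=
    is_const_of_deriv_eq_zero (fun w ↦ (hderiv w).differentiableAt) (fun w ↦ (hderiv w).deriv) z 0
  rw [hg₀, exp_neg (log _), exp_log (hf₀ 0), mul_inv_cancel₀ (hf₀ 0), exp_neg,
    mul_inv_eq_one₀ (exp_ne_zero _)] at hconst
  exact hconst

theorem exists_norm_le_mul_one_add_norm_of_re_le {g : ℂ → ℂ} (hg : Differentiable ℂ g) {A B : ℝ}
    (hre : ∀ z, (g z).re ≤ A + B * ‖z‖) : ∃ C, ∀ z, ‖g z‖ ≤ C * (1 + ‖z‖) := by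
  set K := 1 + |A| + |B|
  have hreK z : (g z).re ≤ K * (1 + ‖z‖) := by
    have hA := le_abs_self A
    have hB := mul_le_mul_of_nonneg_right (le_abs_self B) (norm_nonneg z)
    nlinarith [hre z, norm_nonneg z, abs_nonneg A, abs_nonneg B]
  refine ⟨6 * K + 3 * ‖g 0‖, fun z ↦ ?_⟩
  have hz := norm_nonneg z
  have hR : 0 < 2 * (1 + ‖z‖) - ‖z‖ := by linarith
  have hcar := borelCaratheodory (M := K * (3 * (1 + ‖z‖))) (R := 2 * (1 + ‖z‖)) (z := z)
    (by positivity) hg.differentiableOn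
    (fun w hw ↦ (hreK w).trans (by gcongr; linarith [mem_ball_zero_iff.1 hw]))
    (by positivity) (by simp; linarith)
  refine hcar.trans ?_
  rw [← add_div, div_le_iff₀ hR]
  have hK₀ : 0 < K := by positivity
  nlinarith [mul_nonneg hK₀.le hz, mul_nonneg (norm_nonneg (g 0)) hz,
    mul_nonneg (mul_nonneg (norm_nonneg (g 0)) hz) hz, norm_nonneg (g 0)]

theorem exists_deriv_eq_const_of_norm_le {g : ℂ → ℂ} (hg : Differentiable ℂ g) {C : ℝ}
    (hC : ∀ z, ‖g z‖ ≤ C * (1 + ‖z‖)) : ∃ α, ∀ z, deriv g z = α := by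
  have hC₀ : 0 ≤ C := by simpa using (norm_nonneg _).trans (hC 0)
  refine hg.deriv.exists_const_forall_eq_of_bounded
    (isBounded_iff_forall_norm_le.2 ⟨2 * C, forall_mem_range.2 fun z ↦ ?_⟩)
  have hρ : 0 < 1 + ‖z‖ := by positivity
  have hsphere : ∀ w ∈ sphere z (1 + ‖z‖), ‖g w‖ ≤ 2 * C * (1 + ‖z‖) := fun w hw ↦ by
    have hw' : ‖w‖ ≤ 1 + 2 * ‖z‖ := by
      linarith [norm_le_norm_sub_add w z, mem_sphere_iff_norm.1 hw]
    nlinarith [hC w]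
  simpa [hρ.ne'] using norm_deriv_le_of_forall_mem_sphere_norm_le hρ hg.diffContOnCl hsphere

theorem exists_deriv_eq_mul_of_norm_le_exp {f : ℂ → ℂ} (hf : Differentiable ℂ f)
    (hf₀ : ∀ z, f z ≠ 0) {A B : ℝ} (hgrowth : ∀ z, ‖f z‖ ≤ A * Real.exp (B * ‖z‖)) :
    ∃ α, ∀ z, deriv f z = α * f z := by
  obtain ⟨g, hg, hfg⟩ := exists_eq_exp_of_forall_ne_zero hf hf₀
  have hA : 0 < A := by simpa using (norm_pos_iff.2 (hf₀ 0)).trans_le (hgrowth 0)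
  have hre z : (g z).re ≤ Real.log A + B * ‖z‖ := by
    rw [← Real.exp_le_exp, Real.exp_add, Real.exp_log hA, ← norm_exp, ← hfg]
    exact hgrowth z
  obtain ⟨C, hC⟩ := exists_norm_le_mul_one_add_norm_of_re_le hg hre
  obtain ⟨α, hα⟩ := exists_deriv_eq_const_of_norm_le hg hC
  refine ⟨α, fun z ↦ ?_⟩
  rw [funext hfg, (hg z).hasDerivAt.cexp.deriv, hα, mul_comm]

/-- The exponential sum `w ↦ ∑ i, c i * e^{μ i * w}` with complex frequencies `μ`; distinctness of
the frequencies is a hypothesis of the lemmas that need it. -/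
noncomputable def exponentialSum {ι : Type*} [Fintype ι] (c μ : ι → ℂ) (w : ℂ) : ℂ :=
  ∑ i, c i * exp (μ i * w)

section ExponentialSum

variable {ι : Type*} [Fintype ι] (c μ : ι → ℂ)

theorem hasDerivAt_exponentialSum (w : ℂ) :
    HasDerivAt (exponentialSum c μ) (exponentialSum (μ * c) μ w) w := by
  refine HasDerivAt.fun_sum fun i _ ↦ ?_
  refine (((hasDerivAt_id w).const_mul (μ i)).cexp.const_mul (c i)).congr_deriv ?_
  simp only [id_eq, mul_one, Pi.mul_apply]
  ring

theorem differentiable_exponentialSum : Differentiable ℂ (exponentialSum c μ) :=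
  fun w ↦ (hasDerivAt_exponentialSum c μ w).differentiableAt

theorem norm_exponentialSum_le (w : ℂ) :
    ‖exponentialSum c μ w‖ ≤ (∑ i, ‖c i‖) * Real.exp ((∑ i, ‖μ i‖) * ‖w‖) := by
  rw [Finset.sum_mul]
  refine norm_sum_le_of_le _ fun i hi ↦ ?_
  rw [norm_mul]
  gcongr
  refine (norm_exp_le_exp_norm _).trans (Real.exp_le_exp.2 ?_)
  rw [norm_mul]
  gcongr
  exact Finset.single_le_sum (f := fun i ↦ ‖μ i‖) (fun _ _ ↦ norm_nonneg _) hi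

theorem linearIndependent_exp_mul : LinearIndependent ℂ (fun μ w : ℂ ↦ exp (μ * w)) := by
  let expHom (μ : ℂ) : Multiplicative ℂ →* ℂ :=
    expMonoidHom.comp (AddMonoidHom.toMultiplicative (AddMonoidHom.mulLeft μ))
  have hderiv (μ : ℂ) : deriv (fun w ↦ exp (μ * w)) 0 = μ := by
    simpa using ((hasDerivAt_id (0 : ℂ)).const_mul μ).cexp.deriv
  have hinj : Function.Injective expHom := fun μ ν h ↦ by
    have hfun : (fun w ↦ exp (μ * w)) = fun w ↦ exp (ν * w) :=
      funext fun w ↦ DFunLike.congr_fun h (.ofAdd w)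
    rw [← hderiv μ, hfun, hderiv]
  exact (linearIndependent_monoidHom (Multiplicative ℂ) ℂ).comp expHom hinj

variable {c μ}

theorem eq_zero_of_exponentialSum_eq_zero (hμ : Function.Injective μ)
    (h : ∀ w, exponentialSum c μ w = 0) : c = 0 := by
  have hli := linearIndependent_exp_mul.comp μ hμ
  refine funext (Fintype.linearIndependent_iff.1 hli c (funext fun w ↦ ?_))
  simpa [exponentialSum] using h w

theorem exists_exponentialSum_ne_zero [Nonempty ι] (hμ : Function.Injective μ)
    (hc : ∀ i, c i ≠ 0) : ∃ w, exponentialSum c μ w ≠ 0 := by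
  by_contra! h
  exact hc (Classical.arbitrary ι) (congrFun (eq_zero_of_exponentialSum_eq_zero hμ h) _)

theorem exists_exponentialSum_eq_zero [Nontrivial ι] (hμ : Function.Injective μ)
    (hc : ∀ i, c i ≠ 0) : ∃ w, exponentialSum c μ w = 0 := by
  by_contra! hne
  obtain ⟨α, hα⟩ := exists_deriv_eq_mul_of_norm_le_exp (differentiable_exponentialSum c μ) hne
    (norm_exponentialSum_le c μ)
  have hzero w : exponentialSum (fun i ↦ (μ i - α) * c i) μ w = 0 := by
    have h := hα w
    rw [(hasDerivAt_exponentialSum c μ w).deriv, ← sub_eq_zero] at h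
    simpa [exponentialSum, Finset.mul_sum, ← Finset.sum_sub_distrib, sub_mul, mul_assoc] using h
  have hμα i : μ i = α := by
    have hi := congrFun (eq_zero_of_exponentialSum_eq_zero hμ hzero) i
    exact sub_eq_zero.1 ((mul_eq_zero.1 hi).resolve_right (hc i))
  obtain ⟨i, j, hij⟩ := exists_pair_ne ι
  exact hij (hμ ((hμα i).trans (hμα j).symm))

end ExponentialSum

theorem le_norm_of_forall_mem_sphere_le_norm {f : ℂ → ℂ} {c : ℂ} {R δ : ℝ} (hR : R ≠ 0)
    (hδ : 0 < δ) (hf : DiffContOnCl ℂ f (ball c R)) (hf₀ : ∀ z ∈ closedBall c R, f z ≠ 0)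
    (hsphere : ∀ z ∈ sphere c R, δ ≤ ‖f z‖) {z : ℂ} (hz : z ∈ closedBall c R) : δ ≤ ‖f z‖ := by
  rw [← closure_ball c hR] at hf₀ hz
  rw [← frontier_ball c hR] at hsphere
  have hinv : ‖(f z)⁻¹‖ ≤ δ⁻¹ :=
    norm_le_of_forall_mem_frontier_norm_le isBounded_ball (hf.inv hf₀)
      (fun w hw ↦ by simpa using inv_anti₀ hδ (hsphere w hw)) hz
  rw [norm_inv] at hinv
  exact (inv_le_inv₀ (norm_pos_iff.2 (hf₀ z hz)) hδ).1 hinv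

theorem exists_eq_div_mul_of_eq_zero {f : ℂ → ℂ} (hf : Differentiable ℂ f) {c w₀ : ℂ} {R B : ℝ}
    (hR : 0 < R) (hw₀ : w₀ ∈ closedBall c R) (hfw₀ : f w₀ = 0)
    (hB : ∀ z ∈ closedBall c (5 * R), ‖f z‖ ≤ B) :
    ∃ g : ℂ → ℂ, Differentiable ℂ g ∧ (∀ z, f z = (z - w₀) / (2 * R : ℝ) * g z) ∧
      (∀ z ∈ sphere c R, ‖f z‖ ≤ ‖g z‖) ∧ ∀ z ∈ closedBall c (5 * R), ‖g z‖ ≤ B / 2 := by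
  have hdslope : Differentiable ℂ (dslope f w₀) :=
    differentiableOn_univ.1 ((differentiableOn_dslope univ_mem).2 hf.differentiableOn)
  set g : ℂ → ℂ := fun z ↦ (2 * R : ℝ) * dslope f w₀ z with hg
  have hgd : Differentiable ℂ g := hdslope.const_mul _
  have hfg z : f z = (z - w₀) / (2 * R : ℝ) * g z := by
    have h2R : ((2 * R : ℝ) : ℂ) ≠ 0 := ofReal_ne_zero.2 (by positivity)
    rw [hg, ← mul_assoc, div_mul_cancel₀ _ h2R, ← smul_eq_mul, sub_smul_dslope, hfw₀, sub_zero]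
  have hnorm z : ‖f z‖ = ‖z - w₀‖ / (2 * R) * ‖g z‖ := by
    rw [hfg, norm_mul, norm_div, norm_real, Real.norm_of_nonneg (by positivity)]
  have hw₀' : dist w₀ c ≤ R := hw₀
  refine ⟨g, hgd, hfg, fun z hz ↦ ?_, fun z hz ↦ ?_⟩
  · have hratio : ‖z - w₀‖ / (2 * R) ≤ 1 := by
      rw [div_le_one (by positivity), ← dist_eq_norm]
      linarith [dist_triangle_right z w₀ c, mem_sphere.1 hz]
    rw [hnorm]
    exact mul_le_of_le_one_left (norm_nonneg _) hratio
  · have h5R : 5 * R ≠ 0 := by positivity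
    rw [← closure_ball c h5R] at hz
    refine norm_le_of_forall_mem_frontier_norm_le isBounded_ball hgd.diffContOnCl
      (fun y hy ↦ ?_) hz
    rw [frontier_ball c h5R] at hy
    have hratio : 2 ≤ ‖y - w₀‖ / (2 * R) := by
      rw [le_div_iff₀ (by positivity), ← dist_eq_norm]
      linarith [dist_triangle y w₀ c, mem_sphere.1 hy]
    have hfy := hB y (sphere_subset_closedBall hy)
    rw [hnorm] at hfy
    linarith [mul_le_mul_of_nonneg_right hratio (norm_nonneg (g y))]

theorem exists_multiset_zeros {c : ℂ} {R δ : ℝ} (hR : 0 < R) (hδ : 0 < δ) (N : ℕ)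
    {f : ℂ → ℂ} {B : ℝ} (hf : Differentiable ℂ f) (hsphere : ∀ z ∈ sphere c R, δ ≤ ‖f z‖)
    (hB : ∀ z ∈ closedBall c (5 * R), ‖f z‖ ≤ B) (hBN : B < 2 ^ N * δ) :
    ∃ s : Multiset ℂ, s.card ≤ N ∧ (∀ w ∈ s, w ∈ closedBall c R ∧ f w = 0) ∧
      ∀ z ∈ closedBall c R, δ * (s.map fun w ↦ ‖z - w‖ / (2 * R)).prod ≤ ‖f z‖ := by
  induction N generalizing f B with
  | zero =>
    obtain ⟨z, hz⟩ := (NormedSpace.sphere_nonempty (x := c)).2 hR.le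
    have hzB := hB z (closedBall_subset_closedBall (by linarith) (sphere_subset_closedBall hz))
    linarith [hsphere z hz]
  | succ N ih =>
    by_cases hf₀ : ∀ z ∈ closedBall c R, f z ≠ 0
    · refine ⟨0, by simp, by simp, fun z hz ↦ ?_⟩
      simpa using le_norm_of_forall_mem_sphere_le_norm hR.ne' hδ hf.diffContOnCl hf₀ hsphere hz
    push Not at hf₀
    obtain ⟨w₀, hw₀, hfw₀⟩ := hf₀
    obtain ⟨g, hg, hfg, hle, hgB⟩ := exists_eq_div_mul_of_eq_zero hf hR hw₀ hfw₀ hB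
    obtain ⟨s, hs, hsg, hprod⟩ := ih hg (fun z hz ↦ (hsphere z hz).trans (hle z hz)) hgB
      (by rw [pow_succ] at hBN; linarith)
    refine ⟨w₀ ::ₘ s, by simpa using hs, ?_, fun z hz ↦ ?_⟩
    · simp only [Multiset.mem_cons, forall_eq_or_imp]
      exact ⟨⟨hw₀, hfw₀⟩, fun w hw ↦ ⟨(hsg w hw).1, by rw [hfg, (hsg w hw).2, mul_zero]⟩⟩
    · rw [Multiset.map_cons, Multiset.prod_cons, mul_left_comm, hfg, norm_mul, norm_div, norm_real,
        Real.norm_of_nonneg (by positivity)]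
      gcongr
      exact hprod z hz

/-- `f` has at most `M` zeros in the disc of radius `r` about `c`, and on the part of that disc
where `‖f‖ ≤ 1` the distance to the zeros of `f` (in all of `ℂ`) satisfies the Łojasiewicz
inequality with exponent `1 / M` and constant `C`. -/
structure ZeroControl (f : ℂ → ℂ) (c : ℂ) (r : ℝ) (M : ℕ) (C : ℝ) : Prop where
  one_le : 1 ≤ M
  const_pos : 0 < C
  card_le : ∀ Z : Finset ℂ, (∀ z ∈ Z, z ∈ closedBall c r ∧ f z = 0) → Z.card ≤ M
  exists_zero_near : ∀ z ∈ closedBall c r, ‖f z‖ ≤ 1 →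
    ∃ w, f w = 0 ∧ ‖z - w‖ ≤ C * ‖f z‖ ^ (M : ℝ)⁻¹

namespace ZeroControl

variable {f : ℂ → ℂ} {c : ℂ} {r : ℝ} {M M' : ℕ} {C C' : ℝ}

theorem mono (h : ZeroControl f c r M C) (hM : M ≤ M') (hC : C ≤ C') : ZeroControl f c r M' C' where
  one_le := h.one_le.trans hM
  const_pos := h.const_pos.trans_le hC
  card_le Z hZ := (h.card_le Z hZ).trans hM
  exists_zero_near z hz hfz := by
    obtain ⟨w, hw, hzw⟩ := h.exists_zero_near z hz hfz
    have hM₀ : (0 : ℝ) < M := Nat.cast_pos.2 h.one_le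
    have hC' : 0 ≤ C' := h.const_pos.le.trans hC
    refine ⟨w, hw, hzw.trans (mul_le_mul hC ?_ (by positivity) hC')⟩
    exact Real.rpow_le_rpow_of_exponent_ge' (norm_nonneg _) hfz (by positivity) (by gcongr)

theorem of_comp_add (h : ZeroControl (fun w ↦ f (c + w)) 0 r M C) : ZeroControl f c r M C where
  one_le := h.one_le
  const_pos := h.const_pos
  card_le Z hZ := by
    have hcard := h.card_le (Z.map (addRightEmbedding (-c))) fun w hw ↦ by
      obtain ⟨z, hz, rfl⟩ := Finset.mem_map.1 hw
      simpa [mem_closedBall, dist_eq_norm, ← sub_eq_add_neg] using hZ z hz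
    rwa [Finset.card_map] at hcard
  exists_zero_near z hz hfz := by
    obtain ⟨w, hw, hzw⟩ := h.exists_zero_near (z - c)
      (by rwa [mem_closedBall_zero_iff, ← mem_closedBall_iff_norm]) (by simpa using hfz)
    refine ⟨c + w, hw, ?_⟩
    rwa [add_sub_cancel, sub_sub] at hzw

end ZeroControl

theorem exists_mem_pow_card_le_prod_map {α : Type*} {s : Multiset α} (hs : s ≠ 0) {q : α → ℝ}
    (hq : ∀ a ∈ s, 0 ≤ q a) : ∃ a ∈ s, q a ^ s.card ≤ (s.map q).prod := by
  classical
  obtain ⟨a, ha, hmin⟩ := s.toFinset.exists_min_image q (Multiset.toFinset_nonempty.2 hs)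
  rw [Multiset.mem_toFinset] at ha
  refine ⟨a, ha, ?_⟩
  have hle := Multiset.prod_map_le_prod_map₀ (s := s) (fun _ ↦ q a) q (fun _ _ ↦ hq a ha)
    fun b hb ↦ hmin b (Multiset.mem_toFinset.2 hb)
  simpa using hle

theorem zeroControl_of_le_norm_sphere {f : ℂ → ℂ} {c w₀ : ℂ} {r R δ B : ℝ} {N : ℕ} (hR : 0 < R)
    (hrR : r ≤ R) (hδ : 0 < δ) (hf : Differentiable ℂ f) (hsphere : ∀ z ∈ sphere c R, δ ≤ ‖f z‖)
    (hB : ∀ z ∈ closedBall c (5 * R), ‖f z‖ ≤ B) (hBN : B < 2 ^ N * δ)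
    (hw₀ : w₀ ∈ closedBall c R) (hfw₀ : f w₀ = 0) :
    ZeroControl f c r N (2 * R * δ⁻¹ ^ (N : ℝ)⁻¹) := by
  classical
  obtain ⟨s, hsN, hs, hprod⟩ := exists_multiset_zeros hR hδ N hf hsphere hB hBN
  have hmem z (hz : z ∈ closedBall c R) (hfz : f z = 0) : z ∈ s := by
    have hz₀ := hprod z hz
    rw [hfz, norm_zero] at hz₀
    have hprod₀ : (s.map fun w ↦ ‖z - w‖ / (2 * R)).prod = 0 :=
      le_antisymm (nonpos_of_mul_nonpos_right hz₀ hδ)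
        (Multiset.prod_map_nonneg fun _ _ ↦ by positivity)
    obtain ⟨w, hw, hzw⟩ := Multiset.mem_map.1 (Multiset.prod_eq_zero_iff.1 hprod₀)
    rw [div_eq_zero_iff, or_iff_left (by positivity), norm_sub_eq_zero_iff] at hzw
    exact hzw ▸ hw
  have hs₀ : s ≠ 0 := fun h ↦ by simpa [h] using hmem w₀ hw₀ hfw₀
  have hN : 0 < N := (Multiset.card_pos.2 hs₀).trans_le hsN
  refine ⟨hN, by positivity, fun Z hZ ↦ ?_, fun z hz _ ↦ ?_⟩
  · have hZs : Z ⊆ s.toFinset := fun z hz ↦ Multiset.mem_toFinset.2 <|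
      hmem z (closedBall_subset_closedBall hrR (hZ z hz).1) (hZ z hz).2
    exact (Finset.card_le_card hZs).trans (s.toFinset_card_le.trans hsN)
  · have hzR : z ∈ closedBall c R := closedBall_subset_closedBall hrR hz
    obtain ⟨w, hw, hpow⟩ := exists_mem_pow_card_le_prod_map hs₀
      (q := fun w ↦ ‖z - w‖ / (2 * R)) fun _ _ ↦ by positivity
    refine ⟨w, (hs w hw).2, ?_⟩
    have hratio : ‖z - w‖ / (2 * R) ≤ 1 := by
      rw [div_le_one (by positivity), ← dist_eq_norm]
      linarith [dist_triangle_right z w c, mem_closedBall.1 hzR, mem_closedBall.1 (hs w hw).1]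
    have hroot : ‖z - w‖ / (2 * R) ≤ (δ⁻¹ * ‖f z‖) ^ (N : ℝ)⁻¹ := by
      rw [Real.le_rpow_inv_iff_of_pos (by positivity) (by positivity) (by positivity),
        Real.rpow_natCast, ← div_eq_inv_mul, le_div_iff₀' hδ]
      refine (mul_le_mul_of_nonneg_left ?_ hδ.le).trans (hprod z hzR)
      exact (pow_le_pow_of_le_one (by positivity) hratio hsN).trans hpow
    rwa [div_le_iff₀' (by positivity), Real.mul_rpow (by positivity) (by positivity),
      ← mul_assoc] at hroot

theorem exists_forall_mem_of_forall_eventually {ι X : Type*} [Preorder ι] [IsDirectedOrder ι]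
    [Nonempty ι] [TopologicalSpace X] {K : Set X} (hK : IsCompact K) {Q : ι → X → Prop}
    (hmono : ∀ ⦃i j⦄, i ≤ j → ∀ x, Q i x → Q j x)
    (hlocal : ∀ x ∈ K, ∃ i, ∀ᶠ y in 𝓝[K] x, Q i y) : ∃ i, ∀ x ∈ K, Q i x := by
  refine hK.induction_on (p := fun s ↦ ∃ i, ∀ x ∈ s, Q i x) ⟨Classical.arbitrary ι, by simp⟩
    (fun s t hst ⟨i, hi⟩ ↦ ⟨i, fun x hx ↦ hi x (hst hx)⟩) ?_ fun x hx ↦ ?_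
  · rintro s t ⟨i, hi⟩ ⟨j, hj⟩
    obtain ⟨k, hik, hjk⟩ := exists_ge_ge i j
    exact ⟨k, fun x hx ↦ hx.elim (fun h ↦ hmono hik x (hi x h)) fun h ↦ hmono hjk x (hj x h)⟩
  · obtain ⟨i, hi⟩ := hlocal x hx
    exact ⟨_, hi, i, fun _ h ↦ h⟩

theorem exists_radius_gt_forall_sphere_lt_norm {f : ℂ → ℂ} (hf : Differentiable ℂ f)
    (hne : ∃ z, f z ≠ 0) (c : ℂ) (R₀ : ℝ) :
    ∃ R > R₀, ∃ δ > 0, ∀ z ∈ sphere c R, δ < ‖f z‖ := by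
  obtain ⟨z₀, hz₀⟩ := hne
  have hcod : f ⁻¹' {0}ᶜ ∈ codiscrete ℂ :=
    AnalyticOnNhd.preimage_zero_mem_codiscrete (fun z _ ↦ hf.analyticAt z) hz₀
  have hcount : (f ⁻¹' {0}).Countable := by
    have hdisc : IsDiscrete (f ⁻¹' {0} ∩ univ) := isDiscrete_of_codiscreteWithin hcod
    rw [inter_univ] at hdisc
    exact (HereditarilyLindelofSpace.isLindelof _).countable_of_isDiscrete hdisc
  obtain ⟨R, hR, hR₀⟩ := ((hcount.image (dist · c)).dense_compl ℝ).exists_gt R₀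
  have hpos z (hz : z ∈ sphere c R) : 0 < ‖f z‖ := norm_pos_iff.2 fun hfz ↦ hR ⟨z, hfz, hz⟩
  obtain ⟨δ, hδ, hδf⟩ := (isCompact_sphere c R).exists_forall_le' hf.continuous.norm.continuousOn
    hpos
  exact ⟨R, hR₀, δ / 2, half_pos hδ, fun z hz ↦ (half_lt_self hδ).trans_le (hδf z hz)⟩

section CompactFamily

variable {P : Type*} [TopologicalSpace P] {F : P → ℂ → ℂ}

theorem exists_eventually_zeroControl (hF : Continuous F.uncurry)
    (hd : ∀ p, Differentiable ℂ (F p)) {p₀ : P} (hzero : ∃ w, F p₀ w = 0)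
    (hne : ∃ z, F p₀ z ≠ 0) (c : ℂ) (r : ℝ) :
    ∃ N C, ∀ᶠ p in 𝓝 p₀, ZeroControl (F p) c r N C := by
  obtain ⟨w₀, hw₀⟩ := hzero
  obtain ⟨R, hR, δ, hδ, hδF⟩ :=
    exists_radius_gt_forall_sphere_lt_norm (hd p₀) hne c (max (max r (dist w₀ c)) 0)
  simp only [gt_iff_lt, max_lt_iff] at hR
  obtain ⟨⟨hrR, hw₀R⟩, hR₀⟩ := hR
  obtain ⟨B, hB⟩ := (isCompact_closedBall c (5 * R)).exists_bound_of_continuousOn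
    (hd p₀).continuous.continuousOn
  obtain ⟨N, hN⟩ := pow_unbounded_of_one_lt ((B + 1) / δ) one_lt_two
  rw [div_lt_iff₀ hδ] at hN
  have hFnorm : Continuous fun q : P × ℂ ↦ ‖F q.1 q.2‖ := hF.norm
  have hsphere : ∀ᶠ p in 𝓝 p₀, ∀ z ∈ sphere c R, δ < ‖F p z‖ :=
    (isCompact_sphere c R).eventually_forall_of_forall_eventually fun z hz ↦
      hFnorm.continuousAt.eventually_const_lt (hδF z hz)
  have hball : ∀ᶠ p in 𝓝 p₀, ∀ z ∈ closedBall c (5 * R), ‖F p z‖ < B + 1 :=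
    (isCompact_closedBall c (5 * R)).eventually_forall_of_forall_eventually fun z hz ↦
      hFnorm.continuousAt.eventually_lt_const ((hB z hz).trans_lt (lt_add_one B))
  have hsmall : ∀ᶠ p in 𝓝 p₀, ‖F p w₀‖ < δ :=
    (hFnorm.comp (Continuous.prodMk_left w₀)).continuousAt.eventually_lt_const (by simpa [hw₀])
  refine ⟨N, 2 * R * δ⁻¹ ^ (N : ℝ)⁻¹, ?_⟩
  filter_upwards [hsphere, hball, hsmall] with p hpsphere hpball hpsmall
  have hpδ z (hz : z ∈ sphere c R) : δ ≤ ‖F p z‖ := (hpsphere z hz).le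
  obtain ⟨w, hw, hFw⟩ : ∃ w ∈ closedBall c R, F p w = 0 := by
    by_contra! hfree
    exact hpsmall.not_ge (le_norm_of_forall_mem_sphere_le_norm hR₀.ne' hδ (hd p).diffContOnCl
      hfree hpδ hw₀R.le)
  exact zeroControl_of_le_norm_sphere hR₀ hrR.le hδ (hd p) hpδ (fun z hz ↦ (hpball z hz).le) hN
    hw hFw

theorem exists_forall_mem_zeroControl (hF : Continuous F.uncurry)
    (hd : ∀ p, Differentiable ℂ (F p)) {K : Set P} (hK : IsCompact K)
    (hzero : ∀ p ∈ K, ∃ w, F p w = 0) (hne : ∀ p ∈ K, ∃ z, F p z ≠ 0) (c : ℂ) (r : ℝ) :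
    ∃ M C, ∀ p ∈ K, ZeroControl (F p) c r M C := by
  obtain ⟨⟨M, C⟩, h⟩ := exists_forall_mem_of_forall_eventually (ι := ℕ × ℝ) hK
    (Q := fun i p ↦ ZeroControl (F p) c r i.1 i.2)
    (fun _ _ hij _ h ↦ h.mono (Prod.le_def.1 hij).1 (Prod.le_def.1 hij).2) fun p hp ↦ by
      obtain ⟨N, C, hNC⟩ := exists_eventually_zeroControl hF hd (hzero p hp) (hne p hp) c r
      exact ⟨(N, C), nhdsWithin_le_nhds hNC⟩
  exact ⟨M, C, h⟩

end CompactFamily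

/-- The function `w ↦ 1 + a e^{-itw} + b e^{-iw}`, with parameters `p = (t, a, b)`. The translates
of `phiTilde t` by real numbers belong to this family with `|a| = |b| = 1`, which makes their
parameter space compact. -/
noncomputable def threeTermSum (p : ℝ × ℂ × ℂ) (w : ℂ) : ℂ :=
  1 + p.2.1 * exp (-I * p.1 * w) + p.2.2 * exp (-I * w)

theorem phiTilde_add (t : ℝ) (x w : ℂ) :
    phiTilde t (x + w) = threeTermSum (t, exp (-I * t * x), exp (-I * x)) w := by
  simp only [phiTilde, threeTermSum, mul_add, exp_add]

theorem continuous_uncurry_threeTermSum : Continuous threeTermSum.uncurry := by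
  unfold threeTermSum Function.uncurry
  fun_prop

theorem differentiable_threeTermSum (p : ℝ × ℂ × ℂ) : Differentiable ℂ (threeTermSum p) := by
  unfold threeTermSum
  fun_prop

theorem exists_threeTermSum_eq_exponentialSum {t : ℝ} {a b : ℂ} (ha : a ≠ 0) (hb : b ≠ 0)
    (h₀ : t = 0 → 1 + a ≠ 0) (h₁ : t = 1 → a + b ≠ 0) :
    ∃ (n : ℕ) (c μ : Fin (n + 2) → ℂ), Function.Injective μ ∧ (∀ i, c i ≠ 0) ∧
      threeTermSum (t, a, b) = exponentialSum c μ := by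
  rcases eq_or_ne t 0 with rfl | ht₀
  · refine ⟨0, ![1 + a, b], ![0, -I], ?_, ?_, ?_⟩
    · simp [Function.Injective, Fin.forall_fin_succ]
    · simp [Fin.forall_fin_succ, h₀, hb]
    · ext w
      simp [threeTermSum, exponentialSum, Fin.sum_univ_succ]
  rcases eq_or_ne t 1 with rfl | ht₁
  · refine ⟨0, ![1, a + b], ![0, -I], ?_, ?_, ?_⟩
    · simp [Function.Injective, Fin.forall_fin_succ]
    · simp [Fin.forall_fin_succ, h₁]
    · ext w
      simp only [threeTermSum, exponentialSum, Nat.reduceAdd, Fin.sum_univ_two, Matrix.cons_val,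
        zero_mul, exp_zero, mul_one, ofReal_one]
      ring
  · refine ⟨1, ![1, a, b], ![0, -I * t, -I], ?_, ?_, ?_⟩
    · simp [Function.Injective, Fin.forall_fin_succ, ht₀, ht₁]
    · simp [Fin.forall_fin_succ, ha, hb]
    · ext w
      simp only [threeTermSum, exponentialSum, Nat.reduceAdd, Fin.sum_univ_three, Matrix.cons_val,
        zero_mul, exp_zero, mul_one]

/-- The parameters `(t, a, b)` with `t ∈ T` and `|a| = |b| = 1` for which `threeTermSum (t, a, b)`
is at most `η` in modulus somewhere on the disc of radius `r` about `0`. -/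
def smallValueParams (T : Set ℝ) (r η : ℝ) : Set (ℝ × ℂ × ℂ) :=
  {p | p.1 ∈ T ∧ ‖p.2.1‖ = 1 ∧ ‖p.2.2‖ = 1 ∧ ∃ z ∈ closedBall 0 r, ‖threeTermSum p z‖ ≤ η}

section SmallValues

variable {T : Set ℝ} {r η : ℝ}

theorem isCompact_smallValueParams (hT : IsCompact T) : IsCompact (smallValueParams T r η) := by
  have hbox : IsCompact ((T ×ˢ sphere (0 : ℂ) 1 ×ˢ sphere (0 : ℂ) 1) ×ˢ closedBall (0 : ℂ) r) :=
    (hT.prod ((isCompact_sphere 0 1).prod (isCompact_sphere 0 1))).prod (isCompact_closedBall 0 r)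
  have hclosed : IsClosed {q : (ℝ × ℂ × ℂ) × ℂ | ‖threeTermSum q.1 q.2‖ ≤ η} :=
    isClosed_le continuous_uncurry_threeTermSum.norm continuous_const
  convert (hbox.inter_right hclosed).image continuous_fst
  ext ⟨t, a, b⟩
  simp [smallValueParams, and_assoc]

theorem exists_threeTermSum_eq_exponentialSum_of_mem (hη : η < Real.exp (-r)) {p : ℝ × ℂ × ℂ}
    (hp : p ∈ smallValueParams T r η) :
    ∃ (n : ℕ) (c μ : Fin (n + 2) → ℂ), Function.Injective μ ∧ (∀ i, c i ≠ 0) ∧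
      threeTermSum p = exponentialSum c μ := by
  obtain ⟨t, a, b⟩ := p
  obtain ⟨-, ha, hb, z, hz, hle⟩ := hp
  rw [mem_closedBall_zero_iff] at hz
  have hlt : ‖threeTermSum (t, a, b) z‖ < Real.exp (-r) := hle.trans_lt hη
  refine exists_threeTermSum_eq_exponentialSum (norm_pos_iff.1 (by simp [ha]))
    (norm_pos_iff.1 (by simp [hb])) ?_ ?_
  · rintro rfl h
    have hnorm : ‖threeTermSum (0, a, b) z‖ = Real.exp z.im := by
      simp [threeTermSum, h, hb, norm_exp]
    rw [hnorm, Real.exp_lt_exp] at hlt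
    linarith [neg_le_of_abs_le (abs_im_le_norm z)]
  · rintro rfl h
    have hone : threeTermSum (1, a, b) z = 1 := by
      simp [threeTermSum, add_assoc, ← add_mul, h]
    rw [hone, norm_one, Real.one_lt_exp_iff] at hlt
    linarith [norm_nonneg z]

theorem exists_forall_zeroControl_phiTilde (hT : IsCompact T) (hη : η < Real.exp (-r)) :
    ∃ M C, 1 ≤ M ∧ 0 < C ∧ ∀ t ∈ T, ∀ x : ℝ, (∃ z ∈ closedBall (x : ℂ) r, ‖phiTilde t z‖ ≤ η) →
      ZeroControl (phiTilde t) x r M C := by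
  have hzero p (hp : p ∈ smallValueParams T r η) : ∃ w, threeTermSum p w = 0 := by
    obtain ⟨n, c, μ, hμ, hc, hp⟩ := exists_threeTermSum_eq_exponentialSum_of_mem hη hp
    exact hp ▸ exists_exponentialSum_eq_zero hμ hc
  have hne p (hp : p ∈ smallValueParams T r η) : ∃ z, threeTermSum p z ≠ 0 := by
    obtain ⟨n, c, μ, hμ, hc, hp⟩ := exists_threeTermSum_eq_exponentialSum_of_mem hη hp
    exact hp ▸ exists_exponentialSum_ne_zero hμ hc
  obtain ⟨M, C, hMC⟩ := exists_forall_mem_zeroControl continuous_uncurry_threeTermSum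
    differentiable_threeTermSum (isCompact_smallValueParams hT) hzero hne 0 r
  refine ⟨max M 1, max C 1, le_max_right _ _, by positivity, fun t ht x ⟨z, hz, hle⟩ ↦ ?_⟩
  refine ZeroControl.of_comp_add ?_
  simp only [phiTilde_add]
  refine (hMC _ ⟨ht, ?_, ?_, z - x, ?_, ?_⟩).mono (le_max_left _ _) (le_max_left _ _)
  · simp [norm_exp]
  · simp [norm_exp]
  · rwa [mem_closedBall_zero_iff, ← mem_closedBall_iff_norm]
  · rwa [← phiTilde_add, add_sub_cancel]

theorem phiTilde_zeroes_and_small_values_general (hT : IsCompact T) (hη : η < Real.exp (-r)) :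
    ∃ M : ℕ, 1 ≤ M ∧ ∃ C > (0 : ℝ), ∀ t ∈ T, ∀ x : ℝ,
      (∀ Z : Finset ℂ, (∀ z ∈ Z, z ∈ closedBall (x : ℂ) r ∧ phiTilde t z = 0) → Z.card ≤ M) ∧
      (∀ ε ≤ η, ∀ z ∈ closedBall (x : ℂ) r, ‖phiTilde t z‖ ≤ ε →
        ∃ lam : ℂ, phiTilde t lam = 0 ∧ ‖z - lam‖ ≤ C * ε ^ (M : ℝ)⁻¹) := by
  obtain ⟨M, C, hM, hC, h⟩ :=
    exists_forall_zeroControl_phiTilde (η := max η 0) hT (max_lt hη (Real.exp_pos _))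
  refine ⟨M, hM, C, hC, fun t ht x ↦ ⟨fun Z hZ ↦ ?_, fun ε hε z hz hle ↦ ?_⟩⟩
  · rcases Z.eq_empty_or_nonempty with rfl | ⟨z, hz⟩
    · simp
    · exact (h t ht x ⟨z, (hZ z hz).1, by simp [(hZ z hz).2]⟩).card_le Z hZ
  · have hr : 0 ≤ r := nonempty_closedBall.1 ⟨z, hz⟩
    have hη₁ : η < 1 := hη.trans_le (Real.exp_le_one_iff.2 (neg_nonpos.2 hr))
    obtain ⟨lam, hlam, hdist⟩ := (h t ht x ⟨z, hz, hle.trans (hε.trans (le_max_left _ _))⟩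
      ).exists_zero_near z hz (hle.trans (hε.trans hη₁.le))
    exact ⟨lam, hlam, hdist.trans (by gcongr)⟩

end SmallValues

/-- In every unit disc centered at a real point, `φ̃_t` has at most `M` zeroes, and
the set where `|φ̃_t| ≤ ε` is contained in the `C·ε^{1/M}`-neighborhoods of the zeroes. -/
theorem phiTilde_zeroes_and_small_values :
    ∃ M : ℕ, 1 ≤ M ∧ ∃ C > (0:ℝ), ∀ t ∈ Set.Icc (0:ℝ) 1, ∀ x : ℝ,
      (∀ Z : Finset ℂ, (∀ z ∈ Z, z ∈ Metric.ball (x : ℂ) 1 ∧ phiTilde t z = 0) →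
        Z.card ≤ M) ∧
      (∀ ε : ℝ, 0 < ε → ε < 1 / 3 → ∀ z ∈ Metric.ball (x : ℂ) 1,
        ‖phiTilde t z‖ ≤ ε →
        ∃ lam : ℂ, phiTilde t lam = 0 ∧ ‖z - lam‖ ≤ C * ε ^ ((M : ℝ)⁻¹)) := by
  have hη : (1 / 3 : ℝ) < Real.exp (-1) := by linarith [Real.exp_neg_one_gt_d9]
  obtain ⟨M, hM, C, hC, h⟩ :=
    phiTilde_zeroes_and_small_values_general (T := Set.Icc 0 1) isCompact_Icc hη
  refine ⟨M, hM, C, hC, fun t ht x ↦ ⟨fun Z hZ ↦ (h t ht x).1 Z fun z hz ↦ ?_, ?_⟩⟩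
  · exact ⟨ball_subset_closedBall (hZ z hz).1, (hZ z hz).2⟩
  · exact fun ε _ hε z hz ↦ (h t ht x).2 ε hε.le z (ball_subset_closedBall hz)
end

section
/- There is an absolute constant c > 0 with the following property. Let z_0, τ_0 ∈ ℂ and δ_1, δ_2, η, C > 0, and let Φ(z,τ) be a function holomorphic in each of the two complex variables on B(z_0, δ_1) × B(τ_0, δ_2), with Φ(z_0, τ_0) = 0, |∂Φ/∂z(z,τ)| ≥ η and |∂Φ/∂τ(z,τ)| ≤ C for all (z,τ) ∈ B(z_0, δ_1) × B(τ_0, δ_2). Set ε := min(c·δ_1·η/C, δ_2). Then there exists a unique holomorphic function λ : B(τ_0, ε) → B(z_0, δ_1) such that λ(τ_0) = z_0 and Φ(λ(τ), τ) = 0 for all τ ∈ B(τ_0, ε); moreover λ'(τ) = −(∂Φ/∂τ)(λ(τ), τ) / (∂Φ/∂z)(λ(τ), τ) for all τ ∈ B(τ_0, ε). -/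
open Metric

/-!
The branch `λ` has to solve `λ' = F(τ, λ)` with `F = -(∂Φ/∂τ) / (∂Φ/∂z)`, and `‖F‖ ≤ C / η`. The
bound on `∂Φ/∂τ` makes `Φ` jointly continuous, hence jointly holomorphic (Osgood), so `F` is
holomorphic. If `ε C / η ≤ δ₁ / 4`, the Picard map of this equation preserves the holomorphic
functions on `B(τ₀, ε)` with values in the closed ball of radius `δ₁ / 4` around `z₀`. By the
Schwarz lemma on balls of radius `3δ₁ / 4`, `F` is there Lipschitz in `z` with constant
`(2C / η) / (3δ₁ / 4)`, so the Picard map contracts by the factor `2 / 3`. Along its fixed point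
`Φ(λ(τ), τ)` has derivative zero. Two branches agree near `τ₀` by the implicit function theorem,
hence everywhere by the identity theorem.
-/

section

open Filter Function Set Topology UniformFun
open scoped NNReal UniformConvergence

variable {E : Type*} [NormedAddCommGroup E] [NormedSpace ℂ E]

theorem tendstoLocallyUniformlyOn_iff_tendsto_uncurry {ι α β : Type*} [TopologicalSpace α]
    [UniformSpace β] {F : ι → α → β} {f : α → β} {p : Filter ι} {s : Set α}
    (hf : ContinuousOn f s) :
    TendstoLocallyUniformlyOn F f p s ↔
      ∀ x ∈ s, Tendsto (uncurry F) (p ×ˢ 𝓝[s] x) (𝓝 (f x)) := by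
  rw [tendstoLocallyUniformlyOn_iff_forall_tendsto]
  refine forall₂_congr fun x hx => ?_
  have hfx : Tendsto (fun y : ι × α => f y.2) (p ×ˢ 𝓝[s] x) (𝓝 (f x)) :=
    (hf x hx).tendsto.comp tendsto_snd
  exact ⟨hfx.congr_uniformity, fun h => (hfx.prodMk_nhds h).mono_right (nhds_le_uniformity _)⟩

theorem tendsto_slope_snd {𝕜 X F : Type*} [NontriviallyNormedField 𝕜] [NormedAddCommGroup X]
    [NormedSpace 𝕜 X] [NormedAddCommGroup F] [NormedSpace 𝕜 F] {g : X × 𝕜 → F}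
    {g' : X × 𝕜 →L[𝕜] F} {x : X} {z : 𝕜} (hg : HasStrictFDerivAt g g' (x, z)) :
    Tendsto (fun p : 𝕜 × X => slope (fun w => g (p.2, w)) z p.1) (𝓝[≠] z ×ˢ 𝓝 x)
      (𝓝 (g' (0, 1))) := by
  have hpairs : Tendsto (fun p : 𝕜 × X => ((p.2, p.1), (p.2, z))) (𝓝[≠] z ×ˢ 𝓝 x)
      (𝓝 ((x, z), (x, z))) := by
    have hcont : Continuous fun p : 𝕜 × X => ((p.2, p.1), (p.2, z)) := by fun_prop
    refine (hcont.tendsto' (z, x) _ rfl).mono_left ?_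
    rw [nhds_prod_eq]
    exact prod_mono_left _ nhdsWithin_le_nhds
  have hsub (p : 𝕜 × X) : ((p.2, p.1) : X × 𝕜) - (p.2, z) = (p.1 - z) • (0, 1) := by simp
  have hlittle : (fun p : 𝕜 × X => g (p.2, p.1) - g (p.2, z) - (p.1 - z) • g' (0, 1))
      =o[𝓝[≠] z ×ˢ 𝓝 x] fun p => p.1 - z := by
    have := hg.isLittleO.comp_tendsto hpairs
    simp only [comp_def, hsub, map_smul] at this
    exact this.trans_isBigO (.of_bound ‖((0, 1) : X × 𝕜)‖ (.of_forall fun p => by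
      rw [norm_smul, mul_comm]))
  refine tendsto_sub_nhds_zero_iff.1 (hlittle.tendsto_inv_smul_nhds_zero.congr' ?_)
  filter_upwards [tendsto_fst.eventually eventually_mem_nhdsWithin] with p (hp : p.1 ≠ z)
  rw [smul_sub, inv_smul_smul₀ (sub_ne_zero.2 hp), slope_def_module]

section Slice

variable {𝕜 X Y G : Type*} [NontriviallyNormedField 𝕜]
    [NormedAddCommGroup X] [NormedSpace 𝕜 X] [NormedAddCommGroup Y] [NormedSpace 𝕜 Y]
    [NormedAddCommGroup G] [NormedSpace 𝕜 G] {f : X → Y → G} {V : Set X} {U : Set Y}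

theorem differentiableOn_slice_left {y : Y} (hf : DifferentiableOn 𝕜 (uncurry f) (V ×ˢ U))
    (hy : y ∈ U) : DifferentiableOn 𝕜 (f · y) V :=
  hf.comp (f := fun x => (x, y)) (by fun_prop) fun _ hx => ⟨hx, hy⟩

theorem differentiableOn_slice_right {x : X} (hf : DifferentiableOn 𝕜 (uncurry f) (V ×ˢ U))
    (hx : x ∈ V) : DifferentiableOn 𝕜 (f x) U :=
  hf.comp (f := fun y => (x, y)) (by fun_prop) fun _ hy => ⟨hx, hy⟩

end Slice

section Osgood

variable [CompleteSpace E] {f : ℂ → ℂ → E} {V U : Set ℂ} {τ z : ℂ}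

theorem continuousOn_uncurry_deriv {X : Type*} [TopologicalSpace X] {f : X → ℂ → E} {S : Set X}
    {U : Set ℂ} (hU : IsOpen U) (hf : ContinuousOn (uncurry f) (S ×ˢ U))
    (hd : ∀ x ∈ S, DifferentiableOn ℂ (f x) U) :
    ContinuousOn (uncurry fun x => deriv (f x)) (S ×ˢ U) := by
  rintro ⟨x, z⟩ ⟨hx, hz⟩
  have hlim : TendstoLocallyUniformlyOn f (f x) (𝓝[S] x) U := by
    refine (tendstoLocallyUniformlyOn_iff_tendsto_uncurry (hd x hx).continuousOn).2 fun w hw => ?_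
    rw [← nhdsWithin_prod_eq]
    exact hf (x, w) ⟨hx, hw⟩
  have hderiv := hlim.deriv (eventually_mem_nhdsWithin.mono hd) hU
  rw [ContinuousWithinAt, nhdsWithin_prod_eq]
  exact (tendstoLocallyUniformlyOn_iff_tendsto_uncurry
    ((hd x hx).deriv hU).continuousOn).1 hderiv z hz

theorem hasStrictFDerivAt_uncurry_of_continuousOn (hV : IsOpen V) (hU : IsOpen U)
    (hf : ContinuousOn (uncurry f) (V ×ˢ U)) (hfV : ∀ z ∈ U, DifferentiableOn ℂ (f · z) V)
    (hfU : ∀ τ ∈ V, DifferentiableOn ℂ (f τ) U) (hτ : τ ∈ V) (hz : z ∈ U) :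
    HasStrictFDerivAt (uncurry f)
      ((ContinuousLinearMap.toSpanSingleton ℂ (deriv (f · z) τ)).coprod
        (ContinuousLinearMap.toSpanSingleton ℂ (deriv (f τ) z))) (τ, z) := by
  have hVU : V ×ˢ U ∈ 𝓝 (τ, z) := (hV.prod hU).mem_nhds ⟨hτ, hz⟩
  have hcontU : ContinuousAt (fun p : ℂ × ℂ => deriv (f p.1) p.2) (τ, z) :=
    (continuousOn_uncurry_deriv hU hf hfU).continuousAt hVU
  have hcontV : ContinuousAt (fun p : ℂ × ℂ => deriv (f · p.2) p.1) (τ, z) :=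
    ((continuousOn_uncurry_deriv (f := flip f) hV
      (hf.comp continuous_swap.continuousOn (mapsTo_swap_prod U V)) hfV).comp
      continuous_swap.continuousOn (mapsTo_swap_prod V U)).continuousAt hVU
  have hspan : Continuous (ContinuousLinearMap.toSpanSingleton ℂ : E → ℂ →L[ℂ] E) :=
    (ContinuousLinearMap.toSpanSingletonCLE (𝕜 := ℂ) (E := E)).continuous
  refine hasStrictFDerivAt_uncurry_coprod (𝕜 := ℂ) (u := (τ, z)) (f := f)
    (f₁ := fun τ z => .toSpanSingleton ℂ (deriv (f · z) τ))
    (f₂ := fun τ z => .toSpanSingleton ℂ (deriv (f τ) z)) ?_ ?_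
    (hspan.continuousAt.comp hcontV) (hspan.continuousAt.comp hcontU)
  · filter_upwards [hVU] with p hp
    exact ((hfV p.2 hp.2).differentiableAt (hV.mem_nhds hp.1)).hasDerivAt.hasFDerivAt
  · filter_upwards [hVU] with p hp
    exact ((hfU p.1 hp.1).differentiableAt (hU.mem_nhds hp.2)).hasDerivAt.hasFDerivAt

theorem differentiableOn_uncurry_of_continuousOn (hV : IsOpen V) (hU : IsOpen U)
    (hf : ContinuousOn (uncurry f) (V ×ˢ U)) (hfV : ∀ z ∈ U, DifferentiableOn ℂ (f · z) V)
    (hfU : ∀ τ ∈ V, DifferentiableOn ℂ (f τ) U) :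
    DifferentiableOn ℂ (uncurry f) (V ×ˢ U) := fun _ hp =>
  (hasStrictFDerivAt_uncurry_of_continuousOn hV hU hf hfV hfU hp.1 hp.2).differentiableAt
    |>.differentiableWithinAt

theorem hasStrictFDerivAt_uncurry_of_differentiableOn (hV : IsOpen V) (hU : IsOpen U)
    (hf : DifferentiableOn ℂ (uncurry f) (V ×ˢ U)) (hτ : τ ∈ V) (hz : z ∈ U) :
    HasStrictFDerivAt (uncurry f)
      ((ContinuousLinearMap.toSpanSingleton ℂ (deriv (f · z) τ)).coprod
        (ContinuousLinearMap.toSpanSingleton ℂ (deriv (f τ) z))) (τ, z) :=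
  hasStrictFDerivAt_uncurry_of_continuousOn hV hU hf.continuousOn
    (fun _ h => differentiableOn_slice_left hf h) (fun _ h => differentiableOn_slice_right hf h)
    hτ hz

theorem differentiableOn_uncurry_deriv_right (hV : IsOpen V) (hU : IsOpen U)
    (hf : DifferentiableOn ℂ (uncurry f) (V ×ˢ U)) :
    DifferentiableOn ℂ (uncurry fun τ => deriv (f τ)) (V ×ˢ U) := by
  have hfU := fun τ (hτ : τ ∈ V) => differentiableOn_slice_right hf hτ
  have hcont := continuousOn_uncurry_deriv hU hf.continuousOn hfU
  refine differentiableOn_uncurry_of_continuousOn hV hU hcont (fun z hz => ?_)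
    fun τ hτ => (hfU τ hτ).deriv hU
  have hcontz : ContinuousOn (fun τ => deriv (f τ) z) V :=
    hcont.comp (f := fun τ => (τ, z)) (by fun_prop) fun τ hτ => ⟨hτ, hz⟩
  have hlim : TendstoLocallyUniformlyOn (fun w τ => slope (f τ) z w) (fun τ => deriv (f τ) z)
      (𝓝[≠] z) V := by
    refine (tendstoLocallyUniformlyOn_iff_tendsto_uncurry hcontz).2 fun τ hτ => ?_
    rw [hV.nhdsWithin_eq hτ]
    simpa [uncurry_def] using
      tendsto_slope_snd (hasStrictFDerivAt_uncurry_of_differentiableOn hV hU hf hτ hz)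
  refine hlim.differentiableOn ?_ hV
  filter_upwards [mem_nhdsWithin_of_mem_nhds (hU.mem_nhds hz)] with w hw
  exact ((differentiableOn_slice_left hf hw).sub (differentiableOn_slice_left hf hz)).const_smul _

theorem differentiableOn_uncurry_deriv_left (hV : IsOpen V) (hU : IsOpen U)
    (hf : DifferentiableOn ℂ (uncurry f) (V ×ˢ U)) :
    DifferentiableOn ℂ (uncurry fun τ z => deriv (f · z) τ) (V ×ˢ U) :=
  (differentiableOn_uncurry_deriv_right (f := flip f) hU hV
    (hf.comp (ContinuousLinearEquiv.prodComm ℂ ℂ ℂ).differentiableOn (mapsTo_swap_prod U V))).comp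
    (ContinuousLinearEquiv.prodComm ℂ ℂ ℂ).differentiableOn (mapsTo_swap_prod V U)

theorem hasDerivAt_comp_graph (hV : IsOpen V) (hU : IsOpen U)
    (hf : DifferentiableOn ℂ (uncurry f) (V ×ˢ U)) {l : ℂ → ℂ} {l' : ℂ} (hτ : τ ∈ V)
    (hlτ : l τ ∈ U) (hl : HasDerivAt l l' τ) :
    HasDerivAt (fun t => f t (l t)) (deriv (f · (l τ)) τ + l' • deriv (f τ) (l τ)) τ := by
  have hfl := (hasStrictFDerivAt_uncurry_of_differentiableOn hV hU hf hτ hlτ).hasFDerivAt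
  simpa [uncurry] using!
    hfl.comp_hasDerivAt (f := fun t => (t, l t)) τ ((hasDerivAt_id τ).prodMk hl)

theorem differentiableOn_uncurry_of_norm_deriv_le {C : ℝ≥0} (hV : IsOpen V) (hVc : Convex ℝ V)
    (hU : IsOpen U) (hfV : ∀ z ∈ U, DifferentiableOn ℂ (f · z) V)
    (hfU : ∀ τ ∈ V, DifferentiableOn ℂ (f τ) U)
    (hC : ∀ τ ∈ V, ∀ z ∈ U, ‖deriv (f · z) τ‖ ≤ C) :
    DifferentiableOn ℂ (uncurry f) (V ×ˢ U) := by
  refine differentiableOn_uncurry_of_continuousOn hV hU ?_ hfV hfU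
  refine continuousOn_prod_of_continuousOn_lipschitzOnWith _ C (fun τ hτ => (hfU τ hτ).continuousOn)
    fun z hz => hVc.lipschitzOnWith_of_nnnorm_deriv_le (fun τ hτ => ?_) fun τ hτ => hC τ hτ z hz
  exact (hfV z hz).differentiableAt (hV.mem_nhds hτ)

end Osgood

theorem lipschitzOnWith_of_norm_le {F : Type*} [NormedAddCommGroup F] [NormedSpace ℂ F]
    {f : E → F} {U S : Set E} {M s : ℝ≥0} (hS : Convex ℝ S) (hs : 0 < s)
    (hSU : ∀ z ∈ S, ball z s ⊆ U) (hf : DifferentiableOn ℂ f U) (hM : ∀ z ∈ U, ‖f z‖ ≤ M) :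
    LipschitzOnWith (2 * M / s) f S := by
  refine hS.lipschitzOnWith_of_nnnorm_fderiv_le (𝕜 := ℂ) (fun z hz => ?_) fun z hz => ?_
  · exact (hf.mono (hSU z hz)).differentiableAt (ball_mem_nhds z hs)
  · refine Complex.norm_fderiv_le_div_of_mapsTo_ball (hf.mono (hSU z hz)) (fun w hw => ?_) hs
    calc dist (f w) (f z) ≤ ‖f w‖ + ‖f z‖ := dist_le_norm_add_norm _ _
      _ ≤ 2 * M := by
        linarith [hM w (hSU z hz hw), hM z (hSU z hz (mem_ball_self hs))]

/-- The functions that are holomorphic on `U` and take all their values in `B`, with the uniform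
extended distance: the space on which the Picard map acts. They are total functions, so they are
also constrained (to lie in `B`) off `U`, where the distance sees them too. -/
def holomorphicMapsTo (U : Set ℂ) (B : Set E) : Set (ℂ →ᵤ E) :=
  {l | DifferentiableOn ℂ (toFun l) U ∧ ∀ τ, toFun l τ ∈ B}

theorem isClosed_holomorphicMapsTo [CompleteSpace E] {U : Set ℂ} {B : Set E}
    (hU : IsOpen U) (hB : IsClosed B) : IsClosed (holomorphicMapsTo U B) := by
  refine isClosed_iff_forall_filter.2 fun l F _ hF hl => ?_
  have hunif := UniformFun.tendsto_iff_tendstoUniformly.1 (tendsto_id'.2 hl)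
  have hF' := le_principal_iff.1 hF
  constructor
  · exact hunif.tendstoLocallyUniformly.tendstoLocallyUniformlyOn.differentiableOn
      (mem_of_superset hF' fun _ h => h.1) hU
  · exact fun τ => hB.mem_of_tendsto (hunif.tendsto_at τ) (mem_of_superset hF' fun _ h => h.2 τ)

theorem edist_ne_top_of_mem_holomorphicMapsTo {U : Set ℂ} {B : Set E} (hB : Bornology.IsBounded B)
    {l m : ℂ →ᵤ E} (hl : l ∈ holomorphicMapsTo U B) (hm : m ∈ holomorphicMapsTo U B) :
    edist l m ≠ ⊤ := by
  obtain ⟨C, hC⟩ := isBounded_iff_nndist.1 hB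
  exact ((UniformFun.edist_le.2 fun τ => edist_le_coe.2 (hC (hl.2 τ) (hm.2 τ))).trans_lt
    ENNReal.coe_lt_top).ne

section Picard

variable {F : ℂ → E → E} {τ₀ : ℂ} {z₀ : E} {ε K M R : ℝ≥0}

/-- `g` is the Picard iterate of `l` for the initial value problem `y' = F τ y`, `y τ₀ = z₀` on the
ball of radius `ε`. Off that ball, where the equation says nothing, `g` is given the value `z₀`, so
that it stays determined by `l` and within the range prescribed for solutions. -/
structure IsPicardIterate (F : ℂ → E → E) (τ₀ : ℂ) (z₀ : E) (ε : ℝ≥0) (l g : ℂ → E) : Prop where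
  apply_center : g τ₀ = z₀
  hasDerivAt : ∀ τ ∈ ball τ₀ ε, HasDerivAt g (F τ (l τ)) τ
  apply_of_notMem : ∀ τ ∉ ball τ₀ ε, g τ = z₀

theorem dist_le_of_hasDerivAt_ball {g₁ g₂ g₁' g₂' : ℂ → E} {C : ℝ≥0} {τ : ℂ}
    (h₀ : g₁ τ₀ = g₂ τ₀) (hg₁ : ∀ τ ∈ ball τ₀ ε, HasDerivAt g₁ (g₁' τ) τ)
    (hg₂ : ∀ τ ∈ ball τ₀ ε, HasDerivAt g₂ (g₂' τ) τ)
    (hC : ∀ τ ∈ ball τ₀ ε, dist (g₁' τ) (g₂' τ) ≤ C) (hτ : τ ∈ ball τ₀ ε) :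
    dist (g₁ τ) (g₂ τ) ≤ C * ε := by
  have hτ₀ : τ₀ ∈ ball τ₀ ε := mem_ball_self (pos_of_mem_ball hτ)
  calc dist (g₁ τ) (g₂ τ) = ‖(g₁ - g₂) τ - (g₁ - g₂) τ₀‖ := by simp [h₀, dist_eq_norm]
    _ ≤ C * ‖τ - τ₀‖ := (convex_ball τ₀ ε).norm_image_sub_le_of_norm_hasDerivWithin_le
        (fun t ht => ((hg₁ t ht).sub (hg₂ t ht)).hasDerivWithinAt)
        (fun t ht => by simpa [dist_eq_norm] using hC t ht) hτ₀ hτ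
    _ ≤ C * ε := by gcongr; exact (mem_ball_iff_norm.1 hτ).le

namespace IsPicardIterate

variable {l g : ℂ → E}

theorem mem_closedBall (hg : IsPicardIterate F τ₀ z₀ ε l g)
    (hM : ∀ τ ∈ ball τ₀ ε, ‖F τ (l τ)‖ ≤ M) (hR : M * ε ≤ R) (τ : ℂ) :
    g τ ∈ closedBall z₀ R := by
  by_cases hτ : τ ∈ ball τ₀ ε
  · have := dist_le_of_hasDerivAt_ball (g₂ := fun _ => z₀) (g₂' := 0) hg.apply_center
      hg.hasDerivAt (fun _ _ => hasDerivAt_const _ _) (by simpa using hM) hτ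
    exact this.trans (mod_cast hR)
  · simp [hg.apply_of_notMem τ hτ]

theorem edist_le {l₁ l₂ g₁ g₂ : ℂ →ᵤ E}
    (hg₁ : IsPicardIterate F τ₀ z₀ ε (toFun l₁) (toFun g₁))
    (hg₂ : IsPicardIterate F τ₀ z₀ ε (toFun l₂) (toFun g₂)) (hl : edist l₁ l₂ ≠ ⊤)
    (hK : ∀ τ ∈ ball τ₀ ε, dist (F τ (toFun l₁ τ)) (F τ (toFun l₂ τ)) ≤
      K * dist (toFun l₁ τ) (toFun l₂ τ)) :
    edist g₁ g₂ ≤ ↑(K * ε) * edist l₁ l₂ := by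
  lift edist l₁ l₂ to ℝ≥0 using hl with d hd
  have hd (τ : ℂ) : dist (toFun l₁ τ) (toFun l₂ τ) ≤ d :=
    mod_cast edist_le_coe.1 (UniformFun.edist_eval_le.trans hd.ge)
  rw [← ENNReal.coe_mul, mul_right_comm]
  refine UniformFun.edist_le.2 fun τ => edist_le_coe.2 ?_
  by_cases hτ : τ ∈ ball τ₀ ε
  · refine dist_le_of_hasDerivAt_ball (hg₁.apply_center.trans hg₂.apply_center.symm)
      hg₁.hasDerivAt hg₂.hasDerivAt (fun t ht => (hK t ht).trans ?_) hτ
    push_cast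
    gcongr
    exact hd t
  · simp [hg₁.apply_of_notMem τ hτ, hg₂.apply_of_notMem τ hτ]

theorem mem_holomorphicMapsTo (hg : IsPicardIterate F τ₀ z₀ ε l g)
    (hM : ∀ τ ∈ ball τ₀ ε, ‖F τ (l τ)‖ ≤ M) (hR : M * ε ≤ R) :
    ofFun g ∈ holomorphicMapsTo (ball τ₀ ε) (closedBall z₀ R) :=
  ⟨fun τ hτ => (hg.hasDerivAt τ hτ).differentiableAt.differentiableWithinAt,
    hg.mem_closedBall hM hR⟩

end IsPicardIterate

variable [CompleteSpace E]

theorem exists_isPicardIterate {B : Set E} {l : ℂ → E} (hε : 0 < ε)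
    (hF : DifferentiableOn ℂ (uncurry F) (ball τ₀ ε ×ˢ B))
    (hl : DifferentiableOn ℂ l (ball τ₀ ε)) (hlB : MapsTo l (ball τ₀ ε) B) :
    ∃ g, IsPicardIterate F τ₀ z₀ ε l g := by
  have hFl : DifferentiableOn ℂ (fun τ => F τ (l τ)) (ball τ₀ ε) :=
    hF.comp (f := fun τ => (τ, l τ)) (differentiableOn_id.prodMk hl) fun τ hτ => ⟨hτ, hlB hτ⟩
  obtain ⟨g, hg₀, hg⟩ := hFl.isExactOn_ball.with_val_at τ₀ z₀
  classical
  refine ⟨(ball τ₀ ε).piecewise g fun _ => z₀, ?_, fun τ hτ => ?_, fun τ hτ => ?_⟩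
  · rw [piecewise_eq_of_mem _ _ _ (mem_ball_self (by exact_mod_cast hε)), hg₀]
  · exact (hg τ hτ).congr_of_eventuallyEq
      ((piecewise_eqOn _ _ _).eventuallyEq_of_mem (isOpen_ball.mem_nhds hτ))
  · exact piecewise_eq_of_notMem _ _ _ hτ

theorem exists_hasDerivAt_of_lipschitzOnWith (hε : 0 < ε)
    (hF : DifferentiableOn ℂ (uncurry F) (ball τ₀ ε ×ˢ closedBall z₀ R))
    (hK : ∀ τ ∈ ball τ₀ ε, LipschitzOnWith K (F τ) (closedBall z₀ R))
    (hM : ∀ τ ∈ ball τ₀ ε, ∀ z ∈ closedBall z₀ R, ‖F τ z‖ ≤ M) (hR : M * ε ≤ R)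
    (hKε : K * ε < 1) :
    ∃ l : ℂ → E, l τ₀ = z₀ ∧
      ∀ τ ∈ ball τ₀ ε, l τ ∈ closedBall z₀ R ∧ HasDerivAt l (F τ (l τ)) τ := by
  set L := holomorphicMapsTo (ball τ₀ ε) (closedBall z₀ (R : ℝ))
  have hstep : ∀ l ∈ L, ∃ g, IsPicardIterate F τ₀ z₀ ε (toFun l) (toFun g) := fun l hl =>
    exists_isPicardIterate hε hF hl.1 fun τ _ => hl.2 τ
  choose! T hT using hstep
  have hTL : MapsTo T L L := fun l hl =>
    (hT l hl).mem_holomorphicMapsTo (fun τ hτ => hM τ hτ _ (hl.2 τ)) hR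
  have hcontr : ContractingWith (K * ε) (hTL.restrict T L L) :=
    ⟨hKε, fun l m => (hT l l.2).edist_le (hT m m.2)
      (edist_ne_top_of_mem_holomorphicMapsTo isBounded_closedBall l.2 m.2)
      fun τ hτ => (hK τ hτ).dist_le_mul _ (l.2.2 τ) _ (m.2.2 τ)⟩
  have hcomplete : IsComplete L :=
    (isClosed_holomorphicMapsTo isOpen_ball isClosed_closedBall).isComplete
  have hconst : ofFun (fun _ => z₀) ∈ L :=
    ⟨differentiableOn_const _, fun _ => mem_closedBall_self R.2⟩
  obtain ⟨l, hl, hfix, -⟩ := hcontr.exists_fixedPoint' hcomplete hTL hconst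
    (edist_ne_top_of_mem_holomorphicMapsTo isBounded_closedBall hconst (hTL hconst))
  have hsol := hT l hl
  rw [hfix.eq] at hsol
  exact ⟨toFun l, hsol.apply_center, fun τ hτ => ⟨hl.2 τ, hsol.hasDerivAt τ hτ⟩⟩

theorem exists_hasDerivAt_of_norm_le {ε M r : ℝ} (hε : 0 < ε) (hr : 0 < r)
    (hF : DifferentiableOn ℂ (uncurry F) (ball τ₀ ε ×ˢ ball z₀ r))
    (hM : ∀ τ ∈ ball τ₀ ε, ∀ z ∈ ball z₀ r, ‖F τ z‖ ≤ M) (hMε : M * ε ≤ r / 4) :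
    ∃ l : ℂ → E, l τ₀ = z₀ ∧
      ∀ τ ∈ ball τ₀ ε, l τ ∈ ball z₀ r ∧ HasDerivAt l (F τ (l τ)) τ := by
  have hM₀ : 0 ≤ M := (norm_nonneg _).trans (hM τ₀ (mem_ball_self hε) z₀ (mem_ball_self hr))
  lift ε to ℝ≥0 using hε.le
  lift M to ℝ≥0 using hM₀
  lift r to ℝ≥0 using hr.le
  norm_cast at hε hr
  have hquarter : closedBall z₀ (r / 4 : ℝ≥0) ⊆ ball z₀ r :=
    closedBall_subset_ball (by push_cast; linarith [NNReal.coe_pos.2 hr])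
  have hLip (τ) (hτ : τ ∈ ball τ₀ ε) :
      LipschitzOnWith (2 * M / (3 * r / 4)) (F τ) (closedBall z₀ (r / 4 : ℝ≥0)) := by
    refine lipschitzOnWith_of_norm_le (convex_closedBall _ _) (by positivity)
      (fun z hz => ball_subset_ball' ?_) (differentiableOn_slice_right hF hτ) (hM τ hτ)
    have hz := mem_closedBall.1 hz
    push_cast at hz ⊢
    linarith
  have hcontr : 2 * M / (3 * r / 4) * ε < 1 := by
    rw [div_mul_eq_mul_div, div_lt_one (by positivity), ← NNReal.coe_lt_coe]
    push_cast
    linarith [NNReal.coe_pos.2 hr]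
  obtain ⟨l, hl₀, hl⟩ := exists_hasDerivAt_of_lipschitzOnWith hε
    (hF.mono (prod_mono_right hquarter)) hLip (fun τ hτ z hz => hM τ hτ z (hquarter hz))
    (mod_cast hMε) hcontr
  exact ⟨l, hl₀, fun τ hτ => ⟨hquarter (hl τ hτ).1, (hl τ hτ).2⟩⟩

end Picard

section Branch

theorem eventuallyEq_of_apply_eq {𝕜 E₁ E₂ F : Type*} [NontriviallyNormedField 𝕜]
    [NormedAddCommGroup E₁] [NormedSpace 𝕜 E₁] [CompleteSpace E₁] [NormedAddCommGroup E₂]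
    [NormedSpace 𝕜 E₂] [CompleteSpace E₂] [NormedAddCommGroup F] [NormedSpace 𝕜 F]
    [CompleteSpace F] {f : E₁ × E₂ → F} {f' : E₁ × E₂ →L[𝕜] F} {x : E₁} {l m : E₁ → E₂}
    (hf : HasStrictFDerivAt f f' (x, l x)) (hf' : (f' ∘L .inr 𝕜 E₁ E₂).IsInvertible)
    (hl : ContinuousAt l x) (hm : ContinuousAt m x) (hlm : l x = m x)
    (hfl : ∀ᶠ y in 𝓝 x, f (y, l y) = f (x, l x)) (hfm : ∀ᶠ y in 𝓝 x, f (y, m y) = f (x, l x)) :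
    l =ᶠ[𝓝 x] m := by
  have hiff := hf.eventually_apply_eq_iff_implicitFunctionOfProdDomain hf'
  have hlx : Tendsto (fun y => (y, l y)) (𝓝 x) (𝓝 (x, l x)) := tendsto_id.prodMk_nhds hl
  have hmx : Tendsto (fun y => (y, m y)) (𝓝 x) (𝓝 (x, l x)) :=
    tendsto_id.prodMk_nhds (hlm ▸ hm.tendsto)
  filter_upwards [hlx.eventually hiff, hmx.eventually hiff, hfl, hfm] with y hly hmy hfly hfmy
  exact (hly.1 hfly).symm.trans (hmy.1 hfmy)

variable {f : ℂ → ℂ → ℂ} {τ₀ z₀ : ℂ}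

theorem eqOn_of_apply_eq {V U : Set ℂ} {l m : ℂ → ℂ} (hV : IsOpen V) (hVc : IsPreconnected V)
    (hU : IsOpen U) (hf : DifferentiableOn ℂ (uncurry f) (V ×ˢ U)) (hτ₀ : τ₀ ∈ V)
    (hlU : l τ₀ ∈ U) (hne : deriv (f τ₀) (l τ₀) ≠ 0) (hl : DifferentiableOn ℂ l V)
    (hm : DifferentiableOn ℂ m V) (hlm : l τ₀ = m τ₀)
    (hfl : ∀ τ ∈ V, f τ (l τ) = f τ₀ (l τ₀)) (hfm : ∀ τ ∈ V, f τ (m τ) = f τ₀ (l τ₀)) :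
    EqOn l m V := by
  have hVτ₀ := hV.mem_nhds hτ₀
  refine (hl.analyticOnNhd hV).eqOn_of_preconnected_of_eventuallyEq (hm.analyticOnNhd hV) hVc hτ₀ ?_
  refine eventuallyEq_of_apply_eq
    (hasStrictFDerivAt_uncurry_of_differentiableOn hV hU hf hτ₀ hlU) ?_
    (hl.continuousOn.continuousAt hVτ₀) (hm.continuousOn.continuousAt hVτ₀) hlm
    (eventually_of_mem hVτ₀ hfl) (eventually_of_mem hVτ₀ hfm)
  rw [ContinuousLinearMap.coprod_comp_inr]
  exact ⟨ContinuousLinearEquiv.unitsEquivAut ℂ (Units.mk0 _ hne), by ext; simp⟩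

theorem apply_eq_of_hasDerivAt {V U : Set ℂ} {l : ℂ → ℂ} (hV : IsOpen V) (hVc : IsPreconnected V)
    (hU : IsOpen U) (hf : DifferentiableOn ℂ (uncurry f) (V ×ˢ U)) (hτ₀ : τ₀ ∈ V)
    (hlU : MapsTo l V U) (hne : ∀ τ ∈ V, deriv (f τ) (l τ) ≠ 0)
    (hl : ∀ τ ∈ V, HasDerivAt l (-deriv (f · (l τ)) τ / deriv (f τ) (l τ)) τ) {τ : ℂ}
    (hτ : τ ∈ V) : f τ (l τ) = f τ₀ (l τ₀) := by
  have hderiv (t : ℂ) (ht : t ∈ V) : HasDerivAt (fun t => f t (l t)) 0 t := by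
    have := hasDerivAt_comp_graph hV hU hf ht (hlU ht) (hl t ht)
    rwa [smul_eq_mul, div_mul_cancel₀ _ (hne t ht), add_neg_cancel] at this
  exact hV.is_const_of_deriv_eq_zero hVc
    (fun t ht => (hderiv t ht).differentiableAt.differentiableWithinAt)
    (fun t ht => (hderiv t ht).deriv) hτ hτ₀

theorem exists_hasDerivAt_apply_eq {ε r η C : ℝ} (hε : 0 < ε) (hr : 0 < r) (hη : 0 < η)
    (hf : DifferentiableOn ℂ (uncurry f) (ball τ₀ ε ×ˢ ball z₀ r))
    (hfη : ∀ τ ∈ ball τ₀ ε, ∀ z ∈ ball z₀ r, η ≤ ‖deriv (f τ) z‖)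
    (hfC : ∀ τ ∈ ball τ₀ ε, ∀ z ∈ ball z₀ r, ‖deriv (f · z) τ‖ ≤ C)
    (hradius : C / η * ε ≤ r / 4) :
    ∃ l : ℂ → ℂ, l τ₀ = z₀ ∧ ∀ τ ∈ ball τ₀ ε, l τ ∈ ball z₀ r ∧ f τ (l τ) = f τ₀ z₀ ∧
      HasDerivAt l (-deriv (f · (l τ)) τ / deriv (f τ) (l τ)) τ := by
  have hne (p) (hp : p ∈ ball τ₀ ε ×ˢ ball z₀ r) : deriv (f p.1) p.2 ≠ 0 :=
    norm_pos_iff.1 (hη.trans_le (hfη p.1 hp.1 p.2 hp.2))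
  have hfτ := differentiableOn_uncurry_deriv_left isOpen_ball isOpen_ball hf
  have hfz := differentiableOn_uncurry_deriv_right isOpen_ball isOpen_ball hf
  have hF : DifferentiableOn ℂ (uncurry fun τ z => -deriv (f · z) τ / deriv (f τ) z)
      (ball τ₀ ε ×ˢ ball z₀ r) := by
    simpa only [div_eq_mul_inv] using! hfτ.neg.mul (hfz.inv hne)
  have hM (τ) (hτ : τ ∈ ball τ₀ ε) (z) (hz : z ∈ ball z₀ r) :
      ‖-deriv (f · z) τ / deriv (f τ) z‖ ≤ C / η := by
    rw [norm_div, norm_neg]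
    exact div_le_div₀ ((norm_nonneg _).trans (hfC τ hτ z hz)) (hfC τ hτ z hz) hη (hfη τ hτ z hz)
  obtain ⟨l, rfl, hl⟩ := exists_hasDerivAt_of_norm_le hε hr hF hM hradius
  exact ⟨l, rfl, fun τ hτ => ⟨(hl τ hτ).1, apply_eq_of_hasDerivAt isOpen_ball
    (convex_ball τ₀ ε).isPreconnected isOpen_ball hf (mem_ball_self hε) (fun τ hτ => (hl τ hτ).1)
    (fun τ hτ => hne (τ, l τ) ⟨hτ, (hl τ hτ).1⟩) (fun τ hτ => (hl τ hτ).2) hτ, (hl τ hτ).2⟩⟩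

end Branch

end

/-- Quantitative holomorphic implicit function theorem: if `Φ(z₀,τ₀) = 0`,
`|∂Φ/∂z| ≥ η` and `|∂Φ/∂τ| ≤ C` on `B(z₀,δ₁) × B(τ₀,δ₂)`, then on
`B(τ₀, ε)` with `ε = min(c·δ₁·η/C, δ₂)` there is a unique holomorphic branch
`λ` of the zero set through `(z₀,τ₀)`, and `λ' = -(∂Φ/∂τ)/(∂Φ/∂z)` along it. -/
theorem holomorphic_implicit_function :
    ∃ c > (0:ℝ), ∀ (z₀ τ₀ : ℂ) (δ₁ δ₂ η C : ℝ) (Φ : ℂ → ℂ → ℂ),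
      0 < δ₁ → 0 < δ₂ → 0 < η → 0 < C →
      (∀ τ ∈ ball τ₀ δ₂, DifferentiableOn ℂ (fun z => Φ z τ) (ball z₀ δ₁)) →
      (∀ z ∈ ball z₀ δ₁, DifferentiableOn ℂ (fun τ => Φ z τ) (ball τ₀ δ₂)) →
      Φ z₀ τ₀ = 0 →
      (∀ z ∈ ball z₀ δ₁, ∀ τ ∈ ball τ₀ δ₂,
        η ≤ ‖deriv (fun z' => Φ z' τ) z‖ ∧
        ‖deriv (fun τ' => Φ z τ') τ‖ ≤ C) →
      ∃ lam : ℂ → ℂ,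
        (DifferentiableOn ℂ lam (ball τ₀ (min (c * δ₁ * η / C) δ₂)) ∧
          lam τ₀ = z₀ ∧
          (∀ τ ∈ ball τ₀ (min (c * δ₁ * η / C) δ₂),
            lam τ ∈ ball z₀ δ₁ ∧ Φ (lam τ) τ = 0 ∧
            deriv lam τ =
              -(deriv (fun τ' => Φ (lam τ) τ') τ) / deriv (fun z' => Φ z' τ) (lam τ))) ∧
        (∀ lam' : ℂ → ℂ,
          DifferentiableOn ℂ lam' (ball τ₀ (min (c * δ₁ * η / C) δ₂)) →
          lam' τ₀ = z₀ →
          (∀ τ ∈ ball τ₀ (min (c * δ₁ * η / C) δ₂),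
            lam' τ ∈ ball z₀ δ₁ ∧ Φ (lam' τ) τ = 0) →
          Set.EqOn lam lam' (ball τ₀ (min (c * δ₁ * η / C) δ₂))) := by
  refine ⟨1 / 4, by norm_num, fun z₀ τ₀ δ₁ δ₂ η C Φ hδ₁ hδ₂ hη hC hΦz hΦτ hΦ₀ hbound => ?_⟩
  set ε := min (1 / 4 * δ₁ * η / C) δ₂
  have hε : 0 < ε := lt_min (by positivity) hδ₂
  have hsub : ball τ₀ ε ⊆ ball τ₀ δ₂ := ball_subset_ball (min_le_right _ _)
  have hΦ : DifferentiableOn ℂ (Function.uncurry (flip Φ)) (ball τ₀ ε ×ˢ ball z₀ δ₁) :=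
    (differentiableOn_uncurry_of_norm_deriv_le (C := ⟨C, hC.le⟩) isOpen_ball (convex_ball _ _)
      isOpen_ball hΦτ hΦz fun τ hτ z hz => (hbound z hz τ hτ).2).mono (Set.prod_mono_left hsub)
  have hradius : C / η * ε ≤ δ₁ / 4 :=
    calc C / η * ε ≤ C / η * (1 / 4 * δ₁ * η / C) := by gcongr; exact min_le_left _ _
      _ = δ₁ / 4 := by field_simp
  obtain ⟨l, rfl, hl⟩ := exists_hasDerivAt_apply_eq hε hδ₁ hη hΦ
    (fun τ hτ z hz => (hbound z hz τ (hsub hτ)).1) (fun τ hτ z hz => (hbound z hz τ (hsub hτ)).2)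
    hradius
  have hld : DifferentiableOn ℂ l (ball τ₀ ε) := fun τ hτ =>
    (hl τ hτ).2.2.differentiableAt.differentiableWithinAt
  have hne : deriv (flip Φ τ₀) (l τ₀) ≠ 0 :=
    norm_pos_iff.1 (hη.trans_le (hbound _ (mem_ball_self hδ₁) _ (mem_ball_self hδ₂)).1)
  refine ⟨l, ⟨hld, rfl, fun τ hτ => ⟨(hl τ hτ).1, (hl τ hτ).2.1.trans hΦ₀, (hl τ hτ).2.2.deriv⟩⟩,
    fun m hm hm₀ hmΦ => ?_⟩
  exact eqOn_of_apply_eq isOpen_ball (convex_ball τ₀ ε).isPreconnected isOpen_ball hΦ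
    (mem_ball_self hε) (mem_ball_self hδ₁) hne hld hm hm₀.symm (fun τ hτ => (hl τ hτ).2.1)
    fun τ hτ => (hmΦ τ hτ).2.trans hΦ₀.symm
end

section
/- There is an absolute constant C > 0 with the following property. Let A ⊂ ℝ be a finite set, for each α ∈ A let c_α ∈ ℂ with |c_α| = 1, and let S > 0 satisfy ∫_ℝ ( ∑_{α ∈ A} χ_{[α−1, α+1]}(x) )^2 dx ≤ S. Then ∫_0^1 | ∑_{α ∈ A} c_α e^{i α y} |^2 dy ≤ C·S. -/
open MeasureTheory

/-!
Let `f x = ∑ α, c α * χ (x - α)`, with `χ` the indicator of `[-1, 1]`. The Fourier transform turns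
translations into modulations, so `𝓕 f` at `-y / 2π` is the exponential sum at `y` times
`𝓕 χ (-y / 2π) = ∫ v in -1..1, cos (v y)`. For `|y| ≤ 1` the cosine is at least `1 / 2` on
`[-1, 1]`, so this factor is at least `1` and the exponential sum is dominated by `𝓕 f`, whose
`L²` norm is that of `f` by Plancherel.
-/

open scoped FourierTransform RealInnerProductSpace SchwartzMap ContDiff Pointwise

theorem norm_toLp_two_sq_eq_integral {X E : Type*} [MeasurableSpace X] {μ : Measure X}
    [NormedAddCommGroup E] {f : X → E} (hf : MemLp f 2 μ) :
    ‖hf.toLp f‖ ^ 2 = ∫ x, ‖f x‖ ^ 2 ∂μ := by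
  have integral_nonneg : 0 ≤ ∫ x, ‖f x‖ ^ 2 ∂μ := by positivity
  rw [Lp.norm_toLp, toReal_eLpNorm hf.1,
    lpNorm_eq_integral_norm_rpow_toReal two_ne_zero ENNReal.ofNat_ne_top hf.1]
  simp [← Real.sqrt_eq_rpow, ← one_div, Real.sq_sqrt, integral_nonneg]

section Plancherel

variable {V F : Type*} [NormedAddCommGroup V] [InnerProductSpace ℝ V] [FiniteDimensional ℝ V]
  [MeasurableSpace V] [BorelSpace V]
  [NormedAddCommGroup F] [InnerProductSpace ℂ F] [CompleteSpace F] {f : V → F}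

-- Both sides define the same tempered distribution, so they agree against all test functions.
theorem fourier_ae_eq_fourier_toLp (hf₁ : Integrable f) (hf₂ : MemLp f 2) :
    𝓕 f =ᵐ[volume] (𝓕 (hf₂.toLp f) : Lp F 2 (volume : Measure V)) := by
  have fourier_continuous : Continuous (𝓕 f) :=
    VectorFourier.fourierIntegral_continuous Real.continuous_fourierChar
      (L := innerₗ V) continuous_inner hf₁
  refine ae_eq_of_integral_contDiff_smul_eq fourier_continuous.locallyIntegrable
    ((Lp.memLp _).locallyIntegrable one_le_two) fun g g_smooth g_supp => ?_
  have g_supp' : HasCompactSupport (fun x => (g x : ℂ)) := g_supp.comp_left Complex.ofReal_zero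
  let G : 𝓢(V, ℂ) := g_supp'.toSchwartzMap (Complex.ofRealCLM.contDiff.comp g_smooth)
  have self_adjoint : ∫ x, 𝓕 G x • f x = ∫ x, G x • 𝓕 f x := by
    have := VectorFourier.integral_fourierIntegral_smul_eq_flip (L := innerₗ V)
      Real.continuous_fourierChar continuous_inner (G.integrable (μ := volume)) hf₁
    rwa [flip_innerₗ] at this
  have distribution_eq := congrArg (· G) (Lp.fourier_toTemperedDistribution_eq (hf₂.toLp f))
  simp only [TemperedDistribution.fourier_apply, Lp.toTemperedDistribution_apply]
    at distribution_eq
  calc ∫ x, g x • 𝓕 f x = ∫ x, G x • 𝓕 f x := rfl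
    _ = ∫ x, 𝓕 G x • f x := self_adjoint.symm
    _ = ∫ x, 𝓕 G x • hf₂.toLp f x :=
        integral_congr_ae (hf₂.coeFn_toLp.mono fun x hx => by simp only [hx])
    _ = ∫ x, G x • (𝓕 (hf₂.toLp f) : Lp F 2 (volume : Measure V)) x := distribution_eq
    _ = ∫ x, g x • (𝓕 (hf₂.toLp f) : Lp F 2 (volume : Measure V)) x := rfl

theorem memLp_two_fourier (hf₁ : Integrable f) (hf₂ : MemLp f 2) : MemLp (𝓕 f) 2 :=
  (memLp_congr_ae (fourier_ae_eq_fourier_toLp hf₁ hf₂)).2 (Lp.memLp _)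

theorem integral_norm_sq_fourier (hf₁ : Integrable f) (hf₂ : MemLp f 2) :
    ∫ w, ‖𝓕 f w‖ ^ 2 = ∫ x, ‖f x‖ ^ 2 := by
  have toLp_fourier : (memLp_two_fourier hf₁ hf₂).toLp (𝓕 f) = 𝓕 (hf₂.toLp f) :=
    Lp.ext ((MemLp.coeFn_toLp _).trans (fourier_ae_eq_fourier_toLp hf₁ hf₂))
  rw [← norm_toLp_two_sq_eq_integral (memLp_two_fourier hf₁ hf₂), toLp_fourier, Lp.norm_fourier_eq,
    norm_toLp_two_sq_eq_integral]

end Plancherel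

section Translates

variable {V : Type*} [NormedAddCommGroup V] [InnerProductSpace ℝ V] [FiniteDimensional ℝ V]
  [MeasurableSpace V] [BorelSpace V]
  {ι : Type*} (s : Finset ι) (ξ : ι → V) (c : ι → ℂ) {φ : V → ℂ}

theorem fourier_comp_sub_right {F : Type*} [NormedAddCommGroup F] [NormedSpace ℂ F] (f : V → F)
    (a w : V) : 𝓕 (fun x => f (x - a)) w = 𝐞 (-⟪a, w⟫) • 𝓕 f w := by
  have := congrFun (VectorFourier.fourierIntegral_comp_add_right 𝐞 volume (innerₗ V) f (-a)) w
  simpa [sub_eq_add_neg, Function.comp_def] using! this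

theorem fourier_sum_translates (hφ : Integrable φ) (w : V) :
    𝓕 (fun x => ∑ j ∈ s, c j * φ (x - ξ j)) w =
      (∑ j ∈ s, c j * 𝐞 (-⟪ξ j, w⟫)) * 𝓕 φ w := by
  have integrable_term (j : ι) : Integrable fun x => 𝐞 (-⟪x, w⟫) • (c j * φ (x - ξ j)) :=
    (Real.fourierIntegral_convergent_iff w).2 ((hφ.comp_sub_right (ξ j)).const_mul (c j))
  calc 𝓕 (fun x => ∑ j ∈ s, c j * φ (x - ξ j)) w
      = ∑ j ∈ s, ∫ x, 𝐞 (-⟪x, w⟫) • (c j * φ (x - ξ j)) := by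
        simp only [Real.fourier_eq, Finset.smul_sum]
        exact integral_finsetSum _ fun j _ => integrable_term j
    _ = ∑ j ∈ s, c j * 𝓕 (fun x => φ (x - ξ j)) w := by
        simp only [Real.fourier_eq, Circle.smul_def, smul_eq_mul, mul_left_comm _ (c _),
          integral_const_mul]
    _ = (∑ j ∈ s, c j * 𝐞 (-⟪ξ j, w⟫)) * 𝓕 φ w := by
        simp only [fourier_comp_sub_right, Circle.smul_def, smul_eq_mul, Finset.sum_mul, mul_assoc]

theorem setIntegral_norm_sq_sum_fourierChar_le (hφ₁ : Integrable φ) (hφ₂ : MemLp φ 2) {E : Set V}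
    (hE : MeasurableSet E) (hφE : ∀ w ∈ E, 1 ≤ ‖𝓕 φ w‖) :
    ∫ w in E, ‖∑ j ∈ s, c j * 𝐞 (-⟪ξ j, w⟫)‖ ^ 2 ≤ ∫ x, ‖∑ j ∈ s, c j * φ (x - ξ j)‖ ^ 2 := by
  set f : V → ℂ := fun x => ∑ j ∈ s, c j * φ (x - ξ j)
  have hf₁ : Integrable f :=
    integrable_finsetSum _ fun j _ => (hφ₁.comp_sub_right (ξ j)).const_mul (c j)
  have hf₂ : MemLp f 2 := memLp_finsetSum _ fun j _ =>
    (hφ₂.comp_measurePreserving (measurePreserving_sub_right volume (ξ j))).const_mul (c j)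
  have integrable_fourier : Integrable fun w => ‖𝓕 f w‖ ^ 2 :=
    (memLp_two_fourier hf₁ hf₂).integrable_norm_pow two_ne_zero
  calc ∫ w in E, ‖∑ j ∈ s, c j * 𝐞 (-⟪ξ j, w⟫)‖ ^ 2 ≤ ∫ w in E, ‖𝓕 f w‖ ^ 2 := by
        refine integral_mono_of_nonneg (.of_forall fun w => by positivity)
          integrable_fourier.integrableOn (ae_restrict_of_forall_mem hE fun w hw => ?_)
        simp only [f, fourier_sum_translates s ξ c hφ₁, norm_mul]
        gcongr
        exact le_mul_of_one_le_right (norm_nonneg _) (hφE w hw)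
    _ ≤ ∫ w, ‖𝓕 f w‖ ^ 2 :=
        setIntegral_le_integral integrable_fourier (.of_forall fun w => by positivity)
    _ = ∫ x, ‖f x‖ ^ 2 := integral_norm_sq_fourier hf₁ hf₂

theorem fourier_indicator_one {B : Set V} (hB : MeasurableSet B) (w : V) :
    𝓕 (B.indicator fun _ => (1 : ℂ)) w = ∫ v in B, (𝐞 (-⟪v, w⟫) : ℂ) := by
  rw [← integral_indicator hB, Real.fourier_eq]
  congr with v
  by_cases hv : v ∈ B <;> simp [hv, Circle.smul_def]

theorem half_measureReal_le_norm_fourier_indicator {B : Set V} (hB : MeasurableSet B)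
    (hB_fin : volume B ≠ ⊤) {w : V} (hw : ∀ v ∈ B, |2 * Real.pi * ⟪v, w⟫| ≤ 1) :
    volume.real B / 2 ≤ ‖𝓕 (B.indicator fun _ => (1 : ℂ)) w‖ := by
  have integrable_char : IntegrableOn (fun v => (𝐞 (-⟪v, w⟫) : ℂ)) B :=
    .of_bound hB_fin.lt_top (by fun_prop) 1 (.of_forall fun v => (Circle.norm_coe _).le)
  have re_char (v : V) : (𝐞 (-⟪v, w⟫) : ℂ).re = Real.cos (2 * Real.pi * ⟪v, w⟫) := by
    rw [Real.fourierChar_apply, Complex.exp_ofReal_mul_I_re, mul_neg, Real.cos_neg]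
  have half_le_re : ∀ v ∈ B, 1 / 2 ≤ (𝐞 (-⟪v, w⟫) : ℂ).re := fun v hv => by
    rw [re_char]
    have := (sq_le_one_iff_abs_le_one _).2 (hw v hv)
    linarith [Real.one_sub_sq_div_two_le_cos (x := 2 * Real.pi * ⟪v, w⟫)]
  calc volume.real B / 2 = ∫ _ in B, (1 / 2 : ℝ) := by simp [div_eq_mul_inv]
    _ ≤ ∫ v in B, (𝐞 (-⟪v, w⟫) : ℂ).re :=
        setIntegral_mono_on (integrableOn_const hB_fin) integrable_char.re hB half_le_re
    _ = (∫ v in B, (𝐞 (-⟪v, w⟫) : ℂ)).re := integral_re integrable_char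
    _ = (𝓕 (B.indicator fun _ => (1 : ℂ)) w).re := by rw [fourier_indicator_one hB]
    _ ≤ ‖𝓕 (B.indicator fun _ => (1 : ℂ)) w‖ := Complex.re_le_norm _

end Translates

theorem integral_norm_sq_sum_indicator_le {X ι E : Type*} [MeasurableSpace X] {μ : Measure X}
    [NormedAddCommGroup E] (s : Finset ι) {B : ι → Set X} (hB : ∀ j ∈ s, MeasurableSet (B j))
    (hB_fin : ∀ j ∈ s, μ (B j) ≠ ⊤) {c : ι → E} (hc : ∀ j ∈ s, ‖c j‖ ≤ 1) :
    ∫ x, ‖∑ j ∈ s, (B j).indicator (fun _ => c j) x‖ ^ 2 ∂μ ≤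
      ∫ x, (∑ j ∈ s, (B j).indicator (fun _ => (1 : ℝ)) x) ^ 2 ∂μ := by
  have sum_memLp : MemLp (fun x => ∑ j ∈ s, (B j).indicator (fun _ => (1 : ℝ)) x) 2 μ :=
    memLp_finsetSum _ fun j hj => memLp_indicator_const 2 (hB j hj) 1 (.inr (hB_fin j hj))
  refine integral_mono_of_nonneg (.of_forall fun x => by positivity) sum_memLp.integrable_sq
    (.of_forall fun x => ?_)
  dsimp only
  gcongr
  refine (norm_sum_le _ _).trans (Finset.sum_le_sum fun j hj => ?_)
  rw [norm_indicator_eq_indicator_norm]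
  exact Set.indicator_le_indicator (hc j hj)

theorem le_norm_fourier_indicator_Icc {r w : ℝ} (hr : 0 ≤ r) (hw : r * |2 * Real.pi * w| ≤ 1) :
    r ≤ ‖𝓕 ((Set.Icc (-r) r).indicator fun _ => (1 : ℂ)) w‖ := by
  have phase_le : ∀ v ∈ Set.Icc (-r) r, |2 * Real.pi * ⟪v, w⟫| ≤ 1 := fun v hv =>
    calc |2 * Real.pi * ⟪v, w⟫| = |v| * |2 * Real.pi * w| := by
          rw [← abs_mul]; simp only [RCLike.inner_apply, conj_trivial]; ring_nf
      _ ≤ r * |2 * Real.pi * w| := by gcongr; exact abs_le.2 hv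
      _ ≤ 1 := hw
  have half_volume : volume.real (Set.Icc (-r) r) / 2 = r := by
    rw [Real.volume_real_Icc_of_le (neg_le_self hr)]; ring
  simpa only [half_volume] using
    half_measureReal_le_norm_fourier_indicator measurableSet_Icc (by simp) phase_le

theorem indicator_Icc_eq_mul_indicator_comp_sub {M : Type*} [MulZeroOneClass M] (r a : ℝ) (z : M)
    (x : ℝ) :
    (Set.Icc (a - r) (a + r)).indicator (fun _ => z) x =
      z * (Set.Icc (-r) r).indicator (fun _ => 1) (x - a) := by
  have mem_iff : x ∈ Set.Icc (a - r) (a + r) ↔ x - a ∈ Set.Icc (-r) r := by grind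
  by_cases hx : x ∈ Set.Icc (a - r) (a + r)
  · simp only [Set.indicator_of_mem hx, Set.indicator_of_mem (mem_iff.1 hx), mul_one]
  · simp only [Set.indicator_of_notMem hx, Set.indicator_of_notMem (mem_iff.not.1 hx), mul_zero]

theorem setIntegral_norm_sq_sum_exp_eq {ι : Type*} (s : Finset ι) (ξ : ι → ℝ) (c : ι → ℂ)
    (E : Set ℝ) :
    ∫ y in E, ‖∑ j ∈ s, c j * Complex.exp (Complex.I * ξ j * y)‖ ^ 2 =
      2 * Real.pi * ∫ w in (-(2 * Real.pi)⁻¹ : ℝ) • E, ‖∑ j ∈ s, c j * 𝐞 (-⟪ξ j, w⟫)‖ ^ 2 := by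
  have exp_eq (a y : ℝ) :
      Complex.exp (Complex.I * a * y) = 𝐞 (-⟪a, -(2 * Real.pi)⁻¹ • y⟫) := by
    have phase_eq : 2 * Real.pi * -⟪a, -(2 * Real.pi)⁻¹ • y⟫ = a * y := by
      simp only [RCLike.inner_apply, conj_trivial, smul_eq_mul]
      field_simp
    rw [Real.fourierChar_apply, phase_eq, Complex.ofReal_mul, mul_assoc, mul_comm]
  simp only [exp_eq]
  rw [Measure.setIntegral_comp_smul volume (fun w => ‖∑ j ∈ s, c j * 𝐞 (-⟪ξ j, w⟫)‖ ^ 2) E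
    (by simp [Real.pi_ne_zero])]
  simp [abs_of_pos Real.pi_pos]

theorem exponential_sum_L2_bound_general {ι : Type*} (s : Finset ι) (ξ : ι → ℝ) (c : ι → ℂ)
    {E : Set ℝ} (hE : MeasurableSet E) (hE_sub : E ⊆ Set.Icc (-1) 1) :
    ∫ y in E, ‖∑ j ∈ s, c j * Complex.exp (Complex.I * ξ j * y)‖ ^ 2 ≤
      2 * Real.pi *
        ∫ x, ‖∑ j ∈ s, (Set.Icc (ξ j - 1) (ξ j + 1)).indicator (fun _ => c j) x‖ ^ 2 := by
  have box_memLp (p : ENNReal) :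
      MemLp ((Set.Icc (-1 : ℝ) 1).indicator fun _ => (1 : ℂ)) p volume :=
    memLp_indicator_const p measurableSet_Icc 1 (.inr (by simp))
  simp only [setIntegral_norm_sq_sum_exp_eq, indicator_Icc_eq_mul_indicator_comp_sub]
  gcongr
  refine setIntegral_norm_sq_sum_fourierChar_le s ξ c (memLp_one_iff_integrable.1 (box_memLp 1))
    (box_memLp 2) (hE.const_smul_of_ne_zero (by simp [Real.pi_ne_zero])) ?_
  rintro _ ⟨y, hy, rfl⟩
  refine le_norm_fourier_indicator_Icc zero_le_one ?_
  have phase_eq : 2 * Real.pi * -(2 * Real.pi)⁻¹ * y = -y := by field_simp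
  simpa [← mul_assoc, phase_eq] using abs_le.2 (hE_sub hy)

/-- Carleson-embedding-type estimate: the `L²` norm on `[0,1]` of a unimodular
exponential sum is controlled by the `L²` norm of the sum of the indicators of
the unit intervals centered at the frequencies. -/
theorem exponential_sum_L2_bound :
    ∃ C > (0:ℝ), ∀ A : Finset ℝ, ∀ c : ℝ → ℂ, (∀ α ∈ A, ‖c α‖ = 1) →
      ∀ S : ℝ, 0 < S →
      (∫ x : ℝ, (∑ α ∈ A, Set.indicator (Set.Icc (α - 1) (α + 1)) (fun _ => (1:ℝ)) x) ^ 2)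
        ≤ S →
      (∫ y in (0:ℝ)..1,
          ‖∑ α ∈ A, c α * Complex.exp (Complex.I * (α : ℂ) * (y : ℂ))‖ ^ 2)
        ≤ C * S := by
  refine ⟨2 * Real.pi, by positivity, fun A c hc S _ hS => ?_⟩
  rw [intervalIntegral.integral_of_le zero_le_one]
  refine (exponential_sum_L2_bound_general A id c measurableSet_Ioc
    fun y hy => ⟨by linarith [hy.1], hy.2⟩).trans ?_
  gcongr
  exact (integral_norm_sq_sum_indicator_le A (fun _ _ => measurableSet_Icc) (by simp)
    fun α hα => (hc α hα).le).trans hS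
end
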